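/- There exists a constant C > 0 such that for every prime q and every positive integer a coprime to q, writing a/q = [b_0; b_1, …, b_κ] for the continued fraction expansion, one has: (i) |M(a,q) − Σ_{1≤j≤κ, j odd} b_j^{1/2}·(log b_j + γ − log(8π)) + (π/2)·Σ_{1≤j≤κ, j even} b_j^{1/2}| ≤ C·κ; and (ii) for each choice of sign ±, |(q^{1/2}/φ(q)) Σ*_{χ mod q, χ(−1)=±1} |L(1/2,χ)|²·χ(a mod q) − (±1)·(1/2)·Σ_{j=1}^κ (±1)^j·b_j^{1/2}·(log b_j + γ − log(8π) ∓ π/2)| ≤ C·κ. -/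

import Mathlib

open Complex Real Finset

open scoped Classical in
/-- `M(a,q)`: the twisted second moment over primitive (= nontrivial, for prime `q`)
characters mod `q`. -/
noncomputable def Mtw (a : ℤ) (q : ℕ) [NeZero q] : ℂ :=
  (Real.sqrt q / (Nat.totient q : ℝ)) *
    ∑ χ : DirichletCharacter ℂ q, if χ = 1 then 0 else
      (‖χ.LFunction (1/2)‖^2 : ℂ) * χ (a : ZMod q)

open scoped Classical in
/-- The twisted second moment restricted to primitive characters of parity
`χ(-1) = ε`. -/
noncomputable def MtwParity (ε : ℤ) (a : ℤ) (q : ℕ) [NeZero q] : ℂ :=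
  (Real.sqrt q / (Nat.totient q : ℝ)) *
    ∑ χ : DirichletCharacter ℂ q, if χ ≠ 1 ∧ χ (-1 : ZMod q) = (ε : ℂ) then
      (‖χ.LFunction (1/2)‖^2 : ℂ) * χ (a : ZMod q) else 0

/-- The list `[b_0, b_1, …, b_κ]` of partial quotients of `a/q` produced by the
Euclidean algorithm. -/
def cfList : ℕ → ℕ → List ℕ
  | a, q =>
    if h : q = 0 then [] else (a / q) :: cfList q (a % q)
termination_by a q => q
decreasing_by exact Nat.mod_lt _ (Nat.pos_of_ne_zero h)


/-! ### Part 1: the real Hurwitz zeta function at `1/2` -/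

/-- summand of the regularised series -/
noncomputable def eterm (t : ℝ) : ℝ := 1/√t - 2*(√(t+1) - √t)

/-- `ζ(1/2, y)` for `y > 0`. -/
noncomputable def zh (y : ℝ) : ℝ := (∑' n : ℕ, eterm (y + n)) - 2 * √y

lemma eterm_bounds {t : ℝ} (ht : 0 < t) :
    0 ≤ eterm t ∧ eterm t ≤ 1/√t - 1/√(t+1) ∧
    |eterm t - (1/√t - 1/√(t+1))/2| ≤ (1/(t*√t) - 1/((t+1)*√(t+1)))/2 := by
  obtain ⟨p, hp, hp2⟩ : ∃ p, 0 < p ∧ √t = p := ⟨√t, Real.sqrt_pos.2 ht, rfl⟩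
  obtain ⟨r, hr, hr2⟩ : ∃ r, 0 < r ∧ √(t+1) = r := ⟨√(t+1), Real.sqrt_pos.2 (by linarith), rfl⟩
  have h1 : t = p^2 := by rw [← hp2, Real.sq_sqrt ht.le]
  have h2 : t + 1 = r^2 := by rw [← hr2, Real.sq_sqrt (by linarith)]
  have h3 : (r - p) * (r + p) = 1 := by nlinarith
  have hrp : r - p = 1/(r+p) := by field_simp; linarith
  have hpos : p < r := by
    have : 0 < 1/(r+p) := by positivity
    linarith
  unfold eterm
  rw [hp2, hr2, h2, h1, hrp]
  have e1 : 1/p - 2*(1/(r+p)) = (r-p)/(p*(r+p)) := by field_simp; ring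
  have e2 : 1/p - 1/r = (r-p)/(p*r) := by field_simp
  refine ⟨?_, ?_, ?_⟩
  · rw [e1]; apply div_nonneg <;> [linarith; positivity]
  · rw [e1, e2]
    apply div_le_div_of_nonneg_left <;> first | positivity | nlinarith
  · have e3 : 1/p - 2*(1/(r+p)) - (1/p - 1/r)/2 = (r-p)^2/(2*p*r*(r+p)) := by field_simp; ring
    have e4 : 1/(p^2*p) - 1/(r^2*r) = (r-p)*(r^2+r*p+p^2)/(p^3*r^3) := by field_simp; ring
    rw [e3, e4, abs_of_nonneg (by positivity)]
    have e5 : (r-p)^2 = (r-p)/(r+p) := by field_simp; nlinarith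
    rw [e5, div_div, div_div, div_le_div_iff₀ (by positivity) (by positivity)]
    have : 0 < r - p := by linarith
    have k : p^2*r^2 ≤ (r^2+r*p+p^2)*(r+p)^2 := by
      have : 0 < p*r := by positivity
      have : p*r*(p*r) ≤ (r^2+r*p+p^2)*(r+p)^2 := by
        apply mul_le_mul <;> nlinarith
      nlinarith
    have : 0 < p*r*(r-p)*2 := by positivity
    nlinarith [mul_le_mul_of_nonneg_left k this.le]

/-- partial sums of `eterm` -/
lemma eterm_sum_le {y : ℝ} (hy : 0 < y) (N : ℕ) :
    ∑ n ∈ range N, eterm (y + n) ≤ 1/√y := by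
  have : ∀ N : ℕ, ∑ n ∈ range N, eterm (y + n) ≤ 1/√y - 1/√(y+N) := by
    intro N
    induction N with
    | zero => simp
    | succ k ih =>
      rw [sum_range_succ]
      have := (eterm_bounds (t := y + k) (by positivity)).2.1
      push_cast
      rw [← add_assoc]
      linarith
  have h := this N
  have : 0 ≤ 1/√(y+N) := by positivity
  linarith

lemma eterm_summable {y : ℝ} (hy : 0 < y) : Summable (fun n : ℕ => eterm (y + n)) :=
  summable_of_sum_range_le (fun n => (eterm_bounds (by positivity)).1) (eterm_sum_le hy)

lemma zh_rec {y : ℝ} (hy : 0 < y) : zh y = 1/√y + zh (y+1) := by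
  unfold zh
  rw [(eterm_summable hy).tsum_eq_zero_add]
  have : (fun n : ℕ => eterm (y + ((n+1 : ℕ) : ℝ))) = fun n : ℕ => eterm (y + 1 + n) := by
    ext n; push_cast; ring_nf
  rw [this]
  simp only [Nat.cast_zero, add_zero]
  unfold eterm
  ring

lemma zh_sum {y : ℝ} (hy : 0 < y) (N : ℕ) :
    zh y = ∑ n ∈ range N, 1/√(y+n) + zh (y+N) := by
  induction N with
  | zero => simp
  | succ k ih =>
    rw [ih, sum_range_succ, zh_rec (y := y + k) (by positivity)]
    push_cast
    ring_nf

lemma zh_asymp {y : ℝ} (hy : 0 < y) : |zh y + 2*√y - 1/(2*√y)| ≤ 1/(y*√y) := by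
  have key : ∀ N : ℕ, |∑ n ∈ range N, eterm (y+n) - (1/√y - 1/√(y+N))/2|
      ≤ (1/(y*√y) - 1/((y+N)*√(y+N)))/2 := by
    intro N
    induction N with
    | zero => simp
    | succ k ih =>
      rw [sum_range_succ]
      have := (eterm_bounds (t := y + k) (by positivity)).2.2
      push_cast
      rw [← add_assoc]
      rw [abs_le] at *
      constructor <;> linarith [ih.1, ih.2, this.1, this.2]
  have h0 : Filter.Tendsto (fun N : ℕ => 1/√(y+N)) Filter.atTop (nhds 0) := by
    have : Filter.Tendsto (fun N : ℕ => √(y+N)) Filter.atTop Filter.atTop :=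
      Real.tendsto_sqrt_atTop.comp (Filter.tendsto_atTop_add_const_left _ _ tendsto_natCast_atTop_atTop)
    exact this.inv_tendsto_atTop.congr (fun N => by simp)
  have h1 := (eterm_summable hy).hasSum.tendsto_sum_nat
  have h2 : Filter.Tendsto (fun N : ℕ => |∑ n ∈ range N, eterm (y+n) - (1/√y - 1/√(y+N))/2|)
      Filter.atTop (nhds |(∑' n : ℕ, eterm (y + n)) - (1/√y - 0)/2|) :=
    (h1.sub ((tendsto_const_nhds.sub h0).div_const 2)).abs
  have h3 : |(∑' n : ℕ, eterm (y + n)) - (1/√y - 0)/2| ≤ (1/(y*√y))/2 := by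
    refine le_of_tendsto h2 (Filter.Eventually.of_forall fun N => (key N).trans ?_)
    have : 0 ≤ 1/((y+N)*√(y+N)) := by positivity
    linarith
  have e : zh y + 2*√y - 1/(2*√y) = (∑' n : ℕ, eterm (y + n)) - (1/√y - 0)/2 := by
    unfold zh
    have : 1/(2*√y) = (1/√y)/2 := by field_simp
    rw [this]; ring
  rw [e]
  have : 0 ≤ 1/(y*√y) := by positivity
  linarith

/-- the constant `ζ(1/2)` -/
noncomputable def z0 : ℝ := zh 1

/-- the periodic version -/
noncomputable def Zp (x : ℝ) : ℝ := zh (x - ⌈x⌉ + 1)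

lemma Zp_add_int (x : ℝ) (n : ℤ) : Zp (x + n) = Zp x := by
  unfold Zp
  rw [Int.ceil_add_intCast]
  push_cast
  ring_nf

lemma Zp_eq {x : ℝ} (h0 : 0 < x) (h1 : x ≤ 1) : Zp x = zh x := by
  unfold Zp
  have : ⌈x⌉ = 1 := by
    rw [Int.ceil_eq_iff]; push_cast; constructor <;> linarith
  rw [this]; push_cast; ring_nf

lemma Zp_zero : Zp 0 = z0 := by simp [Zp, z0]

lemma Zp_int (n : ℤ) : Zp n = z0 := by
  have := Zp_add_int 0 n
  rw [zero_add] at this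
  rw [this, Zp_zero]

/-- every positive real is `x + n` with `x ∈ (0,1]` -/
lemma exists_rep {y : ℝ} (hy : 0 < y) : ∃ (n : ℕ) (x : ℝ), 0 < x ∧ x ≤ 1 ∧ y = x + n ∧ ⌈y⌉₊ = n + 1 := by
  have h : 0 < ⌈y⌉₊ := Nat.ceil_pos.2 hy
  obtain ⟨n, hn⟩ := Nat.exists_eq_succ_of_ne_zero h.ne'
  refine ⟨n, y - n, ?_, ?_, by ring, hn⟩
  · have := Nat.lt_ceil (a := y) (n := n)
    rw [hn] at this
    linarith [this.1 (Nat.lt_succ_self n)]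
  · have := Nat.le_ceil y
    rw [hn] at this; push_cast at this; linarith

/-- sum of inverse square roots along an arithmetic progression -/
lemma Zp_sum {x : ℝ} (h0 : 0 < x) (h1 : x ≤ 1) (n : ℕ) :
    Zp (x + n) = ∑ j ∈ range n, 1/√(x+j) + zh (x+n) := by
  have := Zp_add_int x n
  push_cast at this
  rw [this, Zp_eq h0 h1, zh_sum h0 n]


/-! ### Part 2: trapezoid rule and the function `s` -/

lemma trap_cell {F f f' : ℝ → ℝ} {a V : ℝ}
    (hF : ∀ t ∈ Set.Icc a (a+1), HasDerivAt F (f t) t)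
    (hf : ∀ t ∈ Set.Icc a (a+1), HasDerivAt f (f' t) t)
    (hV : ∀ s ∈ Set.Icc a (a+1), ∀ t ∈ Set.Icc a (a+1), |f' s - f' t| ≤ V) :
    |F (a+1) - F a - (f a + f (a+1))/2| ≤ V := by
  have hD : ∀ t ∈ Set.Icc a (a+1), HasDerivWithinAt (fun t => F t - F a - (t-a)*(f a + f t)/2)
      (f t - (1*(f a + f t) + (t-a)*(f' t))/2) (Set.Icc a (a+1)) t := by
    intro t ht
    have h1 := ((hasDerivAt_id t).sub_const a).mul ((hf t ht).const_add (f a))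
    have h2 := ((hF t ht).sub_const (F a)).sub (h1.div_const 2)
    exact h2.hasDerivWithinAt
  have hb : ∀ t ∈ Set.Ico a (a+1), ‖f t - (1*(f a + f t) + (t-a)*(f' t))/2‖ ≤ V := by
    intro t ht
    have hV0 : 0 ≤ V := (abs_nonneg _).trans (hV a ⟨le_refl _, by linarith⟩ a ⟨le_refl _, by linarith⟩)
    rcases eq_or_lt_of_le ht.1 with h | h
    · subst h; simp; ring_nf; simpa using hV0
    · obtain ⟨ξ, hξ, he⟩ := exists_hasDerivAt_eq_slope f f' h
        (fun u hu => (hf u ⟨hu.1, by linarith [hu.2, ht.2]⟩).continuousAt.continuousWithinAt)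
        (fun u hu => hf u ⟨hu.1.le, by linarith [hu.2, ht.2]⟩)
      have e : f t - (1*(f a + f t) + (t-a)*(f' t))/2 = (t-a)/2*(f' ξ - f' t) := by
        rw [he]
        have : t - a ≠ 0 := by linarith
        field_simp
        ring
      rw [e, norm_mul, Real.norm_eq_abs, Real.norm_eq_abs, abs_of_pos (by linarith)]
      have := hV ξ ⟨hξ.1.le, by linarith [hξ.2, ht.2]⟩ t ⟨ht.1, ht.2.le⟩
      have h2 : (t-a)/2 ≤ 1 := by linarith [ht.2]
      calc (t-a)/2*|f' ξ - f' t| ≤ 1 * |f' ξ - f' t| := by gcongr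
        _ ≤ V := by linarith
  have := norm_image_sub_le_of_norm_deriv_le_segment' hD hb (a+1) ⟨by linarith, le_refl _⟩
  simp only [Real.norm_eq_abs] at this
  have e : F (a+1) - F a - (a+1-a)*(f a + f (a+1))/2 - (F a - F a - (a-a)*(f a + f a)/2)
    = F (a+1) - F a - (f a + f (a+1))/2 := by ring
  rw [e] at this
  linarith

/-- iterated trapezoid rule -/
lemma trap_sum {F f f' : ℝ → ℝ} {b : ℝ} {W : ℝ → ℝ} (N : ℕ)
    (hF : ∀ t ∈ Set.Icc b (b+N), HasDerivAt F (f t) t)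
    (hf : ∀ t ∈ Set.Icc b (b+N), HasDerivAt f (f' t) t)
    (hV : ∀ s ∈ Set.Icc b (b+N), ∀ t ∈ Set.Icc b (b+N), s ≤ t → |f' s - f' t| ≤ W t - W s) :
    |∑ j ∈ range (N+1), f (b+j) - (F (b+N) - F b) - (f b + f (b+N))/2| ≤ W (b+N) - W b := by
  induction N with
  | zero => simp
  | succ k ih =>
    have hsub : Set.Icc b (b+k) ⊆ Set.Icc b (b+(k+1:ℕ)) := by
      apply Set.Icc_subset_Icc_right; push_cast; linarith
    have hsub2 : Set.Icc (b+k) (b+k+1) ⊆ Set.Icc b (b+(k+1:ℕ)) := by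
      apply Set.Icc_subset_Icc
      · have : (0:ℝ) ≤ k := by positivity
        linarith
      · push_cast; linarith
    have i1 := ih (fun t ht => hF t (hsub ht)) (fun t ht => hf t (hsub ht))
      (fun s hs t ht => hV s (hsub hs) t (hsub ht))
    have mono : ∀ s ∈ Set.Icc b (b+(k+1:ℕ)), ∀ t ∈ Set.Icc b (b+(k+1:ℕ)), s ≤ t → W s ≤ W t := by
      intro s hs t ht hst
      have := (abs_nonneg _).trans (hV s hs t ht hst)
      linarith
    have hk : b + k ∈ Set.Icc (b+k) (b+k+1) := ⟨le_refl _, by linarith⟩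
    have hk1 : b + k + 1 ∈ Set.Icc (b+k) (b+k+1) := ⟨by linarith, le_refl _⟩
    have i2 := trap_cell (F := F) (f := f) (f' := f') (a := b+k) (V := W (b+k+1) - W (b+k))
      (fun t ht => hF t (hsub2 ht)) (fun t ht => hf t (hsub2 ht)) (by
        intro s hs t ht
        have a1 := mono _ (hsub2 hk) _ (hsub2 hs) hs.1
        have a2 := mono _ (hsub2 hk) _ (hsub2 ht) ht.1
        have a3 := mono _ (hsub2 hs) _ (hsub2 hk1) hs.2
        have a4 := mono _ (hsub2 ht) _ (hsub2 hk1) ht.2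
        rcases le_total s t with h | h
        · have := hV s (hsub2 hs) t (hsub2 ht) h
          linarith
        · have := hV t (hsub2 ht) s (hsub2 hs) h
          rw [abs_sub_comm]
          linarith)
    rw [sum_range_succ]
    push_cast
    rw [← add_assoc]
    rw [abs_le] at *
    constructor <;> linarith [i1.1, i1.2, i2.1, i2.2]

/-- `s(t) = √t / (√y + √(y-t))` -/
noncomputable def sfun (y t : ℝ) : ℝ := √t / (√y + √(y-t))

/-- derivative of `s` in monotone pieces -/
noncomputable def sder (y t : ℝ) : ℝ :=
  1/(2*y) * (√t/√(y-t) + √(y-t)/√t - √y/√t/2 - (sfun y t + (sfun y t)^3)/4)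

/-- antiderivative of `s` -/
noncomputable def sint (y t : ℝ) : ℝ := 2*√y*√t - y * Real.arcsin √(t/y) - √t*√(y-t)

lemma hasDerivAt_sqrt_sub {y t : ℝ} (h : t < y) :
    HasDerivAt (fun t => √(y-t)) (-1/(2*√(y-t))) t := by
  have := ((hasDerivAt_id t).const_sub y).sqrt (by simp; linarith)
  simpa using this

lemma sfun_hasDerivAt {y t : ℝ} (h0 : 0 < t) (h1 : t < y) :
    HasDerivAt (sfun y) (sder y t) t := by
  have hy : 0 < y := by linarith
  have a1 := Real.hasDerivAt_sqrt h0.ne'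
  have a2 := (hasDerivAt_sqrt_sub h1).const_add √y
  have hP : 0 < √t := Real.sqrt_pos.2 h0
  have hQ : 0 < √(y-t) := Real.sqrt_pos.2 (by linarith)
  have hY : 0 < √y := Real.sqrt_pos.2 hy
  have a3 := a1.div a2 (by positivity)
  have e : sder y t = (1/(2*√t) * (√y + √(y-t)) - √t * (-1/(2*√(y-t))))/(√y + √(y-t))^2 := by
    unfold sder sfun
    have r1 : y = √y^2 := (Real.sq_sqrt hy.le).symm
    have r2 : √t^2 = √y^2 - √(y-t)^2 := by
      rw [Real.sq_sqrt hy.le, Real.sq_sqrt h0.le, Real.sq_sqrt (by linarith)]; ring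
    have r3 : 1/(2*y) = 1/(2*√y^2) := by rw [← r1]
    rw [r3]
    generalize √y = Y at *
    generalize √t = P at *
    generalize √(y-t) = Q at *
    have r4 : P^3 = P*(Y^2-Q^2) := by rw [← r2]; ring
    have r5 : P^4 = (Y^2-Q^2)^2 := by rw [← r2]; ring
    field_simp
    ring_nf
    simp only [r5, r2]
    ring
  rw [e]
  exact a3

lemma sint_hasDerivAt {y t : ℝ} (h0 : 0 < t) (h1 : t < y) :
    HasDerivAt (sint y) (sfun y t) t := by
  have hy : 0 < y := by linarith
  have a1 := Real.hasDerivAt_sqrt h0.ne'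
  have a2 := hasDerivAt_sqrt_sub h1
  have hP : 0 < √t := Real.sqrt_pos.2 h0
  have hQ : 0 < √(y-t) := Real.sqrt_pos.2 (by linarith)
  have hY : 0 < √y := Real.sqrt_pos.2 hy
  have hty : t/y < 1 := by rw [div_lt_one hy]; exact h1
  have hty0 : 0 < t/y := by positivity
  have a4 : HasDerivAt (fun t => √(t/y)) (1/y/(2*√(t/y))) t := by
    have := ((hasDerivAt_id t).div_const y).sqrt (by simpa using hty0.ne')
    simpa using this
  have hlt : √(t/y) < 1 := by
    rw [Real.sqrt_lt' one_pos]; simpa using hty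
  have hs0 : 0 < √(t/y) := Real.sqrt_pos.2 hty0
  have a5 := (Real.hasDerivAt_arcsin (x := √(t/y)) (by linarith) hlt.ne).comp t a4
  have a6 := ((a1.const_mul (2*√y)).sub (a5.const_mul y)).sub (a1.mul a2)
  have e1 : √(1 - √(t/y)^2) = √(y-t)/√y := by
    rw [Real.sq_sqrt hty0.le, ← Real.sqrt_div (by linarith)]
    congr 1; field_simp
  have e2 : √(t/y) = √t/√y := Real.sqrt_div h0.le y
  refine a6.congr_deriv ?_
  rw [e1, e2]
  unfold sfun
  have r1 : y = √y^2 := (Real.sq_sqrt hy.le).symm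
  have r2 : √t^2 = √y^2 - √(y-t)^2 := by
    rw [Real.sq_sqrt hy.le, Real.sq_sqrt h0.le, Real.sq_sqrt (by linarith)]; ring
  have r3 : 1/y = 1/√y^2 := by rw [← r1]
  rw [r3]
  have : ∀ Y P Q : ℝ, 0 < Y → 0 < P → 0 < Q → P^2 = Y^2-Q^2 →
    2 * Y * (1 / (2 * P)) - Y^2 * (1 / (Q / Y) * (1 / Y ^ 2 / (2 * (P / Y)))) -
      (1 / (2 * P) * Q + P * (-1 / (2 * Q))) = P / (Y + Q) := by
    intro Y P Q hY hP hQ r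
    field_simp
    ring_nf
    simp only [r]
    ring
  rw [← this _ _ _ hY hP hQ r2, ← r1]


lemma sfun_nonneg (y t : ℝ) : 0 ≤ sfun y t := by unfold sfun; positivity

lemma sfun_le {y : ℝ} (hy : 0 < y) (t : ℝ) : sfun y t ≤ √t/√y := by
  unfold sfun
  have := Real.sqrt_pos.2 hy
  gcongr
  linarith [Real.sqrt_nonneg (y-t)]

lemma sfun_le_one {y t : ℝ} (h1 : t ≤ y) (hy : 0 < y) : sfun y t ≤ 1 := by
  refine (sfun_le hy t).trans ?_
  rw [div_le_one (Real.sqrt_pos.2 hy)]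
  exact Real.sqrt_le_sqrt h1

lemma sfun_mono {y s t : ℝ} (hy : 0 < y) (hst : s ≤ t) : sfun y s ≤ sfun y t := by
  unfold sfun
  have := Real.sqrt_pos.2 hy
  gcongr

lemma one_sub_sfun {y t : ℝ} (hy : 1 ≤ y) (h0 : 0 ≤ t) (h1 : t ≤ y) (h2 : y - t ≤ 2) :
    1 - sfun y t ≤ 4/√y := by
  have hY : 1 ≤ √y := by rw [Real.one_le_sqrt]; exact hy
  have hQ : √(y-t) ≤ 2 := by
    rw [Real.sqrt_le_left (by norm_num)]; linarith
  have hQ0 := Real.sqrt_nonneg (y-t)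
  have hP0 := Real.sqrt_nonneg t
  have hP : √y - √t ≤ 2 := by
    have e1 := Real.sq_sqrt h0
    have e2 := Real.sq_sqrt (show 0 ≤ y by linarith)
    nlinarith
  unfold sfun
  have e : 1 - √t/(√y+√(y-t)) = (√y - √t + √(y-t))/(√y+√(y-t)) := by
    field_simp; ring
  rw [e]
  gcongr
  · linarith
  · linarith

lemma sint_continuous (y : ℝ) : Continuous (sint y) := by
  unfold sint
  fun_prop

lemma sint_zero (y : ℝ) : sint y 0 = 0 := by simp [sint]

lemma sint_self {y : ℝ} (hy : 0 < y) : sint y y = y * (2 - π/2) := by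
  unfold sint
  rw [div_self hy.ne']
  simp
  have := Real.mul_self_sqrt hy.le
  nlinarith

lemma sint_mvt {y a b : ℝ} (h0 : 0 ≤ a) (hab : a < b) (hb : b ≤ y) :
    ∃ ξ ∈ Set.Ioo a b, sint y b - sint y a = sfun y ξ * (b - a) := by
  obtain ⟨ξ, hξ, he⟩ := exists_hasDerivAt_eq_slope (sint y) (sfun y) hab
    (sint_continuous y).continuousOn
    (fun t ht => sint_hasDerivAt (by linarith [ht.1]) (by linarith [ht.2]))
  refine ⟨ξ, hξ, ?_⟩
  rw [he]
  have : b - a ≠ 0 := by linarith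
  field_simp

lemma s_sum {y b : ℝ} {N : ℕ} (hb1 : 1 ≤ b) (hb2 : b ≤ 2)
    (ht1 : y - 2 ≤ b + N) (ht2 : b + N ≤ y - 1) :
    |∑ j ∈ range (N+1), sfun y (b+j) - (1/2 + y*(2-π/2) - (y-b-N))| ≤ 20/√y := by
  have hN : (0:ℝ) ≤ N := by positivity
  have hy : 2 ≤ y := by linarith
  have hY1 : 1 ≤ √y := by rw [Real.one_le_sqrt]; linarith
  have hY0 : 0 < √y := by linarith
  set W : ℝ → ℝ := fun t =>
    1/(2*y) * (√t/√(y-t) - √(y-t)/√t - √y/√t/2 + (sfun y t + (sfun y t)^3)/4) with hW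
  have hpos : 0 < 1/(2*y) := by positivity
  have main := trap_sum (F := sint y) (f := sfun y) (f' := sder y) (b := b) (W := W) N
    (fun t ht => sint_hasDerivAt (by linarith [ht.1]) (by linarith [ht.2]))
    (fun t ht => sfun_hasDerivAt (by linarith [ht.1]) (by linarith [ht.2]))
    (by
      intro s hs t ht hst
      have hs0 : 0 < s := by linarith [hs.1]
      have ht0 : 0 < y - t := by linarith [ht.2]
      have k1 : √s/√(y-s) ≤ √t/√(y-t) := by
        have := Real.sqrt_pos.2 ht0
        gcongr
      have k2 : √(y-t)/√t ≤ √(y-s)/√s := by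
        have := Real.sqrt_pos.2 hs0
        gcongr
      have k3 : √y/√t/2 ≤ √y/√s/2 := by
        have := Real.sqrt_pos.2 hs0
        gcongr
      have k4 : sfun y s ≤ sfun y t := sfun_mono (by linarith) hst
      have k5 : sfun y s^3 ≤ sfun y t^3 := pow_le_pow_left₀ (sfun_nonneg _ _) k4 3
      rw [hW]
      unfold sder
      simp only
      rw [← mul_sub, ← mul_sub, abs_mul, abs_of_pos hpos]
      apply mul_le_mul_of_nonneg_left _ hpos.le
      rw [abs_le]
      constructor <;> linarith)
  have hWb : W (b+N) - W b ≤ 2/√y := by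
    have hb0 : 0 < b := by linarith
    have k1 : √(b+N)/√(y-(b+N)) ≤ √y := by
      rw [div_le_iff₀ (Real.sqrt_pos.2 (by linarith))]
      have : 1 ≤ √(y-(b+N)) := by rw [Real.one_le_sqrt]; linarith
      have h2 : √(b+N) ≤ √y := Real.sqrt_le_sqrt (by linarith)
      nlinarith
    have hb' : 1 ≤ √b := by rw [Real.one_le_sqrt]; linarith
    have k2 : √(y-b)/√b ≤ √y := by
      rw [div_le_iff₀ (by linarith)]
      have h2 : √(y-b) ≤ √y := Real.sqrt_le_sqrt (by linarith)
      nlinarith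
    have k3 : √y/√b/2 ≤ √y/2 := by
      gcongr
      exact div_le_self hY0.le hb'
    have k4 : sfun y (b+N) ≤ 1 := sfun_le_one (by linarith) (by linarith)
    have k5 : sfun y (b+N)^3 ≤ 1 := pow_le_one₀ (sfun_nonneg _ _) k4
    have k6 := sfun_nonneg y b
    have k7 : 0 ≤ sfun y b^3 := pow_nonneg k6 3
    have k8 : 0 ≤ √(y-(b+N))/√(b+N) := by positivity
    have k9 : 0 ≤ √y/√(b+N)/2 := by positivity
    have k10 : 0 ≤ √b/√(y-b) := by positivity
    have e : 2/√y = 1/(2*y) * (4*√y) := by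
      have := Real.sq_sqrt (show 0 ≤ y by linarith)
      field_simp
      nlinarith
    rw [hW, e]
    simp only
    rw [← mul_sub]
    apply mul_le_mul_of_nonneg_left _ hpos.le
    linarith
  have c1 : 0 ≤ sint y b ∧ sint y b ≤ 4/√y := by
    obtain ⟨ξ, hξ, he⟩ := sint_mvt (y := y) (a := 0) (b := b) le_rfl (by linarith) (by linarith)
    rw [sint_zero, sub_zero, sub_zero] at he
    rw [he]
    have h1 := sfun_nonneg y ξ
    refine ⟨by nlinarith, ?_⟩
    have h2 := sfun_le (show 0 < y by linarith) ξ
    have h3 : √ξ ≤ 2 := by rw [Real.sqrt_le_left (by norm_num)]; linarith [hξ.2]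
    have h4 : √ξ/√y ≤ 2/√y := by gcongr
    have h5 : 4/√y = 2/√y*2 := by ring
    rw [h5]
    apply mul_le_mul (by linarith) hb2 (by linarith) (by positivity)
  have c2 : |sint y y - sint y (b+N) - (y - b - N)| ≤ 8/√y := by
    obtain ⟨ξ, hξ, he⟩ := sint_mvt (y := y) (a := b+N) (b := y) (by linarith) (by linarith) (by linarith)
    rw [he]
    have h1 := one_sub_sfun (y := y) (t := ξ) (by linarith) (by linarith [hξ.1]) (by linarith [hξ.2])
      (by linarith [hξ.1])
    have h2 := sfun_le_one (y := y) (t := ξ) (by linarith [hξ.2]) (by linarith)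
    have e : sfun y ξ * (y - (b+N)) - (y-b-N) = -((1 - sfun y ξ) * (y - (b+N))) := by ring
    rw [e, abs_neg, abs_of_nonneg (mul_nonneg (by linarith) (by linarith))]
    have h5 : 8/√y = 4/√y*2 := by ring
    rw [h5]
    apply mul_le_mul h1 (by linarith) (by linarith) (by positivity)
  rw [sint_self (by linarith)] at c2
  have c3 : sfun y b ≤ 2/√y := by
    refine (sfun_le (by linarith) b).trans ?_
    gcongr
    rw [Real.sqrt_le_left (by norm_num)]; linarith
  have c4 := sfun_nonneg y b
  have c5 := one_sub_sfun (y := y) (t := b+N) (by linarith) (by linarith) (by linarith) (by linarith)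
  have c6 := sfun_le_one (y := y) (t := b+N) (by linarith) (by linarith)
  have hp : 0 < 1/√y := by positivity
  have q1 : 2/√y = 2*(1/√y) := by ring
  have q2 : 4/√y = 4*(1/√y) := by ring
  have q3 : 8/√y = 8*(1/√y) := by ring
  have q4 : 20/√y = 20*(1/√y) := by ring
  rw [q1] at hWb c3
  rw [q2] at c1 c5
  rw [q3] at c2
  rw [q4]
  rw [abs_le] at main c2 ⊢
  constructor <;> linarith [main.1, main.2, c2.1, c2.2, c1.1, c1.2]

/-! ### The functions `B` and `E` -/

noncomputable def Bf (y : ℝ) : ℝ := ∑ k ∈ range ⌈y⌉₊, 1/(√k * √(y-k))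

noncomputable def Ef (y : ℝ) : ℝ := Zp y/√y + π + z0/√y - Bf y

lemma Bf_eq {y : ℝ} {L : ℕ} (h : y ≤ L) : Bf y = ∑ k ∈ range L, 1/(√k * √(y-k)) := by
  unfold Bf
  apply sum_subset
  · exact range_subset_range.2 (Nat.ceil_le.2 h)
  · intro k _ hk
    simp only [mem_range, not_lt] at hk
    have : y - k ≤ 0 := by linarith [Nat.ceil_le.1 hk]
    rw [Real.sqrt_eq_zero_of_nonpos this]
    simp

lemma Bterm {y k : ℝ} (h0 : 0 < k) (h1 : k < y) :
    y * (1/(√k * √(y-k))) = √y*(1/√k) - sfun y k + (√y*(1/√(y-k)) - sfun y (y-k)) := by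
  unfold sfun
  have hP : 0 < √k := Real.sqrt_pos.2 h0
  have hQ : 0 < √(y-k) := Real.sqrt_pos.2 (by linarith)
  have hY : 0 < √y := Real.sqrt_pos.2 (by linarith)
  have r1 : y = √y^2 := (Real.sq_sqrt (by linarith)).symm
  have r2 : √y^2 = √k^2 + √(y-k)^2 := by
    rw [Real.sq_sqrt (by linarith), Real.sq_sqrt h0.le, Real.sq_sqrt (by linarith)]; ring
  have e : y - (y-k) = k := by ring
  rw [e]
  have : ∀ Y P Q : ℝ, 0 < Y → 0 < P → 0 < Q → Y^2 = P^2+Q^2 →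
    Y^2 * (1/(P*Q)) = Y*(1/P) - P/(Y+Q) + (Y*(1/Q) - Q/(Y+P)) := by
    intro Y P Q hY hP hQ r
    have e1 : P/(Y+Q) = (Y-Q)/P := by field_simp; nlinarith
    have e2 : Q/(Y+P) = (Y-P)/Q := by field_simp; nlinarith
    rw [e1, e2]
    field_simp
    nlinarith
  rw [← this _ _ _ hY hP hQ r2, ← r1]

lemma Bf_formula {x : ℝ} (h0 : 0 < x) (h1 : x ≤ 1) (n : ℕ) :
    (x+n) * Bf (x+n) = √(x+n)*(z0 - zh (1+n)) + √(x+n)*(Zp (x+n) - zh (x+n))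
      - ∑ k ∈ range n, sfun (x+n) (1+k) - ∑ k ∈ range n, sfun (x+n) (x+k) := by
  have hB : Bf (x+n) = ∑ k ∈ range n, 1/(√(1+k) * √(x+n-(1+k))) := by
    rw [Bf_eq (L := n+1) (by push_cast; linarith), sum_range_succ']
    simp only [Nat.cast_zero, Real.sqrt_zero, zero_mul, div_zero, add_zero]
    apply sum_congr rfl
    intro k _
    push_cast
    rw [add_comm (k:ℝ) 1]
  have hz : z0 - zh (1+n) = ∑ k ∈ range n, 1/√(1+k) := by
    unfold z0; rw [zh_sum one_pos n]; ring
  have hZ : Zp (x+n) - zh (x+n) = ∑ k ∈ range n, 1/√(x+n-(1+k)) := by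
    rw [Zp_sum h0 h1, ← sum_range_reflect, add_sub_cancel_right]
    apply sum_congr rfl
    intro k hk
    rw [mem_range] at hk
    rw [Nat.sub_sub, Nat.cast_sub (by omega)]
    push_cast
    ring_nf
  have hs : ∑ k ∈ range n, sfun (x+n) (x+k) = ∑ k ∈ range n, sfun (x+n) (x+n-(1+k)) := by
    rw [← sum_range_reflect]
    apply sum_congr rfl
    intro k hk
    rw [mem_range] at hk
    rw [Nat.sub_sub, Nat.cast_sub (by omega)]
    push_cast
    ring_nf
  rw [hB, hz, hZ, hs, mul_sum, mul_sum, mul_sum, ← sum_add_distrib, ← sum_sub_distrib, ← sum_sub_distrib]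
  apply sum_congr rfl
  intro k hk
  rw [mem_range] at hk
  have : (k:ℝ)+1 ≤ n := by exact_mod_cast hk
  rw [Bterm (by positivity) (by linarith)]
  ring


lemma sqrt_zh_self {y : ℝ} (hy : 1 ≤ y) : |√y * zh y + 2*y - 1/2| ≤ 1/√y := by
  have h := zh_asymp (y := y) (by linarith)
  have hY : 0 < √y := Real.sqrt_pos.2 (by linarith)
  have e : √y * zh y + 2*y - 1/2 = √y * (zh y + 2*√y - 1/(2*√y)) := by
    have := Real.mul_self_sqrt (show 0 ≤ y by linarith)
    field_simp
    nlinarith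
  rw [e, abs_mul, abs_of_pos hY]
  calc √y * |zh y + 2*√y - 1/(2*√y)| ≤ √y * (1/(y*√y)) := by gcongr
    _ = 1/y := by field_simp
    _ ≤ 1/√y := by
      apply one_div_le_one_div_of_le hY
      rw [Real.sqrt_le_left (by linarith)]
      nlinarith

lemma sqrt_zh_near {y u : ℝ} (hy : 1 ≤ y) (hu0 : 0 ≤ u) (hu1 : u ≤ 1) :
    |√y * zh (y+u) + 2*y + u - 1/2| ≤ 4/√y := by
  have h := zh_asymp (y := y+u) (by linarith)
  have hY : 1 ≤ √y := by rw [Real.one_le_sqrt]; exact hy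
  have hYW : √y ≤ √(y+u) := Real.sqrt_le_sqrt (by linarith)
  have eY : √y^2 = y := Real.sq_sqrt (by linarith)
  have eW : √(y+u)^2 = y+u := Real.sq_sqrt (by linarith)
  have hyW : √y ≤ y := by nlinarith
  have hle : 1/y ≤ 1/√y := one_div_le_one_div_of_le (by linarith) hyW
  set Y := √y
  set W := √(y+u)
  have k1 : |Y*W - (y+u/2)| ≤ 1/y := by
    have hp : Y*W ≤ y + u/2 := by
      have : 0 ≤ Y*W := by positivity
      nlinarith [sq_nonneg (Y-W)]
    rw [abs_sub_comm, abs_of_nonneg (by linarith)]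
    rw [le_div_iff₀ (by linarith)]
    have : (y+u/2-Y*W)*(y+u/2+Y*W) = u^2/4 := by
      have : (Y*W)^2 = y*(y+u) := by rw [mul_pow, eY, eW]
      nlinarith
    have h3 : 0 ≤ y+u/2-Y*W := by linarith
    have h4 : y ≤ y+u/2+Y*W := by nlinarith
    nlinarith [mul_le_mul_of_nonneg_left h4 h3]
  have k2 : |Y*(1/(2*W)) - 1/2| ≤ 1/y := by
    have hW : 0 < W := by linarith
    have e : Y*(1/(2*W)) - 1/2 = -((W-Y)/(2*W)) := by field_simp; ring
    rw [e, abs_neg, abs_of_nonneg (div_nonneg (by linarith) (by linarith)),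
      div_le_div_iff₀ (by linarith) (by linarith)]
    have : (W-Y)*(W+Y) = u := by nlinarith
    have h3 : 0 ≤ W - Y := by linarith
    nlinarith [mul_le_mul_of_nonneg_left hYW h3, mul_nonneg h3 (show 0 ≤ Y by linarith)]
  have k3 : |Y*(zh (y+u) + 2*W - 1/(2*W))| ≤ 1/y := by
    rw [abs_mul, abs_of_pos (by linarith)]
    have hW : 0 < W := by linarith
    calc Y*|zh (y+u) + 2*W - 1/(2*W)| ≤ W*(1/((y+u)*W)) := by gcongr
      _ = 1/(y+u) := by field_simp
      _ ≤ 1/y := by gcongr; linarith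
  rw [abs_le] at k1 k2 k3 ⊢
  have e : Y * zh (y+u) = Y*(zh (y+u) + 2*W - 1/(2*W)) - 2*(Y*W) + Y*(1/(2*W)) := by ring
  have q : 4/Y = 4*(1/Y) := by ring
  rw [q]
  constructor
  · linarith [k1.1,k1.2,k2.1,k2.2,k3.1,k3.2]
  · linarith [k1.1,k1.2,k2.1,k2.2,k3.1,k3.2]

lemma Ef_bound_large {x : ℝ} (h0 : 0 < x) (h1 : x ≤ 1) (m : ℕ) :
    |Ef (x+(m+2:ℕ))| ≤ 60/((x+(m+2:ℕ))*√(x+(m+2:ℕ))) := by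
  have hB := Bf_formula h0 h1 (m+2)
  have hm : (0:ℝ) ≤ m := by positivity
  obtain ⟨y, hy⟩ : ∃ y, y = x + (m+2:ℕ) := ⟨_, rfl⟩
  have hy' : y = x + m + 2 := by rw [hy]; push_cast; ring
  rw [← hy] at hB ⊢
  have hY : 1 ≤ √y := by rw [Real.one_le_sqrt]; linarith
  have hyp : 0 < y := by linarith
  have eY : √y^2 = y := Real.sq_sqrt (by linarith)
  have s1 := s_sum (y := y) (b := 1) (N := m) le_rfl (by norm_num) (by linarith) (by linarith)
  have s2 := s_sum (y := y) (b := x+1) (N := m) (by linarith) (by linarith) (by linarith) (by linarith)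
  have e1 : ∑ k ∈ range (m+2), sfun y (1+k) = ∑ j ∈ range (m+1), sfun y (1+j) + sfun y (m+2) := by
    rw [sum_range_succ]
    push_cast
    congr 2
    ring
  have e2 : ∑ k ∈ range (m+2), sfun y (x+k) = ∑ j ∈ range (m+1), sfun y (x+1+j) + sfun y x := by
    rw [sum_range_succ']
    push_cast
    rw [add_zero]
    congr 1
    apply sum_congr rfl
    intro k _
    congr 1
    ring
  have c1 := one_sub_sfun (y := y) (t := m+2) (by linarith) (by linarith) (by linarith) (by linarith)
  have c2 := sfun_le_one (y := y) (t := m+2) (by linarith) (by linarith)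
  have c3 := sfun_nonneg y x
  have c4 : sfun y x ≤ 1/√y := by
    refine (sfun_le (by linarith) x).trans ?_
    gcongr
    rw [Real.sqrt_le_left (by norm_num)]; linarith
  have z1 := sqrt_zh_self (y := y) (by linarith)
  have z2 := sqrt_zh_near (y := y) (u := 1 - x) (by linarith) (by linarith) (by linarith)
  have ez : y + (1-x) = 1 + (m+2:ℕ) := by rw [hy]; ring
  rw [ez] at z2
  rw [e1, e2] at hB
  have eE : y * Ef y = √y * Zp y + π*y + z0*√y - y * Bf y := by
    unfold Ef
    have : y/√y = √y := by rw [div_eq_iff (by linarith)]; nlinarith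
    have a : y * (Zp y/√y) = √y * Zp y := by
      have e : y * (Zp y/√y) = (y/√y) * Zp y := by ring
      rw [e, this]
    have b : y * (z0/√y) = z0*√y := by
      have e : y * (z0/√y) = z0*(y/√y) := by ring
      rw [e, this]
    rw [mul_sub, mul_add, mul_add, a, b]; ring
  have key : |y * Ef y| ≤ 60*(1/√y) := by
    rw [eE, hB]
    have q1 : 4/√y = 4*(1/√y) := by ring
    have q4 : 20/√y = 20*(1/√y) := by ring
    rw [q1] at c1
    rw [q1] at z2
    rw [q4] at s1 s2
    have hp : 0 < 1/√y := by positivity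
    have eg : ∀ A B z p r : ℝ, √y * Zp y + p + z0*√y - (√y*(z0 - z) + √y*(Zp y - r) - A - B) =
        p + √y * z + √y * r + A + B := by intros; ring
    rw [eg]
    rw [abs_le] at s1 s2 z1 z2 ⊢
    constructor
    · linarith [s1.1, s1.2, s2.1, s2.2, z1.1, z1.2, z2.1, z2.2]
    · linarith [s1.1, s1.2, s2.1, s2.2, z1.1, z1.2, z2.1, z2.2]
  rw [abs_mul, abs_of_pos hyp] at key
  rw [le_div_iff₀ (by positivity)]
  calc |Ef y| * (y*√y) = (y*|Ef y|)*√y := by ring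
    _ ≤ 60*(1/√y)*√y := by gcongr
    _ = 60 := by field_simp

lemma Ef_bound : ∃ C : ℝ, 0 < C ∧ ∀ y : ℝ, 1 ≤ y → |Ef y| ≤ C/(y*√y) := by
  refine ⟨60 + 4*(|z0| * 2 + 12), by positivity, ?_⟩
  intro y hy
  obtain ⟨n, x, h0, h1, rfl, hc⟩ := exists_rep (show 0 < y by linarith)
  rcases Nat.lt_or_ge n 2 with hn | hn
  · have hy2 : x + n ≤ 2 := by
      have : (n:ℝ) ≤ 1 := by exact_mod_cast (by omega : n ≤ 1)
      linarith
    have hden : (x+n)*√(x+n) ≤ 4 := by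
      have : √(x+n) ≤ 2 := by rw [Real.sqrt_le_left (by norm_num)]; linarith
      have h3 := Real.sqrt_nonneg (x+n)
      nlinarith
    have hden0 : 0 < (x+n)*√(x+n) := by
      have : 0 < √(x+n) := Real.sqrt_pos.2 (by linarith)
      have : 0 < x + n := by linarith
      positivity
    have hY : 1 ≤ √(x+n) := by rw [Real.one_le_sqrt]; linarith
    have main : |Ef (x+n)| ≤ |z0| * 2 + 12 := by
      have hz : ∀ c : ℝ, |c/√(x+n)| ≤ |c| := by
        intro c
        rw [abs_div, abs_of_pos (show 0 < √(x+n) by linarith)]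
        exact div_le_self (abs_nonneg _) hY
      have hpi := Real.pi_pos
      have hpi4 := Real.pi_le_four
      have hz0 := hz z0
      interval_cases n
      · have hx : x = 1 := by push_cast at hy; linarith
        subst hx
        have : Zp (1 + (0:ℕ)) = z0 := by
          have := Zp_int 1
          simpa using this
        unfold Ef
        rw [this]
        have hB : Bf (1+(0:ℕ)) = 0 := by
          unfold Bf; rw [hc]; simp
        rw [hB]
        rw [abs_le] at *
        constructor <;> linarith [hz0.1, hz0.2]
      · simp only [Nat.cast_one] at *
        have hZ : Zp (x+1) = 1/√x + zh (x+1) := by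
          have := Zp_sum h0 h1 1; simpa using this
        have hB : Bf (x+1) = 1/√x := by
          unfold Bf; rw [hc]; simp [sum_range_succ]
        have hzh := zh_asymp (y := x+1) (by linarith)
        have h5 : |zh (x+1)| ≤ 6 := by
          have a1 : 1/((x+1)*√(x+1)) ≤ 1 := by
            rw [div_le_one hden0]; nlinarith
          have a2 : 1/(2*√(x+1)) ≤ 1 := by
            rw [div_le_one (by linarith)]; linarith
          have a3 : 0 ≤ 1/(2*√(x+1)) := by positivity
          have a4 : √(x+1) ≤ 2 := by rw [Real.sqrt_le_left (by norm_num)]; linarith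
          rw [abs_le] at *
          constructor <;> linarith [hzh.1, hzh.2]
        have h6 : |1/√x/√(x+1) - 1/√x| ≤ 1 := by
          have hX : 0 < √x := Real.sqrt_pos.2 h0
          have e : 1/√x/√(x+1) - 1/√x = -((√(x+1) - 1)/(√x*√(x+1))) := by
            have : √(x+1) ≠ 0 := by linarith
            field_simp
            ring
          rw [e, abs_neg, abs_of_nonneg (div_nonneg (by linarith) (by positivity)),
            div_le_one (by positivity)]
          have e1 : √(x+1)^2 = x + 1 := by
            rw [Real.sq_sqrt (by linarith)]
          have e2 : √x^2 = x := Real.sq_sqrt h0.le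
          have e3 : √x ≤ 1 := by rw [Real.sqrt_le_left (by norm_num)]; linarith
          nlinarith
        have h7 := hz (zh (x+1))
        unfold Ef
        rw [hZ, hB, add_div]
        rw [abs_le] at *
        constructor <;> linarith [hz0.1, hz0.2, h5.1, h5.2, h6.1, h6.2, h7.1, h7.2, neg_abs_le (zh (x+1)), (abs_le.2 h5)]
    rw [le_div_iff₀ hden0]
    calc |Ef (x+n)| * ((x+n)*√(x+n)) ≤ (|z0| * 2+12)*4 := by gcongr
      _ ≤ _ := by linarith
  · obtain ⟨m, rfl⟩ := Nat.exists_eq_add_of_le' hn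
    refine (Ef_bound_large h0 h1 m).trans ?_
    have : 0 < (x+(m+2:ℕ))*√(x+(m+2:ℕ)) := by
      have : 0 < √(x+(m+2:ℕ)) := Real.sqrt_pos.2 (by linarith)
      have : 0 < x + (m+2:ℕ) := by linarith
      positivity
    gcongr
    have := abs_nonneg z0
    linarith


noncomputable def Zq (q : ℕ) (z : ZMod q) : ℝ := Zp ((z.val : ℝ)/q)

lemma Zq_int (q : ℕ) [NeZero q] (n : ℤ) : Zp ((n:ℝ)/q) = Zq q (n : ZMod q) := by
  unfold Zq
  have hq : (q:ℝ) ≠ 0 := by exact_mod_cast NeZero.ne q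
  have h : (((n : ZMod q).val : ℤ)) = n % q := ZMod.val_intCast n
  have h2 : (((n : ZMod q).val : ℝ)) = ((n % q : ℤ) : ℝ) := by exact_mod_cast h
  have h3 : (n:ℝ) = ((n % q : ℤ) : ℝ) + q * ((n / q : ℤ) : ℝ) := by
    exact_mod_cast (Int.emod_add_mul_ediv n q).symm
  have h4 : (n:ℝ)/q = ((n % q : ℤ) : ℝ)/q + ((n / q : ℤ) : ℝ) := by
    rw [h3]; field_simp
  rw [h4, Zp_add_int, h2]

lemma sum_range_zmod (q : ℕ) [NeZero q] (F : ZMod q → ℝ) :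
    ∑ h ∈ range q, F ((h:ℕ) : ZMod q) = ∑ z, F z := by
  refine Finset.sum_bij' (fun h _ => ((h:ℕ) : ZMod q)) (fun z _ => z.val) ?_ ?_ ?_ ?_ ?_
  · intros; simp
  · intro z _; simp [ZMod.val_lt]
  · intro h hh; exact ZMod.val_cast_of_lt (by simpa using hh)
  · intro z _; simp
  · intros; rfl

lemma sum_range_zmod' (q : ℕ) [NeZero q] (F : ZMod q → ℝ) :
    ∑ h ∈ range q, F (((h+1:ℕ)) : ZMod q) = ∑ z, F z := by
  have := sum_range_zmod q (fun z => F (z+1))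
  simp only [Nat.cast_add, Nat.cast_one]
  rw [this]
  exact Equiv.sum_comp (Equiv.addRight (1 : ZMod q)) F

/-- the correlation sum -/
noncomputable def SS (a : ℤ) (q : ℕ) : ℝ :=
  (∑ h ∈ range q, Zp (((h:ℝ)+1)/q) * Zp (a*((h:ℝ)+1)/q))/√q

lemma SS_zmod (a : ℤ) (q : ℕ) [NeZero q] :
    SS a q = (∑ z : ZMod q, Zq q z * Zq q (a*z))/√q := by
  unfold SS
  rw [← sum_range_zmod']
  congr 1
  apply sum_congr rfl
  intro h _
  have h1 := Zq_int q (h+1)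
  have h2 := Zq_int q (a*(h+1))
  push_cast at h1 h2 ⊢
  rw [h1, h2]

lemma zh_tendsto {x : ℝ} (hx : 0 < x) :
    Filter.Tendsto (fun N : ℕ => zh (x+N) + 2*√N) Filter.atTop (nhds 0) := by
  have hN : Filter.Tendsto (fun N : ℕ => (N:ℝ)) Filter.atTop Filter.atTop :=
    tendsto_natCast_atTop_atTop
  have hs : Filter.Tendsto (fun N : ℕ => √(N:ℝ)) Filter.atTop Filter.atTop :=
    Real.tendsto_sqrt_atTop.comp hN
  have hi : Filter.Tendsto (fun N : ℕ => (4 + 2*x)*(√(N:ℝ))⁻¹) Filter.atTop (nhds 0) := by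
    have := hs.inv_tendsto_atTop.const_mul (4+2*x)
    simpa using this
  refine squeeze_zero_norm' ?_ hi
  filter_upwards [Filter.eventually_ge_atTop 1] with N hN1
  have hN1' : (1:ℝ) ≤ N := by exact_mod_cast hN1
  have h := zh_asymp (y := x+N) (by positivity)
  have hn : 1 ≤ √(N:ℝ) := by rw [Real.one_le_sqrt]; exact hN1'
  have hm : √(N:ℝ) ≤ √(x+N) := Real.sqrt_le_sqrt (by linarith)
  have e1 : √(N:ℝ)^2 = N := Real.sq_sqrt (by linarith)
  have e2 : √(x+N)^2 = x+N := Real.sq_sqrt (by linarith)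
  set p := √(N:ℝ)
  set r := √(x+N)
  have hp : 0 < p⁻¹ := by positivity
  have b1 : 1/((x+N)*r) ≤ p⁻¹ := by
    rw [← one_div]
    apply one_div_le_one_div_of_le (by linarith)
    nlinarith
  have b2 : 1/(2*r) ≤ p⁻¹ := by
    rw [← one_div]
    apply one_div_le_one_div_of_le (by linarith)
    linarith
  have b2' : 0 ≤ 1/(2*r) := by positivity
  have b3 : r - p ≤ x*p⁻¹ := by
    rw [← div_eq_mul_inv, le_div_iff₀ (by linarith)]
    nlinarith
  rw [Real.norm_eq_abs]
  rw [abs_le] at h ⊢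
  constructor <;> nlinarith [h.1, h.2]

lemma sum_range_block (q N : ℕ) (F : ℕ → ℝ) :
    ∑ m ∈ range (q*N), F m = ∑ h ∈ range q, ∑ n ∈ range N, F (q*n+h) := by
  induction N with
  | zero => simp
  | succ N ih =>
    rw [mul_add, mul_one, sum_range_add, ih, ← sum_add_distrib]
    apply sum_congr rfl
    intro h _
    rw [sum_range_succ]

lemma sqrt_block {q : ℕ} (hq : 0 < q) (h n : ℕ) :
    1/√(((q*n+h:ℕ):ℝ)+1) = (1/√q) * (1/√(((h:ℝ)+1)/q + n)) := by
  have hq' : (0:ℝ) < q := by exact_mod_cast hq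
  rw [one_div_mul_one_div, ← Real.sqrt_mul hq'.le]
  congr 2
  push_cast
  field_simp
  ring

lemma zh_block {q : ℕ} (hq : 0 < q) (N : ℕ) (c : ℕ → ℝ) (hc : ∀ n h, c (q*n+h) = c h) :
    ∑ m ∈ range (q*N), c m/√((m:ℝ)+1) =
      (∑ h ∈ range q, c h * zh (((h:ℝ)+1)/q))/√q
        - (∑ h ∈ range q, c h * zh (((h:ℝ)+1)/q + N))/√q := by
  rw [sum_range_block, ← sub_div, ← sum_sub_distrib, sum_div]
  apply sum_congr rfl
  intro h _
  have hp : (0:ℝ) < ((h:ℝ)+1)/q := by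
    have hq' : (0:ℝ) < q := by exact_mod_cast hq
    positivity
  have := zh_sum hp N
  have e : ∀ n ∈ range N, c (q*n+h)/√(((q*n+h:ℕ):ℝ)+1) = (c h/√q) * (1/√(((h:ℝ)+1)/q + n)) := by
    intro n _
    rw [hc, div_eq_mul_one_div, sqrt_block hq]; ring
  rw [sum_congr rfl e, ← mul_sum]
  rw [← mul_sub, this]; ring

lemma zh_block_tendsto {q : ℕ} (hq : 0 < q) (c : ℕ → ℝ) (hc : ∀ n h, c (q*n+h) = c h) :
    Filter.Tendsto (fun N : ℕ => ∑ m ∈ range (q*N), c m/√((m:ℝ)+1)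
      - 2*√N*((∑ h ∈ range q, c h)/√q)) Filter.atTop
      (nhds ((∑ h ∈ range q, c h * zh (((h:ℝ)+1)/q))/√q)) := by
  have e : ∀ N : ℕ, ∑ m ∈ range (q*N), c m/√((m:ℝ)+1) - 2*√N*((∑ h ∈ range q, c h)/√q) =
      (∑ h ∈ range q, c h * zh (((h:ℝ)+1)/q))/√q
       - (∑ h ∈ range q, c h * (zh (((h:ℝ)+1)/q + N) + 2*√N))/√q := by
    intro N
    rw [zh_block hq N c hc]
    simp only [mul_add, sum_add_distrib, ← sum_mul]
    ring
  simp_rw [e]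
  have : Filter.Tendsto (fun N : ℕ => (∑ h ∈ range q, c h * (zh (((h:ℝ)+1)/q + N) + 2*√N))/√q)
      Filter.atTop (nhds ((∑ h ∈ range q, c h * 0)/√q)) := by
    apply Filter.Tendsto.div_const
    apply tendsto_finsetSum
    intro h _
    apply Filter.Tendsto.const_mul
    apply zh_tendsto
    have hq' : (0:ℝ) < q := by exact_mod_cast hq
    positivity
  have h2 := this.const_sub ((∑ h ∈ range q, c h * zh (((h:ℝ)+1)/q))/√q)
  simpa using h2

lemma tendsto_qN {q : ℕ} (hq : 0 < q) :
    Filter.Tendsto (fun N : ℕ => q*N) Filter.atTop Filter.atTop := by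
  apply Filter.tendsto_atTop_mono (f := fun N : ℕ => N) _ Filter.tendsto_id
  intro N; exact Nat.le_mul_of_pos_left N hq

lemma zh_dist {q : ℕ} (hq : 0 < q) : ∑ h ∈ range q, zh (((h:ℝ)+1)/q) = √q * z0 := by
  have h1 := zh_block_tendsto hq (fun _ => 1) (fun _ _ => rfl)
  have hq' : (0:ℝ) < q := by exact_mod_cast hq
  have hs : 0 < √(q:ℝ) := Real.sqrt_pos.2 hq'
  have h2 : Filter.Tendsto (fun N : ℕ => z0 - (zh (1 + ((q*N:ℕ):ℝ)) + 2*√((q*N:ℕ):ℝ)))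
      Filter.atTop (nhds z0) := by
    have := ((zh_tendsto one_pos).comp (tendsto_qN hq)).const_sub z0
    simpa using this
  have e : (fun N : ℕ => ∑ m ∈ range (q*N), (1:ℝ)/√((m:ℝ)+1)
      - 2*√N*((∑ h ∈ range q, (1:ℝ))/√q)) =
      (fun N : ℕ => z0 - (zh (1 + ((q*N:ℕ):ℝ)) + 2*√((q*N:ℕ):ℝ))) := by
    ext N
    have := zh_sum one_pos (q*N)
    have e2 : ∑ m ∈ range (q*N), (1:ℝ)/√((m:ℝ)+1) = z0 - zh (1 + ((q*N:ℕ):ℝ)) := by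
      unfold z0; rw [this]
      simp only [add_comm (1:ℝ)]
      ring
    rw [e2]
    have e3 : √((q*N:ℕ):ℝ) = √q * √N := by
      push_cast; rw [Real.sqrt_mul hq'.le]
    rw [e3]
    have e4 : (∑ h ∈ range q, (1:ℝ))/√q = √q := by
      simp
    rw [e4]; ring
  simp only [one_mul] at h1
  rw [e] at h1
  have := tendsto_nhds_unique h1 h2
  rw [div_eq_iff hs.ne'] at this
  rw [this]; ring

lemma Zp_range_eq {q h : ℕ} (hh : h ∈ range q) : Zp (((h:ℝ)+1)/q) = zh (((h:ℝ)+1)/q) := by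
  rw [Finset.mem_range] at hh
  have : (h:ℝ)+1 ≤ q := by exact_mod_cast hh
  have hq : (0:ℝ) < q := by exact_mod_cast (by omega : 0 < q)
  apply Zp_eq (by positivity)
  rw [div_le_one hq]; exact this

lemma Zq_sum (q : ℕ) [NeZero q] : ∑ z, Zq q z = √q * z0 := by
  have hq : 0 < q := Nat.pos_of_ne_zero (NeZero.ne q)
  rw [← zh_dist hq, ← sum_range_zmod']
  apply sum_congr rfl
  intro h hh
  rw [← Zp_range_eq hh]
  have h1 := Zq_int q (h+1)
  push_cast at h1 ⊢
  rw [h1]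

lemma Zp_perm_sum (a : ℤ) (q : ℕ) (hq : 0 < q) (hc : IsCoprime a (q:ℤ)) :
    ∑ h ∈ range q, Zp (a*((h:ℝ)+1)/q) = √q * z0 := by
  haveI : NeZero q := ⟨hq.ne'⟩
  rw [← Zq_sum]
  have hu : IsUnit (a : ZMod q) := (ZMod.coe_int_isUnit_iff_isCoprime a q).2 hc.symm
  have e : ∀ h ∈ range q, Zp (a*((h:ℝ)+1)/q) = Zq q (a*((h+1:ℕ) : ZMod q)) := by
    intro h _
    have h2 := Zq_int q (a*(h+1))
    push_cast at h2 ⊢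
    rw [h2]
  rw [sum_congr rfl e, sum_range_zmod' q (fun z => Zq q (a*z))]
  obtain ⟨u, hu⟩ := hu
  rw [← hu]
  exact Equiv.sum_comp (Units.mulLeft u) (Zq q)

lemma SS_tendsto (a : ℤ) (q : ℕ) (hq : 0 < q) (hc : IsCoprime a (q:ℤ)) :
    Filter.Tendsto (fun N : ℕ => ∑ m ∈ range (q*N), Zp (a*((m:ℝ)+1)/q)/√((m:ℝ)+1) - 2*√N*z0)
      Filter.atTop (nhds (SS a q)) := by
  have hq' : (0:ℝ) < q := by exact_mod_cast hq
  have h1 := zh_block_tendsto hq (fun m => Zp (a*((m:ℝ)+1)/q)) (by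
    intro n h
    have := Zp_add_int (a*((h:ℝ)+1)/q) (a*n)
    rw [← this]
    congr 1
    push_cast
    field_simp
    ring)
  have e : (∑ h ∈ range q, Zp (a*((h:ℝ)+1)/q))/√q = z0 := by
    rw [Zp_perm_sum a q hq hc]
    have hs : 0 < √(q:ℝ) := Real.sqrt_pos.2 hq'
    field_simp
  rw [e] at h1
  have e2 : SS a q = (∑ h ∈ range q, Zp (a*((h:ℝ)+1)/q) * zh (((h:ℝ)+1)/q))/√q := by
    unfold SS
    congr 1
    apply sum_congr rfl
    intro h hh
    rw [Zp_range_eq hh, mul_comm]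
  rw [e2]
  exact h1


lemma mul_sqrt_eq_rpow {x : ℝ} (hx : 0 ≤ x) : x * √x = x^(3/2:ℝ) := by
  rw [Real.sqrt_eq_rpow]
  rcases hx.eq_or_lt with rfl | h
  · simp
  · nth_rewrite 1 [← Real.rpow_one x]
    rw [← Real.rpow_add h]; norm_num

lemma summable_32 : Summable (fun m : ℕ => 1/(((m:ℝ)+1)*√((m:ℝ)+1))) := by
  have h := (Real.summable_one_div_nat_rpow (p := 3/2)).2 (by norm_num)
  have h2 := (summable_nat_add_iff 1).2 h
  refine h2.congr ?_
  intro m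
  rw [mul_sqrt_eq_rpow (by positivity)]
  push_cast; rfl

noncomputable def fE (θ : ℝ) : ℝ := ∑' m : ℕ, Ef (θ*((m:ℝ)+1))

lemma Ef_summable {θ : ℝ} (hθ : 0 < θ) : Summable (fun m : ℕ => Ef (θ*((m:ℝ)+1))) := by
  obtain ⟨C, hC, hE⟩ := Ef_bound
  have h := summable_32.mul_left (C/(θ*√θ))
  refine Summable.of_norm_bounded_eventually_nat h ?_
  filter_upwards [Filter.eventually_ge_atTop ⌈1/θ⌉₊] with m hm
  have h1 : 1/θ ≤ m := Nat.ceil_le.1 hm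
  have h2 : 1 ≤ θ*((m:ℝ)+1) := by
    rw [div_le_iff₀ hθ] at h1; nlinarith
  have := hE _ h2
  rw [Real.norm_eq_abs]
  refine this.trans (le_of_eq ?_)
  rw [Real.sqrt_mul hθ.le]
  have : 0 < √θ := Real.sqrt_pos.2 hθ
  have : 0 < √((m:ℝ)+1) := Real.sqrt_pos.2 (by positivity)
  field_simp

lemma G_sum (M : ℕ) {u : ℝ} (h0 : 0 ≤ u) (h1 : u < M) :
    ∑ m ∈ range M, 1/√((m:ℝ)+1-u) = Zp (-u) - zh (M-u+1) := by
  obtain ⟨n, x, hx0, hx1, hw, -⟩ := exists_rep (show 0 < (M:ℝ)-u by linarith)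
  have hn : n + 1 ≤ M := by
    have : (n:ℝ) < M := by linarith
    exact_mod_cast this
  obtain ⟨r, rfl⟩ := Nat.exists_eq_add_of_le' hn
  rw [sum_range_add]
  have z : ∑ m ∈ range r, 1/√((m:ℝ)+1-u) = 0 := by
    apply sum_eq_zero
    intro m hm
    rw [Finset.mem_range] at hm
    have : (m:ℝ)+1 ≤ r := by exact_mod_cast hm
    push_cast at hw
    rw [Real.sqrt_eq_zero_of_nonpos (by linarith)]; simp
  rw [z, zero_add]
  have e : ∀ j ∈ range (n+1), 1/√(((r+j:ℕ):ℝ)+1-u) = 1/√(x+j) := by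
    intro j _
    congr 2
    push_cast at hw ⊢
    linarith
  rw [sum_congr rfl e]
  have h2 := Zp_sum hx0 hx1 (n+1)
  have h3 := Zp_add_int (x+(n+1:ℕ)) (-((r+(n+1):ℕ):ℤ) - 1)
  have h4 : x+((n+1:ℕ):ℝ) + ((-((r+(n+1):ℕ):ℤ) - 1 : ℤ):ℝ) = -u := by
    push_cast at hw ⊢
    linarith
  rw [h4] at h3
  rw [h3, h2]
  have h5 : ((r+(n+1):ℕ):ℝ)-u+1 = x+((n+1:ℕ):ℝ) := by rw [hw]; push_cast; ring
  rw [h5]; ring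

lemma A_sum (K : ℕ) : 2*∑ k ∈ range K, √((K:ℝ)-k)/√k = K * Bf K := by
  rw [Bf_eq (L := K) le_rfl]
  have hβ : ∀ F : ℝ → ℝ, ∑ k ∈ range K, F k * (1/(√(k:ℝ) * √((K:ℝ)-k))) =
     ∑ k ∈ range (K+1), F k * (1/(√(k:ℝ) * √((K:ℝ)-k))) := by
    intro F; rw [sum_range_succ]; simp
  have e1 : ∑ k ∈ range K, √((K:ℝ)-k)/√k = ∑ k ∈ range K, ((K:ℝ)-k) * (1/(√(k:ℝ) * √((K:ℝ)-k))) := by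
    apply sum_congr rfl
    intro k hk
    rw [Finset.mem_range] at hk
    have hk' : (k:ℝ) < K := by exact_mod_cast hk
    have hp : 0 < √((K:ℝ)-k) := Real.sqrt_pos.2 (by linarith)
    have h2 := Real.mul_self_sqrt (show 0 ≤ (K:ℝ)-k by linarith)
    rcases Nat.eq_zero_or_pos k with rfl | h0
    · simp
    · have hq : 0 < √(k:ℝ) := Real.sqrt_pos.2 (by exact_mod_cast h0)
      field_simp
      nlinarith
  have e2 : ∑ k ∈ range K, ((K:ℝ)-k) * (1/(√(k:ℝ) * √((K:ℝ)-k))) =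
      ∑ k ∈ range K, (k:ℝ) * (1/(√(k:ℝ) * √((K:ℝ)-k))) := by
    rw [hβ (fun k => (K:ℝ)-k), hβ (fun k => k), ← sum_range_reflect]
    apply sum_congr rfl
    intro k hk
    rw [Finset.mem_range] at hk
    have e : ((K+1-1-k : ℕ):ℝ) = (K:ℝ) - k := by
      rw [Nat.add_sub_cancel, Nat.cast_sub (by omega)]
    rw [e]
    have e' : (K:ℝ) - (K-k) = k := by ring
    rw [e']; ring
  have e3 : ∑ k ∈ range K, ((K:ℝ)-k) * (1/(√(k:ℝ) * √((K:ℝ)-k))) +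
      ∑ k ∈ range K, (k:ℝ) * (1/(√(k:ℝ) * √((K:ℝ)-k))) = K * ∑ k ∈ range K, 1/(√(k:ℝ) * √((K:ℝ)-k)) := by
    rw [← sum_add_distrib, mul_sum]
    apply sum_congr rfl
    intro k _
    ring
  rw [e1]; linarith

lemma T_bound (K : ℕ) : ∑ k ∈ range K, 1/√(k:ℝ) * (1/(((K:ℝ)-k)*√((K:ℝ)-k))) ≤
    2*(1+Real.log K)/√K := by
  rcases Nat.eq_zero_or_pos K with rfl | hK
  · simp
  have hK' : (0:ℝ) < K := by exact_mod_cast hK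
  have hs : 0 < √(K:ℝ) := Real.sqrt_pos.2 hK'
  have hh : ∑ k ∈ range K, 1/((k:ℝ)+1) ≤ 1 + Real.log K := by
    have := harmonic_le_one_add_log K
    unfold harmonic at this
    push_cast at this
    simpa using this
  have b : ∀ k ∈ range K, 1/√(k:ℝ) * (1/(((K:ℝ)-k)*√((K:ℝ)-k))) ≤
      1/√K * (1/(k:ℝ) + 1/((K:ℝ)-k)) := by
    intro k hk
    rw [Finset.mem_range] at hk
    have hk' : (k:ℝ) + 1 ≤ K := by exact_mod_cast hk
    rcases Nat.eq_zero_or_pos k with rfl | h0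
    · simp
      positivity
    · have h0' : (0:ℝ) < k := by exact_mod_cast h0
      have hq : 0 < √(k:ℝ) := Real.sqrt_pos.2 h0'
      have hp : 1 ≤ √((K:ℝ)-k) := by rw [Real.one_le_sqrt]; linarith
      have hd : 0 < (K:ℝ)-k := by linarith
      have e1 : 1/(k:ℝ) + 1/((K:ℝ)-k) = K/(k*(K-k)) := by field_simp; ring
      rw [e1]
      have eK := Real.mul_self_sqrt hK'.le
      have ek := Real.mul_self_sqrt h0'.le
      have e2 : 1/√K * (K/((k:ℝ)*(K-k))) = √K/(k*(K-k)) := by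
        field_simp
        nlinarith
      rw [e2]
      have e3 : √(k:ℝ) ≤ √K := Real.sqrt_le_sqrt (by linarith)
      calc 1/√(k:ℝ) * (1/(((K:ℝ)-k)*√((K:ℝ)-k))) ≤ 1/√(k:ℝ) * (1/(((K:ℝ)-k)*1)) := by gcongr
        _ = √k/(k*(K-k)) := by
          field_simp
          nlinarith
        _ ≤ _ := by gcongr
  refine (sum_le_sum b).trans ?_
  rw [← mul_sum, sum_add_distrib]
  have h1 : ∑ k ∈ range K, 1/(k:ℝ) ≤ 1 + Real.log K := by
    obtain ⟨n, rfl⟩ := Nat.exists_eq_succ_of_ne_zero hK.ne'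
    refine le_trans ?_ hh
    rw [sum_range_succ' , sum_range_succ]
    simp
    positivity
  have h2 : ∑ k ∈ range K, 1/((K:ℝ)-k) ≤ 1 + Real.log K := by
    refine le_trans (le_of_eq ?_) hh
    rw [← sum_range_reflect]
    apply sum_congr rfl
    intro k hk
    rw [Finset.mem_range] at hk
    congr 1
    have : K - 1 - k + 1 + k = K := by omega
    have h3 : ((K-1-k:ℕ):ℝ) + 1 + k = K := by exact_mod_cast this
    linarith
  have : 1/√K * (∑ k ∈ range K, 1/(k:ℝ) + ∑ k ∈ range K, 1/((K:ℝ)-k)) ≤ 1/√K * (2*(1+Real.log K)) := by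
    gcongr; linarith
  refine this.trans (le_of_eq ?_)
  ring

lemma logdiv_tendsto : Filter.Tendsto (fun x : ℝ => 2*(1+Real.log x)/√x) Filter.atTop (nhds 0) := by
  have h1 : Filter.Tendsto (fun x : ℝ => Real.log x / x^(1/2:ℝ)) Filter.atTop (nhds 0) :=
    (isLittleO_log_rpow_atTop (by norm_num : (0:ℝ) < 1/2)).tendsto_div_nhds_zero
  have h2 : Filter.Tendsto (fun x : ℝ => (√x)⁻¹) Filter.atTop (nhds 0) :=
    Real.tendsto_sqrt_atTop.inv_tendsto_atTop
  have h3 := (h2.add h1).const_mul 2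
  simp only [add_zero, mul_zero] at h3
  refine h3.congr ?_
  intro x
  rw [← Real.sqrt_eq_rpow]
  ring


lemma R_swap {θ : ℝ} (hθ : 0 < θ) (M K : ℕ) (hMK : θ * M = K) :
    √θ * ∑ m ∈ range M, Bf (θ*((m:ℝ)+1)) =
      ∑ k ∈ range K, 1/√(k:ℝ) * (Zp (-((k:ℝ)/θ)) - zh (((K:ℝ)-k)/θ + 1)) := by
  have e1 : ∀ m ∈ range M, Bf (θ*((m:ℝ)+1)) =
      ∑ k ∈ range K, 1/√(k:ℝ) * ((1/√θ) * (1/√((m:ℝ)+1-(k:ℝ)/θ))) := by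
    intro m hm
    rw [Finset.mem_range] at hm
    have hm' : (m:ℝ)+1 ≤ M := by exact_mod_cast hm
    rw [Bf_eq (L := K) (by rw [← hMK]; gcongr)]
    apply sum_congr rfl
    intro k _
    have : θ*((m:ℝ)+1) - k = θ*((m:ℝ)+1-(k:ℝ)/θ) := by field_simp
    rw [this, Real.sqrt_mul hθ.le]
    rw [one_div_mul_one_div, one_div_mul_one_div]
  rw [sum_congr rfl e1, sum_comm, mul_sum]
  apply sum_congr rfl
  intro k hk
  rw [Finset.mem_range] at hk
  have hk' : (k:ℝ) < K := by exact_mod_cast hk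
  rw [← mul_sum, ← mul_sum]
  have hu : (k:ℝ)/θ < M := by rw [div_lt_iff₀ hθ]; linarith
  rw [G_sum M (by positivity) hu]
  have : ((K:ℝ)-k)/θ = M - (k:ℝ)/θ := by rw [← hMK]; field_simp
  rw [this]
  have hs : √θ ≠ 0 := (Real.sqrt_pos.2 hθ).ne'
  field_simp

lemma zh_succ_bound {w : ℝ} (hw : 0 < w) : |zh (w+1) + 2*√w + 1/(2*√w)| ≤ 1/(w*√w) := by
  have h := zh_asymp hw
  have h2 := zh_rec hw
  have hs : 0 < √w := Real.sqrt_pos.2 hw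
  have e : zh (w+1) + 2*√w + 1/(2*√w) = zh w + 2*√w - 1/(2*√w) := by
    rw [h2]; field_simp; ring
  rw [e]; exact h

lemma R_err {θ : ℝ} (hθ : 0 < θ) (K : ℕ) :
    |∑ k ∈ range K, 1/√(k:ℝ) * (Zp (-((k:ℝ)/θ)) - zh (((K:ℝ)-k)/θ + 1)) -
      (∑ k ∈ range K, Zp (-((k:ℝ)/θ))/√k + (1/√θ) * (K * Bf K) + √θ * Bf K/2)| ≤
      θ*√θ * (2*(1+Real.log K)/√K) := by
  have hs : 0 < √θ := Real.sqrt_pos.2 hθ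
  rw [← A_sum, Bf_eq (L := K) le_rfl]
  have e : ∑ k ∈ range K, 1/√(k:ℝ) * (Zp (-((k:ℝ)/θ)) - zh (((K:ℝ)-k)/θ + 1)) -
      (∑ k ∈ range K, Zp (-((k:ℝ)/θ))/√k + (1/√θ) * (2*∑ k ∈ range K, √((K:ℝ)-k)/√k)
        + √θ * (∑ k ∈ range K, 1/(√(k:ℝ) * √((K:ℝ)-k)))/2) =
      - ∑ k ∈ range K, 1/√(k:ℝ) * (zh (((K:ℝ)-k)/θ + 1) + 2*√(((K:ℝ)-k)/θ) + 1/(2*√(((K:ℝ)-k)/θ))) := by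
    rw [mul_sum, mul_sum, mul_sum, sum_div, ← sum_add_distrib, ← sum_add_distrib, ← sum_sub_distrib,
      ← sum_neg_distrib]
    apply sum_congr rfl
    intro k hk
    rw [Finset.mem_range] at hk
    have hk' : (k:ℝ) < K := by exact_mod_cast hk
    have hp : 0 < √((K:ℝ)-k) := Real.sqrt_pos.2 (by linarith)
    rw [Real.sqrt_div (by linarith)]
    have e1 : 1/(2*(√((K:ℝ)-k)/√θ)) = √θ/(2*√((K:ℝ)-k)) := by field_simp
    rw [e1]
    ring
  rw [e, abs_neg]
  refine (abs_sum_le_sum_abs _ _).trans ?_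
  refine le_trans ?_ (mul_le_mul_of_nonneg_left (T_bound K) (by positivity))
  rw [mul_sum]
  apply sum_le_sum
  intro k hk
  rw [Finset.mem_range] at hk
  have hk' : (k:ℝ) < K := by exact_mod_cast hk
  have hd : 0 < (K:ℝ)-k := by linarith
  have hp : 0 < √((K:ℝ)-k) := Real.sqrt_pos.2 (by linarith)
  rw [abs_mul, abs_of_nonneg (show 0 ≤ 1/√(k:ℝ) by positivity)]
  have := zh_succ_bound (show 0 < ((K:ℝ)-k)/θ by positivity)
  calc _ ≤ 1/√(k:ℝ) * (1/(((K:ℝ)-k)/θ*√(((K:ℝ)-k)/θ))) := by gcongr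
    _ = _ := by
      rw [Real.sqrt_div (by linarith)]
      field_simp

lemma sum_shift_Zp {θ : ℝ} (K M : ℕ) (hKM : (K:ℝ)/θ = M) :
    ∑ k ∈ range K, Zp (-((k:ℝ)/θ))/√k = ∑ k ∈ range K, Zp (-(((k:ℝ)+1)/θ))/√((k:ℝ)+1) - z0/√K := by
  have h := sum_range_succ (fun k : ℕ => Zp (-((k:ℝ)/θ))/√k) K
  rw [sum_range_succ'] at h
  have e : Zp (-((K:ℝ)/θ)) = z0 := by
    rw [hKM]
    have := Zp_int (-(M:ℤ))
    push_cast at this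
    exact this
  rw [e] at h
  push_cast at h
  simp only [Real.sqrt_zero, div_zero, add_zero] at h
  linarith

lemma Bf_nat {K : ℕ} : Bf K = π + 2*z0/√K - Ef K := by
  unfold Ef
  have : Zp (K:ℝ) = z0 := by exact_mod_cast Zp_int K
  rw [this]; ring

lemma KEf_tendsto : Filter.Tendsto (fun K : ℕ => (K:ℝ) * Ef K) Filter.atTop (nhds 0) := by
  obtain ⟨C, hC, hE⟩ := Ef_bound
  have hs : Filter.Tendsto (fun N : ℕ => C*(√(N:ℝ))⁻¹) Filter.atTop (nhds 0) := by
    have := ((Real.tendsto_sqrt_atTop.comp (tendsto_natCast_atTop_atTop (R := ℝ))).inv_tendsto_atTop).const_mul C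
    simpa using this
  refine squeeze_zero_norm' ?_ hs
  filter_upwards [Filter.eventually_ge_atTop 1] with K hK
  have hK' : (1:ℝ) ≤ K := by exact_mod_cast hK
  have := hE K hK'
  rw [Real.norm_eq_abs, abs_mul, abs_of_nonneg (by linarith)]
  have hp : 0 < √(K:ℝ) := Real.sqrt_pos.2 (by linarith)
  calc (K:ℝ) * |Ef K| ≤ K * (C/(K*√K)) := by gcongr
    _ = C*(√K)⁻¹ := by field_simp

lemma sqrt_inv_nat_tendsto : Filter.Tendsto (fun N : ℕ => (√(N:ℝ))⁻¹) Filter.atTop (nhds 0) :=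
  (Real.tendsto_sqrt_atTop.comp (tendsto_natCast_atTop_atTop (R := ℝ))).inv_tendsto_atTop

lemma Bf_nat_tendsto : Filter.Tendsto (fun K : ℕ => Bf K) Filter.atTop (nhds π) := by
  have h1 : Filter.Tendsto (fun K : ℕ => Ef K) Filter.atTop (nhds 0) := by
    refine squeeze_zero_norm' ?_ (tendsto_norm_zero.comp KEf_tendsto)
    filter_upwards [Filter.eventually_ge_atTop 1] with K hK
    have hK' : (1:ℝ) ≤ K := by exact_mod_cast hK
    simp only [Function.comp, norm_mul]
    have : 1 ≤ ‖(K:ℝ)‖ := by rw [Real.norm_eq_abs]; exact hK'.trans (le_abs_self _)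
    nlinarith [norm_nonneg (Ef K)]
  have h2 := sqrt_inv_nat_tendsto.const_mul (2*z0)
  have h3 := (h2.const_add π).sub h1
  simp only [mul_zero, add_zero, sub_zero] at h3
  refine h3.congr ?_
  intro K
  rw [Bf_nat]; ring

lemma R_identity {θ : ℝ} (hθ : 0 < θ) (M K : ℕ) (hMK : θ * M = K) (Z : ℝ) :
    |(∑ m ∈ range M, Zp (θ*((m:ℝ)+1))/√((m:ℝ)+1) - Z) + z0*(z0 - (zh (1+M) + 2*√M))
       - √θ * ∑ m ∈ range M, Ef (θ*((m:ℝ)+1))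
     - ((∑ k ∈ range K, Zp (-(((k:ℝ)+1)/θ))/√((k:ℝ)+1) - Z) - z0*(√K)⁻¹ + √θ*Bf K/2
        - (1/√θ)*(K*Ef K))| ≤ θ*√θ * (2*(1+Real.log K)/√K) := by
  have h := R_err hθ K
  rw [← R_swap hθ M K hMK, sum_shift_Zp K M (by rw [← hMK]; field_simp)] at h
  refine le_trans (le_of_eq ?_) h
  congr 1
  have hs : 0 < √θ := Real.sqrt_pos.2 hθ
  have e1 : √θ * ∑ m ∈ range M, Bf (θ*((m:ℝ)+1)) =
      ∑ m ∈ range M, Zp (θ*((m:ℝ)+1))/√((m:ℝ)+1) + π*M*√θ + z0 * ∑ m ∈ range M, 1/√((m:ℝ)+1)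
       - √θ * ∑ m ∈ range M, Ef (θ*((m:ℝ)+1)) := by
    have : ∀ m ∈ range M, √θ * Bf (θ*((m:ℝ)+1)) = Zp (θ*((m:ℝ)+1))/√((m:ℝ)+1) + π*√θ +
        z0 * (1/√((m:ℝ)+1)) - √θ * Ef (θ*((m:ℝ)+1)) := by
      intro m _
      have hp : 0 < √((m:ℝ)+1) := Real.sqrt_pos.2 (by positivity)
      unfold Ef
      rw [Real.sqrt_mul hθ.le]
      field_simp
      ring
    rw [mul_sum, sum_congr rfl this, sum_sub_distrib, sum_add_distrib, sum_add_distrib, sum_const,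
      ← mul_sum, ← mul_sum]
    simp
    ring
  have e2 : ∑ m ∈ range M, 1/√((m:ℝ)+1) = z0 - zh (1+M) := by
    have := zh_sum one_pos M
    unfold z0; rw [this]
    simp only [add_comm (1:ℝ)]
    ring
  have eK : (K:ℝ)/√K = √K := Real.div_sqrt
  have e3 : (1/√θ)*(K*Bf K) = π*M*√θ + 2*z0*√M - (1/√θ)*(K*Ef K) := by
    have e4 : (K:ℝ)*Bf K = π*K + 2*z0*((K:ℝ)/√K) - K*Ef K := by
      rw [Bf_nat]; ring
    rw [e4, eK, ← hMK, Real.sqrt_mul hθ.le]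
    have := Real.mul_self_sqrt hθ.le
    field_simp
    linear_combination (-(π*M)) * this
  rw [e1, e2, e3]
  ring

/-- exact reciprocity -/
lemma SS_recip (a q : ℕ) (ha : 0 < a) (hq : 0 < q) (hc : Nat.Coprime a q) :
    SS a q - SS (-(q:ℤ)) a = √((a:ℝ)/q) * (fE ((a:ℝ)/q) + π/2) - z0^2 := by
  have ha' : (0:ℝ) < a := by exact_mod_cast ha
  have hq' : (0:ℝ) < q := by exact_mod_cast hq
  obtain ⟨θ, hθe⟩ : ∃ θ, θ = (a:ℝ)/q := ⟨_, rfl⟩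
  have hθ : 0 < θ := by rw [hθe]; positivity
  rw [← hθe]
  have hX := SS_tendsto a q hq (by exact_mod_cast hc.isCoprime)
  have hY := SS_tendsto (-(q:ℤ)) a ha (by
    rw [IsCoprime.neg_left_iff]; exact_mod_cast hc.symm.isCoprime)
  have eX : ∀ m : ℕ, ((a:ℤ):ℝ)*((m:ℝ)+1)/q = θ*((m:ℝ)+1) := by
    intro m; rw [hθe]; push_cast; ring
  have eY : ∀ m : ℕ, ((-(q:ℤ):ℤ):ℝ)*((m:ℝ)+1)/a = -(((m:ℝ)+1)/θ) := by
    intro m; rw [hθe]; push_cast; field_simp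
  simp only [eX] at hX
  simp only [eY] at hY
  have hM := tendsto_qN hq
  have hK := tendsto_qN ha
  have t1 := (zh_tendsto one_pos).comp hM
  have t2 := ((Ef_summable hθ).hasSum.tendsto_sum_nat).comp hM
  have t3 := sqrt_inv_nat_tendsto.comp hK
  have t4 := Bf_nat_tendsto.comp hK
  have t5 := KEf_tendsto.comp hK
  have t6 := logdiv_tendsto.comp ((tendsto_natCast_atTop_atTop (R := ℝ)).comp hK)
  have L := ((hX.add ((t1.const_sub z0).const_mul z0)).sub (t2.const_mul √θ)).sub
    (((hY.sub (t3.const_mul z0)).add ((t4.const_mul √θ).div_const 2)).sub (t5.const_mul (1/√θ)))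
  have t6' := t6.const_mul (θ*√θ)
  rw [mul_zero] at t6'
  have L0 := le_of_tendsto_of_tendsto' L.abs t6' (fun N => ?_)
  · have := abs_nonpos_iff.1 L0
    unfold fE
    simp only [mul_zero, sub_zero] at this
    linarith
  · have := R_identity hθ (q*N) (a*N) (by rw [hθe]; push_cast; field_simp) (2*√N*z0)
    simp only [Function.comp]
    exact this


lemma inv32_le {v : ℝ} (hv : 0 < v) : 1/((v+1)*√(v+1)) ≤ 2*(1/√v - 1/√(v+1)) := by
  have hx : 0 < √v := Real.sqrt_pos.2 hv
  have hX : 0 < √(v+1) := Real.sqrt_pos.2 (by linarith)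
  have e1 : √v^2 = v := Real.sq_sqrt hv.le
  have e2 : √(v+1)^2 = v+1 := Real.sq_sqrt (by linarith)
  set x := √v
  set X := √(v+1)
  have hxX : x ≤ X := Real.sqrt_le_sqrt (by linarith)
  have e3 : 1/x - 1/X = (X-x)/(x*X) := by field_simp
  rw [e3, ← e2]
  have h1 : (X-x)*(X+x) = 1 := by nlinarith
  have h2 : 1 ≤ 2*X*(X-x) := by nlinarith
  rw [mul_div_assoc', div_le_div_iff₀ (by positivity) (by positivity)]
  have : x*X*1 ≤ X*X*(2*X*(X-x)) := by gcongr
  nlinarith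

lemma fE_tail : ∃ C : ℝ, 0 < C ∧ ∀ (θ : ℝ) (M : ℕ), 0 < θ → 1 ≤ M → 1 ≤ θ*M →
    |fE θ - ∑ m ∈ range M, Ef (θ*((m:ℝ)+1))| ≤ C/(θ*√θ*√M) := by
  obtain ⟨C, hC, hE⟩ := Ef_bound
  refine ⟨2*C, by positivity, ?_⟩
  intro θ M hθ hM hθM
  have hs : 0 < √θ := Real.sqrt_pos.2 hθ
  have hM' : (1:ℝ) ≤ M := by exact_mod_cast hM
  have hsM : 0 < √(M:ℝ) := Real.sqrt_pos.2 (by linarith)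
  have key : ∀ N : ℕ, |∑ m ∈ range (M+N), Ef (θ*((m:ℝ)+1)) - ∑ m ∈ range M, Ef (θ*((m:ℝ)+1))| ≤
      (C/(θ*√θ))*(2*(1/√M - 1/√((M+N:ℕ):ℝ))) := by
    intro N
    induction N with
    | zero => simp
    | succ N ih =>
      rw [← add_assoc, sum_range_succ]
      have hp : (0:ℝ) < ((M+N:ℕ):ℝ) := by push_cast; positivity
      have h1 : 1 ≤ θ*(((M+N:ℕ):ℝ)+1) := by
        push_cast
        nlinarith [(by positivity : (0:ℝ) ≤ θ*N)]
      have h2 := hE _ h1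
      have h3 := inv32_le hp
      have hd : 0 < √(((M+N:ℕ):ℝ)+1) := Real.sqrt_pos.2 (by linarith)
      have h4 : C/(θ*(((M+N:ℕ):ℝ)+1)*√(θ*(((M+N:ℕ):ℝ)+1))) =
        (C/(θ*√θ))*(1/((((M+N:ℕ):ℝ)+1)*√(((M+N:ℕ):ℝ)+1))) := by
        rw [Real.sqrt_mul hθ.le]; field_simp
      rw [h4] at h2
      have h5 := h2.trans (mul_le_mul_of_nonneg_left h3 (by positivity))
      have e : ((M+N+1:ℕ):ℝ) = ((M+N:ℕ):ℝ)+1 := by push_cast; ring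
      rw [e]
      have h6 := abs_add_le (∑ m ∈ range (M+N), Ef (θ*((m:ℝ)+1)) - ∑ m ∈ range M, Ef (θ*((m:ℝ)+1)))
        (Ef (θ*(((M+N:ℕ):ℝ)+1)))
      rw [show ∀ a b c : ℝ, a + c - b = a - b + c by intros; ring]
      refine h6.trans ((add_le_add ih h5).trans (le_of_eq ?_))
      ring
  have hlim : Filter.Tendsto (fun N : ℕ => ∑ m ∈ range (M+N), Ef (θ*((m:ℝ)+1))) Filter.atTop (nhds (fE θ)) := by
    have := (Ef_summable hθ).hasSum.tendsto_sum_nat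
    refine this.comp ?_
    exact Filter.tendsto_atTop_mono (f := fun N : ℕ => N) (fun N => by simp) Filter.tendsto_id
  have h := (hlim.sub_const (∑ m ∈ range M, Ef (θ*((m:ℝ)+1)))).abs
  refine le_of_tendsto' h (fun N => (key N).trans ?_)
  have : 0 ≤ 1/√((M+N:ℕ):ℝ) := by positivity
  calc (C/(θ*√θ))*(2*(1/√M - 1/√((M+N:ℕ):ℝ))) ≤ (C/(θ*√θ))*(2*(1/√M)) := by gcongr; linarith
    _ = _ := by field_simp

lemma fE_large : ∃ C : ℝ, 0 < C ∧ ∀ θ : ℝ, 1 ≤ θ → |√θ * fE θ| ≤ C := by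
  obtain ⟨C, hC, hE⟩ := Ef_bound
  obtain ⟨C2, hC2, hT⟩ := fE_tail
  refine ⟨C + C2, by positivity, ?_⟩
  intro θ hθ
  have h := hT θ 1 (by linarith) le_rfl (by simpa using hθ)
  have h2 := hE θ hθ
  have hs : 1 ≤ √θ := by rw [Real.one_le_sqrt]; exact hθ
  simp at h
  have h3 : |fE θ| ≤ (C + C2)/(θ*√θ) := by
    rw [add_div]
    have := abs_add_le (fE θ - Ef θ) (Ef θ)
    rw [sub_add_cancel] at this
    linarith
  rw [abs_mul, abs_of_pos (by linarith)]
  calc √θ * |fE θ| ≤ √θ * ((C+C2)/(θ*√θ)) := by gcongr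
    _ = (C+C2)/θ := by field_simp
    _ ≤ C + C2 := div_le_self (by positivity) hθ

/-- comparing Riemann sums at mesh `θ` and `θ/n` -/
lemma cells (F W : ℝ → ℝ) {θ : ℝ} (hθ : 0 < θ) {n : ℕ} (hn : 0 < n) (M : ℕ)
    (h : ∀ s t, 0 < s → s ≤ t → t ≤ θ*((M:ℝ)+1) → |F t - F s| ≤ W t - W s) :
    |θ * ∑ m ∈ range (M+1), F (θ*((m:ℝ)+1)) - (θ/n) * ∑ j ∈ range (n*(M+1)), F ((θ/n)*((j:ℝ)+1))|
     ≤ θ*(W (θ*((M:ℝ)+1)) - W θ) + ∑ i ∈ range n, (θ/n)*(W θ - W ((θ/n)*((i:ℝ)+1))) := by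
  have hn' : (0:ℝ) < n := by exact_mod_cast hn
  have hδ : 0 < θ/n := by positivity
  have hδn : θ/n*n = θ := by field_simp
  have hcell : ∀ m : ℕ, ∀ i ∈ range n, θ*m + θ/n*((i:ℝ)+1) ≤ θ*((m:ℝ)+1) := by
    intro m i hi
    rw [Finset.mem_range] at hi
    have : (i:ℝ)+1 ≤ n := by exact_mod_cast hi
    have : θ/n*((i:ℝ)+1) ≤ θ/n*n := by gcongr
    rw [hδn] at this
    linarith
  have split : ∀ x : ℝ, θ * x = ∑ i ∈ range n, θ/n * x := by
    intro x; rw [sum_const, card_range, nsmul_eq_mul]; field_simp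
  induction M with
  | zero =>
    simp only [Nat.cast_zero, zero_add, mul_one, sum_range_one]
    rw [split (F θ), mul_sum, ← sum_sub_distrib]
    rw [sub_self, mul_zero, zero_add]
    refine (abs_sum_le_sum_abs _ _).trans (sum_le_sum ?_)
    intro i hi
    have h0 := hcell 0 i hi
    simp at h0
    rw [← mul_sub, abs_mul, abs_of_pos hδ]
    gcongr
    apply h _ _ (by positivity) h0
    simp
  | succ M ih =>
    have ih' := ih (fun s t h0 hst ht => h s t h0 hst (ht.trans (by push_cast; gcongr; linarith)))
    rw [sum_range_succ, show n*(M+1+1) = n*(M+1)+n by ring,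
      sum_range_add (fun j : ℕ => F ((θ/n)*((j:ℝ)+1))) (n*(M+1)) n]
    have step : |θ*F (θ*(((M+1:ℕ):ℝ)+1)) - (θ/n)*∑ i ∈ range n, F ((θ/n)*(((n*(M+1)+i:ℕ):ℝ)+1))|
        ≤ θ*(W (θ*(((M+1:ℕ):ℝ)+1)) - W (θ*((M:ℝ)+1))) := by
      rw [split (F _), mul_sum, ← sum_sub_distrib, split (W _ - W _)]
      refine (abs_sum_le_sum_abs _ _).trans (sum_le_sum ?_)
      intro i hi
      have h0 := hcell (M+1) i hi
      have e : (θ/n)*(((n*(M+1)+i:ℕ):ℝ)+1) = θ*((M+1:ℕ):ℝ) + θ/n*((i:ℝ)+1) := by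
        push_cast; field_simp; ring
      rw [e, ← mul_sub, abs_mul, abs_of_pos hδ]
      have a1 := h _ _ (by positivity) h0 le_rfl
      have a2 := h (θ*((M:ℝ)+1)) (θ*((M+1:ℕ):ℝ) + θ/n*((i:ℝ)+1)) (by positivity)
        (by push_cast; linarith [(by positivity : 0 ≤ θ/n*((i:ℝ)+1))]) h0
      have a3 := (abs_nonneg _).trans a2
      gcongr
      linarith
    have := abs_add_le (θ * ∑ m ∈ range (M+1), F (θ*((m:ℝ)+1)) - (θ/n) * ∑ j ∈ range (n*(M+1)), F ((θ/n)*((j:ℝ)+1)))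
      (θ*F (θ*(((M+1:ℕ):ℝ)+1)) - (θ/n)*∑ i ∈ range n, F ((θ/n)*(((n*(M+1)+i:ℕ):ℝ)+1)))
    have e : ∀ A B C D : ℝ, θ*(A+B) - (θ/n)*(C+D) = (θ*A - (θ/n)*C) + (θ*B-(θ/n)*D) := by intros; ring
    rw [e]
    linarith


lemma mfun_mono {v w : ℝ} (hv : 0 ≤ v) (hvw : v ≤ w) :
    0 ≤ 1/√(v+1) - 1/√(w+1) ∧
    1/√(v+1) - 1/√(w+1) ≤ 2*(√w-√v) - 2*(√(w+1) - √(v+1)) := by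
  have hx : 0 ≤ √v := Real.sqrt_nonneg _
  have hxy : √v ≤ √w := Real.sqrt_le_sqrt hvw
  have hX : 0 < √(v+1) := Real.sqrt_pos.2 (by linarith)
  have hXY : √(v+1) ≤ √(w+1) := Real.sqrt_le_sqrt (by linarith)
  have hxX : √v ≤ √(v+1) := Real.sqrt_le_sqrt (by linarith)
  have hyY : √w ≤ √(w+1) := Real.sqrt_le_sqrt (by linarith)
  have e1 : √v^2 = v := Real.sq_sqrt hv
  have e2 : √(v+1)^2 = v+1 := Real.sq_sqrt (by linarith)
  have e3 : √w^2 = w := Real.sq_sqrt (by linarith)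
  have e4 : √(w+1)^2 = w+1 := Real.sq_sqrt (by linarith)
  refine ⟨sub_nonneg.2 (one_div_le_one_div_of_le hX hXY), ?_⟩
  rcases hvw.eq_or_lt with rfl | hlt
  · simp
  have hy : 0 < √w := Real.sqrt_pos.2 (by linarith)
  set x := √v
  set X := √(v+1)
  set y := √w
  set Y := √(w+1)
  have hY : 0 < Y := by linarith
  have d1 : y - x = (w-v)/(x+y) := by rw [eq_div_iff (by linarith)]; nlinarith
  have d2 : Y - X = (w-v)/(X+Y) := by rw [eq_div_iff (by linarith)]; nlinarith
  have d3 : 1/X - 1/Y = (w-v)/(X+Y)*(1/(X*Y)) := by rw [← d2]; field_simp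
  have d4 : 1/(2*X) ≤ X - x := by
    rw [div_le_iff₀ (by linarith)]; nlinarith
  have d5 : 1/(2*Y) ≤ Y - y := by
    rw [div_le_iff₀ (by linarith)]; nlinarith
  have d6 : 2*(1/(x+y) - 1/(X+Y)) = 2*(X-x+(Y-y))/((x+y)*(X+Y)) := by
    field_simp; ring
  have d7 : 1/((X+Y)*(X*Y)) ≤ 2*(1/(x+y) - 1/(X+Y)) := by
    rw [d6]
    have : 1/((X+Y)*(X*Y)) = 2*(1/(2*X)+1/(2*Y))/((X+Y)*(X+Y)) := by field_simp; ring
    rw [this]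
    gcongr
  rw [d3, d1, d2]
  have := mul_le_mul_of_nonneg_left d7 (show 0 ≤ w - v by linarith)
  calc (w-v)/(X+Y)*(1/(X*Y)) = (w-v)*(1/((X+Y)*(X*Y))) := by field_simp
    _ ≤ _ := this
    _ = _ := by ring

lemma zh_var {s t : ℝ} (hs : 0 ≤ s) (hst : s ≤ t) :
    0 ≤ zh (1+s) - zh (1+t) ∧ zh (1+s) - zh (1+t) ≤ 2*(√t-√s) := by
  have key : ∀ N : ℕ, zh (1+s) - zh (1+t) - (zh (1+s+N) - zh (1+t+N)) ∈
      Set.Icc 0 (2*(√t-√s)) := by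
    intro N
    have h1 := zh_sum (show 0 < 1+s by linarith) N
    have h2 := zh_sum (show 0 < 1+t by linarith) N
    have e : zh (1+s) - zh (1+t) - (zh (1+s+N) - zh (1+t+N)) =
        ∑ n ∈ range N, (1/√(1+s+n) - 1/√(1+t+n)) := by
      rw [sum_sub_distrib]; linarith
    rw [e]
    have b : ∀ N : ℕ, 0 ≤ ∑ n ∈ range N, (1/√(1+s+n) - 1/√(1+t+n)) ∧
        ∑ n ∈ range N, (1/√(1+s+n) - 1/√(1+t+n)) ≤ 2*(√t-√s) - 2*(√(t+N) - √(s+N)) := by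
      intro N
      induction N with
      | zero => simp
      | succ N ih =>
        have := mfun_mono (v := s+N) (w := t+N) (by positivity) (by linarith)
        rw [sum_range_succ]
        have e1 : 1+s+(N:ℝ) = s+N+1 := by ring
        have e2 : 1+t+(N:ℝ) = t+N+1 := by ring
        rw [e1, e2]
        push_cast
        rw [← add_assoc, ← add_assoc]
        constructor <;> linarith [this.1, this.2, ih.1, ih.2]
    refine ⟨(b N).1, (b N).2.trans ?_⟩
    have : √(s+N) ≤ √(t+N) := Real.sqrt_le_sqrt (by linarith)
    linarith
  have hlim : Filter.Tendsto (fun N : ℕ => zh (1+s) - zh (1+t) - (zh (1+s+N) - zh (1+t+N)))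
      Filter.atTop (nhds (zh (1+s) - zh (1+t))) := by
    have h1 := zh_tendsto (show 0 < 1+s by linarith)
    have h2 := zh_tendsto (show 0 < 1+t by linarith)
    have h3 := (h1.sub h2).const_sub (zh (1+s) - zh (1+t))
    simp only [sub_zero] at h3
    refine h3.congr ?_
    intro N; ring
  have := isClosed_Icc.mem_of_tendsto hlim (Filter.Eventually.of_forall key)
  exact this

/-- variation of the smooth part -/
lemma P_var {s t : ℝ} (hs : 0 < s) (hst : s ≤ t) :
    |(zh (1+t) + z0)/√t - (zh (1+s) + z0)/√s| ≤
      (4*√t - (2*|z0| + 4)*(1/√t)) - (4*√s - (2*|z0| + 4)*(1/√s)) := by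
  have h1 := zh_var hs.le hst
  have h2 := zh_var le_rfl hs.le
  simp only [add_zero, Real.sqrt_zero, sub_zero] at h2
  change 0 ≤ z0 - zh (1+s) ∧ z0 - zh (1+s) ≤ 2*√s at h2
  have hx : 0 < √s := Real.sqrt_pos.2 hs
  have hxy : √s ≤ √t := Real.sqrt_le_sqrt hst
  set x := √s
  set y := √t
  have hy : 0 < y := by linarith
  have hr : 0 ≤ 1/x - 1/y := sub_nonneg.2 (one_div_le_one_div_of_le hx hxy)
  have aux : (y-x)/y ≤ (y-x) + (1/x-1/y) := by
    rcases le_total x 1 with hx1 | hx1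
    · have e : 1/x-1/y = (y-x)/y*(1/x) := by field_simp
      have : 1 ≤ 1/x := by rw [le_div_iff₀ hx]; linarith
      have h0 : 0 ≤ (y-x)/y := div_nonneg (by linarith) hy.le
      nlinarith
    · have : (y-x)/y ≤ y - x := div_le_self (by linarith) (by linarith)
      linarith
  have aux2 : x*(1/x-1/y) = (y-x)/y := by field_simp
  have e : (zh (1+t) + z0)/y - (zh (1+s) + z0)/x =
      - (z0*(1/x-1/y)) - zh (1+s)*(1/x-1/y) - (zh (1+s) - zh (1+t))/y := by
    field_simp; ring
  rw [e]
  have b1 : |z0*(1/x-1/y)| ≤ |z0| * (1/x-1/y) := by rw [abs_mul, abs_of_nonneg hr]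
  have b2 : |zh (1+s)*(1/x-1/y)| ≤ |z0| * (1/x-1/y) + 2*((y-x)+(1/x-1/y)) := by
    rw [abs_mul, abs_of_nonneg hr]
    have : |zh (1+s)| ≤ |z0| + 2*x := by
      rw [abs_le]; constructor <;> linarith [le_abs_self z0, neg_abs_le z0]
    calc |zh (1+s)| * (1/x-1/y) ≤ (|z0| + 2*x)*(1/x-1/y) := by gcongr
      _ = |z0| * (1/x-1/y) + 2*(x*(1/x-1/y)) := by ring
      _ ≤ _ := by rw [aux2]; linarith
  have b3 : |(zh (1+s) - zh (1+t))/y| ≤ 2*((y-x)+(1/x-1/y)) := by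
    rw [abs_of_nonneg (div_nonneg h1.1 hy.le)]
    calc (zh (1+s) - zh (1+t))/y ≤ (2*(y-x))/y := by gcongr; exact h1.2
      _ = 2*((y-x)/y) := by ring
      _ ≤ _ := by linarith
  rw [abs_le] at *
  constructor <;> linarith [b1.1,b1.2,b2.1,b2.2,b3.1,b3.2]

noncomputable def pk (k y : ℝ) : ℝ := √(1-k/y)
noncomputable def rk (k y : ℝ) : ℝ := 1/(√k*(√y+√k))

lemma pk_mem {k y : ℝ} (hk : 0 ≤ k) (hy : 0 < y) : 0 ≤ pk k y ∧ pk k y ≤ 1 := by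
  refine ⟨Real.sqrt_nonneg _, ?_⟩
  unfold pk
  rw [Real.sqrt_le_left (by norm_num)]
  have : 0 ≤ k/y := by positivity
  linarith

lemma pk_mono {k s t : ℝ} (hk : 0 ≤ k) (hs : 0 < s) (hst : s ≤ t) : pk k s ≤ pk k t := by
  unfold pk
  apply Real.sqrt_le_sqrt
  gcongr

lemma rk_mem {k y : ℝ} (hk : 0 < k) : 0 ≤ rk k y ∧ rk k y ≤ 1/k := by
  have h1 : 0 < √k := Real.sqrt_pos.2 hk
  have h2 := Real.sqrt_nonneg y
  unfold rk
  refine ⟨by positivity, one_div_le_one_div_of_le hk ?_⟩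
  nlinarith [Real.mul_self_sqrt hk.le]

lemma rk_anti {k s t : ℝ} (hk : 0 < k) (hst : s ≤ t) : rk k t ≤ rk k s := by
  have h1 : 0 < √k := Real.sqrt_pos.2 hk
  have h2 := Real.sqrt_nonneg s
  unfold rk
  gcongr

lemma hk_var {k s t : ℝ} (hk : 0 < k) (hs : 0 < s) (hst : s ≤ t) :
    |pk k t * rk k t - pk k s * rk k s| ≤ (pk k t/k - rk k t) - (pk k s/k - rk k s) := by
  have a1 := pk_mem hk.le hs
  have a2 := pk_mem hk.le (hs.trans_le hst)
  have a3 := pk_mono hk.le hs hst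
  have a4 := rk_mem (y := s) hk
  have a5 := rk_mem (y := t) hk
  have a6 := rk_anti hk hst
  have e : pk k t * rk k t - pk k s * rk k s = rk k s*(pk k t - pk k s) - pk k t*(rk k s - rk k t) := by ring
  have b1 : rk k s*(pk k t - pk k s) ≤ 1/k*(pk k t - pk k s) :=
    mul_le_mul_of_nonneg_right a4.2 (by linarith)
  have b2 : pk k t*(rk k s - rk k t) ≤ 1*(rk k s - rk k t) :=
    mul_le_mul_of_nonneg_right a2.2 (by linarith)
  have b3 : 0 ≤ rk k s*(pk k t - pk k s) := mul_nonneg a4.1 (by linarith)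
  have b4 : 0 ≤ pk k t*(rk k s - rk k t) := mul_nonneg a2.1 (by linarith)
  rw [e, abs_le]
  have e1 : pk k t/k - rk k t - (pk k s/k - rk k s) = 1/k*(pk k t - pk k s) + (rk k s - rk k t) := by ring
  rw [e1]
  constructor <;> linarith

lemma hk_eq {k y : ℝ} (hk : 0 < k) (hky : k < y) :
    1/(√y*√(y-k)) - 1/(√k*√(y-k)) = - (pk k y * rk k y) := by
  have hy : 0 < y := by linarith
  have h1 : 0 < √k := Real.sqrt_pos.2 hk
  have h2 : 0 < √y := Real.sqrt_pos.2 hy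
  have h3 : 0 < √(y-k) := Real.sqrt_pos.2 (by linarith)
  have e1 := Real.mul_self_sqrt hk.le
  have e2 := Real.mul_self_sqrt hy.le
  have e3 := Real.mul_self_sqrt (show 0 ≤ y-k by linarith)
  have e4 : pk k y = √(y-k)/√y := by
    unfold pk
    rw [← Real.sqrt_div (by linarith)]
    congr 1; field_simp
  rw [e4]
  unfold rk
  field_simp
  nlinarith

lemma Ef_decomp {y : ℝ} (hy : 0 < y) {L : ℕ} (hL : y ≤ L) :
    Ef y = 1/y + (zh (1+y) + z0)/√y + π - ∑ k ∈ range L, pk ((k:ℝ)+1) y * rk ((k:ℝ)+1) y := by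
  obtain ⟨n, x, h0, h1, rfl, hc⟩ := exists_rep hy
  have hs : 0 < √(x+n) := Real.sqrt_pos.2 hy
  have hnL : n ≤ L := by
    have : (n:ℝ) < L := by linarith
    exact_mod_cast this.le
  have e1 : ∑ k ∈ range L, pk ((k:ℝ)+1) (x+n) * rk ((k:ℝ)+1) (x+n) =
      ∑ k ∈ range n, pk ((k:ℝ)+1) (x+n) * rk ((k:ℝ)+1) (x+n) := by
    symm
    apply sum_subset (range_subset_range.2 hnL)
    intro k _ hk
    rw [Finset.mem_range, not_lt] at hk
    have hk' : (n:ℝ) ≤ k := by exact_mod_cast hk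
    have : pk ((k:ℝ)+1) (x+n) = 0 := by
      unfold pk
      apply Real.sqrt_eq_zero_of_nonpos
      rw [sub_nonpos, le_div_iff₀ hy]; linarith
    rw [this, zero_mul]
  have e2 : Zp (x+n) = ∑ k ∈ range n, 1/√(x+n-((k:ℝ)+1)) + 1/√(x+n) + zh (1+(x+n)) := by
    rw [Zp_sum h0 h1, zh_rec hy, ← sum_range_reflect]
    have : ∑ j ∈ range n, 1/√(x+((n-1-j:ℕ):ℝ)) = ∑ k ∈ range n, 1/√(x+n-((k:ℝ)+1)) := by
      apply sum_congr rfl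
      intro j hj
      rw [Finset.mem_range] at hj
      have h3 : ((n-1-j:ℕ):ℝ) + 1 + j = n := by exact_mod_cast (by omega : n-1-j+1+j = n)
      congr 2
      linarith
    rw [this, add_comm (x+(n:ℝ)) 1]; ring
  have e3 : Bf (x+n) = ∑ k ∈ range n, 1/(√((k:ℝ)+1)*√(x+n-((k:ℝ)+1))) := by
    unfold Bf
    rw [hc, sum_range_succ']
    simp
  have e4 : (∑ k ∈ range n, 1/√(x+n-((k:ℝ)+1)))/√(x+n) - Bf (x+n) =
      - ∑ k ∈ range n, pk ((k:ℝ)+1) (x+n) * rk ((k:ℝ)+1) (x+n) := by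
    rw [e3, sum_div, ← sum_sub_distrib, ← sum_neg_distrib]
    apply sum_congr rfl
    intro k hk
    rw [Finset.mem_range] at hk
    have hk' : (k:ℝ)+1 ≤ n := by exact_mod_cast hk
    rw [← hk_eq (by positivity) (by linarith)]
    rw [div_div, mul_comm]
  have e5 : 1/√(x+n)/√(x+n) = 1/(x+n) := by
    rw [div_div, Real.mul_self_sqrt hy.le]
  rw [e1]
  unfold Ef
  rw [e2, add_div, add_div, e5, add_div]
  linarith


lemma harm_bound {N : ℕ} (hN : 1 ≤ N) :
    |∑ k ∈ range N, 1/((k:ℝ)+1) - Real.log N - Real.eulerMascheroniConstant| ≤ 1/N := by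
  have hN' : (0:ℝ) < N := by exact_mod_cast hN
  have h1 := Real.eulerMascheroniSeq_lt_eulerMascheroniConstant N
  have h2 := Real.eulerMascheroniConstant_lt_eulerMascheroniSeq' N
  unfold Real.eulerMascheroniSeq at h1
  unfold Real.eulerMascheroniSeq' at h2
  rw [if_neg (by omega)] at h2
  have e : ((harmonic N : ℚ):ℝ) = ∑ k ∈ range N, 1/((k:ℝ)+1) := by
    unfold harmonic; push_cast; simp
  rw [e] at h1 h2
  have h3 : Real.log (N+1) - Real.log N ≤ 1/N := by
    rw [← Real.log_div (by positivity) (by positivity)]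
    have := Real.log_le_sub_one_of_pos (show (0:ℝ) < (N+1)/N by positivity)
    have e : ((N:ℝ)+1)/N - 1 = 1/N := by field_simp; ring
    linarith
  have : (0:ℝ) < 1/N := by positivity
  rw [abs_le]; constructor <;> linarith

lemma log_le_two_sqrt {x : ℝ} (hx : 0 < x) : Real.log x ≤ 2*√x := by
  have h := Real.log_le_sub_one_of_pos (Real.sqrt_pos.2 hx)
  have e : Real.log x = 2*Real.log √x := by
    rw [Real.log_sqrt hx.le]; ring
  linarith

lemma sum_inv_sqrt_le (n : ℕ) : ∑ i ∈ range n, 1/√((i:ℝ)+1) ≤ 2*√n := by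
  induction n with
  | zero => simp
  | succ n ih =>
    rw [sum_range_succ]
    have h0 : (0:ℝ) ≤ n := by positivity
    have hx := Real.sqrt_nonneg (n:ℝ)
    have hX : 0 < √((n:ℝ)+1) := Real.sqrt_pos.2 (by linarith)
    have e1 := Real.mul_self_sqrt h0
    have e2 := Real.mul_self_sqrt (show 0 ≤ (n:ℝ)+1 by linarith)
    have hxX : √(n:ℝ) ≤ √((n:ℝ)+1) := Real.sqrt_le_sqrt (by linarith)
    have : 1/√((n:ℝ)+1) ≤ 2*(√((n:ℝ)+1) - √n) := by
      rw [div_le_iff₀ hX]; nlinarith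
    push_cast
    linarith

set_option maxHeartbeats 4000000 in
lemma fE_scale : ∃ C : ℝ, 0 < C ∧ ∀ (θ : ℝ) (n : ℕ), 0 < θ → θ ≤ 1 → 0 < n →
    |θ * fE θ - (θ/n) * fE (θ/n) + Real.log n| ≤ C * √θ := by
  obtain ⟨C, hC, hT⟩ := fE_tail
  refine ⟨3*(2*|z0|+4) + 34 + 2*C, by positivity, ?_⟩
  intro θ n hθ hθ1 hn
  have hn' : (1:ℝ) ≤ n := by exact_mod_cast hn
  obtain ⟨B, hB⟩ : ∃ B, B = 2*|z0|+4 := ⟨_, rfl⟩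
  have hB0 : 0 < B := by rw [hB]; positivity
  rw [← hB]
  have hs : 0 < √θ := Real.sqrt_pos.2 hθ
  have hs1 : √θ ≤ 1 := by rw [Real.sqrt_le_left (by norm_num)]; linarith
  have es := Real.mul_self_sqrt hθ.le
  obtain ⟨M, hM⟩ : ∃ M, ⌈1/θ^2⌉₊ = M+1 := by
    have : 0 < ⌈1/θ^2⌉₊ := Nat.ceil_pos.2 (by positivity)
    exact ⟨_, (Nat.succ_pred_eq_of_pos this).symm⟩
  have hM1 : 1/θ^2 ≤ (M:ℝ)+1 := by
    have := Nat.le_ceil (1/θ^2); rw [hM] at this; exact_mod_cast this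
  have hM2 : (M:ℝ)+1 ≤ 1/θ^2 + 1 := by
    have := (Nat.ceil_lt_add_one (show 0 ≤ 1/θ^2 by positivity)).le
    rw [hM] at this; exact_mod_cast this
  obtain ⟨Y, hY⟩ : ∃ Y, Y = θ*((M:ℝ)+1) := ⟨_, rfl⟩
  have hY1 : 1/θ ≤ Y := by
    rw [hY]
    calc 1/θ = θ*(1/θ^2) := by field_simp
      _ ≤ _ := by gcongr
  have hi1 : 1 ≤ 1/θ := by rw [le_div_iff₀ hθ]; linarith
  have hY2 : Y ≤ 2/θ := by
    rw [hY]
    calc θ*((M:ℝ)+1) ≤ θ*(1/θ^2+1) := by gcongr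
      _ = 1/θ + θ := by field_simp
      _ ≤ 1/θ + 1/θ := by linarith
      _ = 2/θ := by ring
  have hYp : 0 < Y := by linarith
  have hsY : 1/√θ ≤ √Y := by
    have := Real.sqrt_le_sqrt hY1
    rwa [Real.sqrt_div (by norm_num), Real.sqrt_one] at this
  have hsY2 : √Y ≤ 2/√θ := by
    rw [Real.sqrt_le_left (by positivity), div_pow, Real.sq_sqrt hθ.le]
    refine hY2.trans ?_
    gcongr; norm_num
  obtain ⟨L, hL⟩ : ∃ L, L = ⌈Y⌉₊ := ⟨_, rfl⟩
  have hL1 : Y ≤ L := by rw [hL]; exact Nat.le_ceil _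
  have hL2 : (L:ℝ) ≤ 3/θ := by
    have := (Nat.ceil_lt_add_one hYp.le).le
    rw [← hL] at this
    have e : 3/θ = 2/θ + 1/θ := by ring
    linarith
  have hLp : (0:ℝ) < L := by linarith
  have hH : ∑ k ∈ range L, 1/((k:ℝ)+1) ≤ 5/√θ := by
    have h := harmonic_le_one_add_log L
    have e : ((harmonic L : ℚ):ℝ) = ∑ k ∈ range L, 1/((k:ℝ)+1) := by
      unfold harmonic; push_cast; simp
    rw [e] at h
    have h1 := log_le_two_sqrt hLp
    have h2 : √(L:ℝ) ≤ 2/√θ := by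
      rw [Real.sqrt_le_left (by positivity), div_pow, Real.sq_sqrt hθ.le]
      refine hL2.trans ?_
      gcongr; norm_num
    have h3 : 1 ≤ 1/√θ := by rw [le_div_iff₀ hs]; linarith
    have e5 : 5/√θ = 5*(1/√θ) := by ring
    have e2 : 2/√θ = 2*(1/√θ) := by ring
    rw [e5]; rw [e2] at h2
    linarith
  set H := ∑ k ∈ range L, 1/((k:ℝ)+1) with hHdef
  obtain ⟨W, hW⟩ : ∃ W : ℝ → ℝ, W = fun y => (4*√y - B*(1/√y)) +
    ∑ k ∈ range L, (pk ((k:ℝ)+1) y/((k:ℝ)+1) - rk ((k:ℝ)+1) y) := ⟨_, rfl⟩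
  have hWd : ∀ s t, 0 < s → s ≤ t → W t - W s ≤ 4*√t + B*(1/√s) + 2*H := by
    intro s t h0 hst
    rw [hW]
    have h1 : ∑ k ∈ range L, (pk ((k:ℝ)+1) t/((k:ℝ)+1) - rk ((k:ℝ)+1) t) -
       ∑ k ∈ range L, (pk ((k:ℝ)+1) s/((k:ℝ)+1) - rk ((k:ℝ)+1) s) ≤ 2*H := by
      rw [hHdef, mul_sum, ← sum_sub_distrib]
      apply sum_le_sum
      intro k _
      have hk : (0:ℝ) < (k:ℝ)+1 := by positivity
      have a1 := (pk_mem hk.le (h0.trans_le hst)).2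
      have a2 := (pk_mem hk.le h0).1
      have a3 := (rk_mem (y := t) hk).1
      have a4 := (rk_mem (y := s) hk).2
      have a5 : pk ((k:ℝ)+1) t/((k:ℝ)+1) ≤ 1/((k:ℝ)+1) := by gcongr
      have a6 : 0 ≤ pk ((k:ℝ)+1) s/((k:ℝ)+1) := by positivity
      linarith
    have h2 := Real.sqrt_nonneg s
    have h3 : 0 ≤ B*(1/√t) := by positivity
    simp only
    linarith
  have hF : ∀ s t, 0 < s → s ≤ t → t ≤ θ*((M:ℝ)+1) →
      |(Ef t - 1/t) - (Ef s - 1/s)| ≤ W t - W s := by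
    intro s t h0 hst ht
    rw [← hY] at ht
    rw [Ef_decomp h0 (L := L) (by linarith), Ef_decomp (h0.trans_le hst) (L := L) (by linarith)]
    have h1 := P_var h0 hst
    rw [← hB] at h1
    have h2 : |∑ k ∈ range L, pk ((k:ℝ)+1) t * rk ((k:ℝ)+1) t - ∑ k ∈ range L, pk ((k:ℝ)+1) s * rk ((k:ℝ)+1) s|
      ≤ ∑ k ∈ range L, (pk ((k:ℝ)+1) t/((k:ℝ)+1) - rk ((k:ℝ)+1) t) -
       ∑ k ∈ range L, (pk ((k:ℝ)+1) s/((k:ℝ)+1) - rk ((k:ℝ)+1) s) := by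
      rw [← sum_sub_distrib, ← sum_sub_distrib]
      refine (abs_sum_le_sum_abs _ _).trans (sum_le_sum ?_)
      intro k _
      exact hk_var (by positivity) h0 hst
    rw [hW]
    simp only
    rw [abs_le] at *
    constructor <;> linarith [h1.1, h1.2, h2.1, h2.2]
  have hcell := cells (fun y => Ef y - 1/y) W hθ hn M hF
  simp only [sum_sub_distrib] at hcell
  have eH1 : θ * ∑ m ∈ range (M+1), 1/(θ*((m:ℝ)+1)) = ∑ m ∈ range (M+1), 1/((m:ℝ)+1) := by
    rw [mul_sum]; apply sum_congr rfl; intro m _; field_simp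
  have eH2 : (θ/n) * ∑ m ∈ range (n*(M+1)), 1/((θ/n)*((m:ℝ)+1)) = ∑ m ∈ range (n*(M+1)), 1/((m:ℝ)+1) := by
    rw [mul_sum]; apply sum_congr rfl; intro m _; field_simp
  rw [mul_sub, mul_sub, eH1, eH2] at hcell
  have g1 := harm_bound (N := M+1) (by omega)
  have g2 := harm_bound (N := n*(M+1)) (Nat.mul_pos hn (by omega))
  have hMp : (0:ℝ) < (M:ℝ)+1 := by positivity
  have elog : Real.log ((n*(M+1):ℕ):ℝ) = Real.log n + Real.log ((M+1:ℕ):ℝ) := by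
    push_cast
    rw [Real.log_mul (by positivity) (by positivity)]
  rw [elog] at g2
  have hMi : 1/((M:ℝ)+1) ≤ √θ := by
    calc 1/((M:ℝ)+1) ≤ 1/(1/θ^2) := by gcongr
      _ = θ^2 := by field_simp
      _ ≤ √θ := by nlinarith only [mul_pos hs hs, hs, hs1, es, hθ, hθ1]
  have g1' : 1/((M+1:ℕ):ℝ) ≤ √θ := by push_cast; exact hMi
  have g2' : 1/((n*(M+1):ℕ):ℝ) ≤ √θ := by
    refine le_trans ?_ hMi
    push_cast
    gcongr
    exact le_mul_of_one_le_left hMp.le hn'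
  have hYs : C/√Y ≤ C*√θ := by
    rw [div_le_iff₀ (by positivity), mul_assoc]
    have : 1 ≤ √θ*√Y := by
      calc 1 = √θ*(1/√θ) := by field_simp
        _ ≤ _ := by gcongr
    exact le_mul_of_one_le_right hC.le this
  have t1 : |θ*fE θ - θ*∑ m ∈ range (M+1), Ef (θ*((m:ℝ)+1))| ≤ C*√θ := by
    have h := hT θ (M+1) hθ (by omega) (by push_cast; rw [← hY]; linarith)
    rw [← mul_sub, abs_mul, abs_of_pos hθ]
    refine le_trans ?_ hYs
    calc _ ≤ θ*(C/(θ*√θ*√((M+1:ℕ):ℝ))) := by gcongr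
      _ = C/√Y := by
        rw [hY, Real.sqrt_mul hθ.le]
        have : 0 < √((M:ℝ)+1) := Real.sqrt_pos.2 hMp
        push_cast
        field_simp
  have hδ : 0 < θ/n := by positivity
  have t2 : |(θ/n)*fE (θ/n) - (θ/n)*∑ m ∈ range (n*(M+1)), Ef ((θ/n)*((m:ℝ)+1))| ≤ C*√θ := by
    have h := hT (θ/n) (n*(M+1)) hδ (Nat.mul_pos hn (by omega)) (by
      push_cast
      have : θ/n*(n*((M:ℝ)+1)) = Y := by rw [hY]; field_simp
      rw [this]; linarith)
    rw [← mul_sub, abs_mul, abs_of_pos hδ]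
    refine le_trans ?_ hYs
    calc _ ≤ (θ/n)*(C/((θ/n)*√(θ/n)*√((n*(M+1):ℕ):ℝ))) := by gcongr
      _ = C/(√(θ/n)*√((n*(M+1):ℕ):ℝ)) := by
        have : 0 < √(θ/n) := Real.sqrt_pos.2 hδ
        have : 0 < √((n*(M+1):ℕ):ℝ) := Real.sqrt_pos.2 (by push_cast; positivity)
        field_simp
      _ = C/√Y := by
        rw [← Real.sqrt_mul hδ.le]
        congr 2
        rw [hY]; push_cast; field_simp
  have c1 : θ*(W (θ*((M:ℝ)+1)) - W θ) ≤ (18+B)*√θ := by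
    have h := hWd θ Y hθ (by linarith only [hθ1, hi1, hY1])
    rw [← hY]
    have e : θ*(1/√θ) = √θ := by rw [mul_one_div, Real.div_sqrt]
    calc θ*(W Y - W θ) ≤ θ*(4*(2/√θ) + B*(1/√θ) + 2*(5/√θ)) := by
          gcongr; linarith
      _ = (18+B)*(θ*(1/√θ)) := by ring
      _ = _ := by rw [e]
  have c2 : ∑ i ∈ range n, (θ/n)*(W θ - W ((θ/n)*((i:ℝ)+1))) ≤ (14+2*B)*√θ := by
    have b : ∀ i ∈ range n, (θ/n)*(W θ - W ((θ/n)*((i:ℝ)+1))) ≤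
        (θ/n)*(4 + 10*(1/√θ)) + B*√(θ/n)*(1/√((i:ℝ)+1)) := by
      intro i hi
      rw [Finset.mem_range] at hi
      have hi' : (i:ℝ)+1 ≤ n := by exact_mod_cast hi
      have h := hWd ((θ/n)*((i:ℝ)+1)) θ (by positivity) (by
        calc (θ/n)*((i:ℝ)+1) ≤ (θ/n)*n := by gcongr
          _ = θ := by field_simp)
      rw [Real.sqrt_mul hδ.le] at h
      have hsd : 0 < √(θ/n) := Real.sqrt_pos.2 hδ
      have hsi : 0 < √((i:ℝ)+1) := Real.sqrt_pos.2 (by positivity)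
      have e : √(θ/n)*√(θ/n) = θ/n := Real.mul_self_sqrt hδ.le
      calc (θ/n)*(W θ - W ((θ/n)*((i:ℝ)+1))) ≤
          (θ/n)*(4*1 + B*(1/(√(θ/n)*√((i:ℝ)+1))) + 2*(5/√θ)) := by gcongr; linarith
        _ = (θ/n)*(4 + 10*(1/√θ)) + B*((θ/n)/√(θ/n))*(1/√((i:ℝ)+1)) := by
          field_simp; ring
        _ = _ := by rw [Real.div_sqrt]
    refine (sum_le_sum b).trans ?_
    rw [sum_add_distrib, sum_const, card_range, nsmul_eq_mul, ← mul_sum]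
    have h := sum_inv_sqrt_le n
    have e : θ*(1/√θ) = √θ := by rw [mul_one_div, Real.div_sqrt]
    have e1 : (n:ℝ)*((θ/n)*(4 + 10*(1/√θ))) = 4*θ + 10*(θ*(1/√θ)) := by field_simp; try ring
    rw [e1, e]
    have e2 : √(θ/n)*√n = √θ := by rw [← Real.sqrt_mul hδ.le]; congr 1; field_simp
    have : B*√(θ/n)*∑ i ∈ range n, 1/√((i:ℝ)+1) ≤ B*√(θ/n)*(2*√n) := by gcongr
    have e3 : B*√(θ/n)*(2*√n) = 2*B*√θ := by rw [← e2]; ring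
    have hle : θ ≤ √θ := by nlinarith only [hs, hs1, es]
    linarith only [hle, this, e3]
  rw [abs_le] at g1 g2 t1 t2 hcell ⊢
  obtain ⟨g11, g12⟩ := g1
  obtain ⟨g21, g22⟩ := g2
  obtain ⟨t11, t12⟩ := t1
  obtain ⟨t21, t22⟩ := t2
  obtain ⟨h1, h2⟩ := hcell
  constructor
  · linarith only [g11, g12, g21, g22, t11, t12, t21, t22, h1, h2, c1, c2, g1', g2']
  · linarith only [g11, g12, g21, g22, t11, t12, t21, t22, h1, h2, c1, c2, g1', g2']


lemma riem_lim (f F : ℝ → ℝ) (h1 : ∀ s t, 0 ≤ s → s < t → (t-s)*f t ≤ F t - F s)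
    (h2 : ∀ s t, 0 < s → s < t → F t - F s ≤ (t-s)*f s)
    (c0 : ContinuousWithinAt F (Set.Ici 0) 0) (c1 : ContinuousAt F 1) :
    Filter.Tendsto (fun Q : ℕ => (1/(Q:ℝ)) * ∑ h ∈ range Q, f (((h:ℝ)+1)/Q))
      Filter.atTop (nhds (F 1 - F 0)) := by
  have hinv : Filter.Tendsto (fun Q : ℕ => 1/(Q:ℝ)) Filter.atTop (nhds 0) :=
    tendsto_one_div_atTop_nhds_zero_nat
  have l1 : Filter.Tendsto (fun Q : ℕ => F (1 + 1/(Q:ℝ))) Filter.atTop (nhds (F 1)) := by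
    apply c1.tendsto.comp
    simpa using hinv.const_add (1:ℝ)
  have l0 : Filter.Tendsto (fun Q : ℕ => F (1/(Q:ℝ))) Filter.atTop (nhds (F 0)) := by
    apply c0.tendsto.comp
    apply tendsto_nhdsWithin_iff.2
    refine ⟨hinv, Filter.Eventually.of_forall fun Q => ?_⟩
    simp only [Set.mem_Ici]; positivity
  refine tendsto_of_tendsto_of_tendsto_of_le_of_le' (l1.sub l0) tendsto_const_nhds ?_ ?_
  · filter_upwards [Filter.eventually_gt_atTop 0] with Q hQ
    have hQ' : (0:ℝ) < Q := by exact_mod_cast hQ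
    rw [mul_sum]
    have : F (1+1/(Q:ℝ)) - F (1/(Q:ℝ)) = ∑ h ∈ range Q, (F (((h+1:ℕ):ℝ)/Q + 1/Q) - F ((h:ℝ)/Q + 1/Q)) := by
      rw [Finset.sum_range_sub (fun h : ℕ => F ((h:ℝ)/Q + 1/Q))]
      simp [hQ'.ne']
    rw [this]
    apply sum_le_sum
    intro h _
    have e : ((h:ℝ)+1)/Q = (h:ℝ)/Q + 1/Q := by ring
    have := h2 (((h:ℝ)+1)/Q) (((h:ℝ)+1)/Q + 1/Q) (by positivity) (by simp [hQ])
    push_cast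
    rw [← e]
    simpa using this
  · filter_upwards [Filter.eventually_gt_atTop 0] with Q hQ
    have hQ' : (0:ℝ) < Q := by exact_mod_cast hQ
    rw [mul_sum]
    have : F 1 - F 0 = ∑ h ∈ range Q, (F (((h+1:ℕ):ℝ)/Q) - F ((h:ℝ)/Q)) := by
      rw [Finset.sum_range_sub (fun h : ℕ => F ((h:ℝ)/Q))]
      simp [hQ'.ne']
    rw [this]
    apply sum_le_sum
    intro h _
    have e : ((h:ℝ)+1)/Q - (h:ℝ)/Q = 1/Q := by ring
    have := h1 ((h:ℝ)/Q) (((h:ℝ)+1)/Q) (by positivity) (by gcongr; linarith)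
    push_cast
    rwa [e] at this

lemma riem_lin (n : ℕ) :
    Filter.Tendsto (fun Q : ℕ => (1/(Q:ℝ)) * ∑ h ∈ range Q, 1/√(((h:ℝ)+1)/Q + n))
      Filter.atTop (nhds (2*√((n:ℝ)+1) - 2*√n)) := by
  have := riem_lim (fun x => 1/√(x+n)) (fun x => 2*√(x+n)) ?_ ?_ ?_ ?_
  · simpa [add_comm] using this
  · intro s t h0 hst
    have hn : (0:ℝ) ≤ n := by positivity
    have ht : 0 < √(t+n) := Real.sqrt_pos.2 (by linarith)
    have e1 := Real.mul_self_sqrt (show 0 ≤ t+n by linarith)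
    have e2 := Real.mul_self_sqrt (show 0 ≤ s+n by linarith)
    have hs := Real.sqrt_nonneg (s+n)
    rw [mul_one_div, div_le_iff₀ ht]
    nlinarith [sq_nonneg (√(t+n) - √(s+n))]
  · intro s t h0 hst
    have hn : (0:ℝ) ≤ n := by positivity
    have hs : 0 < √(s+n) := Real.sqrt_pos.2 (by linarith)
    have e1 := Real.mul_self_sqrt (show 0 ≤ t+n by linarith)
    have e2 := Real.mul_self_sqrt (show 0 ≤ s+n by linarith)
    rw [mul_one_div, le_div_iff₀ hs]
    nlinarith [sq_nonneg (√(t+n) - √(s+n))]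
  · fun_prop
  · fun_prop

lemma pair_aux {p r p' r' d : ℝ} (hp : 0 < p) (hr : 0 < r) (hp' : 0 ≤ p') (hr' : 0 ≤ r')
    (hpr : 0 < p' + r') (hd : 0 ≤ d) (e1 : p*p - p'*p' = d) (e2 : r*r - r'*r' = d) :
    d/(p*r) ≤ 2*Real.log (p+r) - 2*Real.log (p'+r') := by
  have hl := Real.one_sub_inv_le_log_of_pos (show 0 < (p+r)/(p'+r') by positivity)
  rw [Real.log_div (by positivity) (by positivity), inv_div] at hl
  have a1 : d/(2*p) ≤ p - p' := by
    rw [div_le_iff₀ (by positivity)]; nlinarith [sq_nonneg (p-p')]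
  have a2 : d/(2*r) ≤ r - r' := by
    rw [div_le_iff₀ (by positivity)]; nlinarith [sq_nonneg (r-r')]
  have e : d/(p*r) = 2*((d/(2*p) + d/(2*r))/(p+r)) := by field_simp; ring
  have e' : 1 - (p'+r')/(p+r) = ((p-p') + (r-r'))/(p+r) := by field_simp; ring
  have : (d/(2*p) + d/(2*r))/(p+r) ≤ ((p-p') + (r-r'))/(p+r) := by gcongr
  rw [e]; linarith

lemma pair_aux2 {p r p' r' d : ℝ} (hp : 0 < p) (hr : 0 < r) (hp' : 0 < p') (hr' : 0 < r')
    (e1 : p*p - p'*p' = d) (e2 : r*r - r'*r' = d) :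
    2*Real.log (p+r) - 2*Real.log (p'+r') ≤ d/(p'*r') := by
  have hl := Real.log_le_sub_one_of_pos (show 0 < (p+r)/(p'+r') by positivity)
  rw [Real.log_div (by positivity) (by positivity)] at hl
  have a1 : p - p' ≤ d/(2*p') := by
    rw [le_div_iff₀ (by positivity)]; nlinarith [sq_nonneg (p-p')]
  have a2 : r - r' ≤ d/(2*r') := by
    rw [le_div_iff₀ (by positivity)]; nlinarith [sq_nonneg (r-r')]
  have e : d/(p'*r') = 2*((d/(2*p') + d/(2*r'))/(p'+r')) := by field_simp; ring
  have e' : (p+r)/(p'+r') - 1 = ((p-p') + (r-r'))/(p'+r') := by field_simp; ring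
  have : ((p-p') + (r-r'))/(p'+r') ≤ (d/(2*p') + d/(2*r'))/(p'+r') := by gcongr
  rw [e]; linarith

lemma riem_pair (n m : ℕ) (hnm : 0 < n + m) :
    Filter.Tendsto (fun Q : ℕ => (1/(Q:ℝ)) * ∑ h ∈ range Q,
        1/√(((h:ℝ)+1)/Q + n) * (1/√(((h:ℝ)+1)/Q + m)))
      Filter.atTop (nhds (2*Real.log (√((n:ℝ)+1)+√((m:ℝ)+1)) - 2*Real.log (√n + √m))) := by
  have hn : (0:ℝ) ≤ n := by positivity
  have hm : (0:ℝ) ≤ m := by positivity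
  have hnm' : (0:ℝ) < (n:ℝ) + m := by exact_mod_cast hnm
  have hpos : ∀ s : ℝ, 0 ≤ s → 0 < √(s+n) + √(s+m) := by
    intro s hs
    by_contra hcon
    have h1 : √(s+n) = 0 := by linarith [Real.sqrt_nonneg (s+n), Real.sqrt_nonneg (s+m)]
    have h2 : √(s+m) = 0 := by linarith [Real.sqrt_nonneg (s+n), Real.sqrt_nonneg (s+m)]
    rw [Real.sqrt_eq_zero (by linarith)] at h1 h2
    linarith
  have := riem_lim (fun x => 1/√(x+n)*(1/√(x+m))) (fun x => 2*Real.log (√(x+n) + √(x+m))) ?_ ?_ ?_ ?_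
  · simpa [add_comm] using this
  · intro s t h0 hst
    have := pair_aux (p := √(t+n)) (r := √(t+m)) (p' := √(s+n)) (r' := √(s+m)) (d := t-s)
      (Real.sqrt_pos.2 (by linarith)) (Real.sqrt_pos.2 (by linarith)) (Real.sqrt_nonneg _)
      (Real.sqrt_nonneg _) (hpos s h0) (by linarith)
      (by rw [Real.mul_self_sqrt (by linarith), Real.mul_self_sqrt (by linarith)]; ring)
      (by rw [Real.mul_self_sqrt (by linarith), Real.mul_self_sqrt (by linarith)]; ring)
    refine le_trans (le_of_eq ?_) this
    ring
  · intro s t h0 hst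
    have := pair_aux2 (p := √(t+n)) (r := √(t+m)) (p' := √(s+n)) (r' := √(s+m)) (d := t-s)
      (Real.sqrt_pos.2 (by linarith)) (Real.sqrt_pos.2 (by linarith)) (Real.sqrt_pos.2 (by linarith))
      (Real.sqrt_pos.2 (by linarith))
      (by rw [Real.mul_self_sqrt (by linarith), Real.mul_self_sqrt (by linarith)]; ring)
      (by rw [Real.mul_self_sqrt (by linarith), Real.mul_self_sqrt (by linarith)]; ring)
    refine this.trans (le_of_eq ?_)
    ring
  · apply ContinuousAt.continuousWithinAt
    have h := (hpos 0 le_rfl).ne'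
    fun_prop (disch := exact h)
  · have h := (hpos 1 zero_le_one).ne'
    fun_prop (disch := exact h)

/-- trapezoid-type sum -/
lemma log_cubic {x : ℝ} (h0 : 0 ≤ x) (h1 : x ≤ 1/2) :
    |Real.log (1+x) - x + x^2/2| ≤ 2*x^3 := by
  have h := Real.abs_log_sub_add_sum_range_le (x := -x) (by rw [abs_neg, abs_of_nonneg h0]; linarith) 2
  rw [abs_neg, abs_of_nonneg h0] at h
  simp only [sum_range_succ, sum_range_zero] at h
  have e : |Real.log (1+x) - x + x^2/2| = |0 + (-x) ^ (0 + 1) / (((0:ℕ):ℝ) + 1) + (-x) ^ (1 + 1) / (((1:ℕ):ℝ) + 1) + Real.log (1 - -x)| := by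
    congr 1; push_cast; rw [sub_neg_eq_add]; ring
  rw [e]
  refine h.trans ?_
  rw [div_le_iff₀ (by linarith)]
  have : 0 ≤ x^3 := by positivity
  have e3 : x^(2+1) = x^3 := rfl
  rw [e3]
  nlinarith [mul_nonneg this (show 0 ≤ 1/2 - x by linarith)]

lemma trap_abs {R B e : ℝ} (hR : 0 < R) (hRB : R ≤ B) (hB : B ≤ 2*R) (he : 0 ≤ e) (he2 : 2*e ≤ R) :
    |R*((B+e+B)*(Real.log (B+e) - Real.log B) - 2*e) -
      1/2*(((B+e)^2+B^2)*(Real.log (B+e) - Real.log B) - ((B+e)^2-B^2))| ≤ 36*e^3/R := by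
  have hB0 : 0 < B := by linarith
  obtain ⟨x, hx⟩ : ∃ x, x = e/B := ⟨_, rfl⟩
  have hex : e = x*B := by rw [hx]; field_simp
  have hx0 : 0 ≤ x := by rw [hx]; positivity
  have hx1 : x ≤ 1/2 := by rw [hx, div_le_iff₀ hB0]; linarith
  have hl := log_cubic hx0 hx1
  have e1 : Real.log (B+e) - Real.log B = Real.log (1+x) := by
    rw [← Real.log_div (by positivity) (by positivity)]; congr 1; rw [hx]; field_simp
  rw [e1]
  obtain ⟨η, hη⟩ : ∃ η, η = Real.log (1+x) - x + x^2/2 := ⟨_, rfl⟩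
  rw [← hη] at hl
  have e2 : Real.log (1+x) = x - x^2/2 + η := by rw [hη]; ring
  rw [e2, hex]
  have e3 : R*((B+x*B+B)*(x - x^2/2+η) - 2*(x*B)) -
      1/2*(((B+x*B)^2+B^2)*(x - x^2/2+η) - ((B+x*B)^2-B^2)) =
      R*B*((2+x)*η - x^3/2) - B^2/2*((2+2*x+x^2)*η - x^4/2) := by ring
  rw [e3]
  have hx3 : 0 ≤ x^3 := by positivity
  have b1 : |(2+x)*η - x^3/2| ≤ 7*x^3 := by
    have : |(2+x)*η| ≤ 3*(2*x^3) := by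
      rw [abs_mul, abs_of_nonneg (by linarith)]; gcongr; linarith
    rw [abs_le] at *
    constructor <;> linarith
  have b2 : |(2+2*x+x^2)*η - x^4/2| ≤ 11*x^3 := by
    have : |(2+2*x+x^2)*η| ≤ 4*(2*x^3) := by
      rw [abs_mul, abs_of_nonneg (by positivity)]; gcongr; nlinarith
    have h4 : x^4 ≤ x^3 := by
      have : x^4 = x^3*x := by ring
      rw [this]; nlinarith
    have h4' : 0 ≤ x^4 := by positivity
    rw [abs_le] at *
    constructor <;> linarith
  have c1 : |R*B*((2+x)*η - x^3/2)| ≤ 14*R^2*x^3 := by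
    rw [abs_mul, abs_of_pos (by positivity)]
    calc _ ≤ R*(2*R)*(7*x^3) := by gcongr
      _ = _ := by ring
  have c2 : |B^2/2*((2+2*x+x^2)*η - x^4/2)| ≤ 22*R^2*x^3 := by
    rw [abs_mul, abs_of_pos (by positivity)]
    calc _ ≤ (2*R)^2/2*(11*x^3) := by gcongr
      _ = _ := by ring
  have c3 : 36*R^2*x^3 ≤ 36*(x*B)^3/R := by
    rw [le_div_iff₀ hR]
    have : R^3 ≤ B^3 := by gcongr
    calc 36*R^2*x^3*R = 36*x^3*R^3 := by ring
      _ ≤ 36*x^3*B^3 := by gcongr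
      _ = _ := by ring
  refine le_trans (abs_sub _ _) ?_
  linarith

lemma trap_term {N : ℕ} (hN : 4 ≤ N) {d : ℕ} (hd : d < N) :
    |((N:ℝ) - d - 1/2) * (Real.log (√N + √((d:ℝ)+1)) - Real.log (√N + √d)) -
      √N*(√((d:ℝ)+1) - √d) + 1/2| ≤ 36*(1/((d+1)*√((d:ℝ)+1))) * (1/√N) := by
  have hN' : (4:ℝ) ≤ N := by exact_mod_cast hN
  have hd' : (d:ℝ) ≤ N := by exact_mod_cast hd.le
  have d0 : (0:ℝ) ≤ d := by positivity
  have hR2 : 2 ≤ √(N:ℝ) := by rw [Real.le_sqrt (by norm_num) (by linarith)]; linarith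
  obtain ⟨R, hR⟩ : ∃ R, R = √(N:ℝ) := ⟨_, rfl⟩
  obtain ⟨p, hp⟩ : ∃ p, p = √(d:ℝ) := ⟨_, rfl⟩
  obtain ⟨r, hr⟩ : ∃ r, r = √((d:ℝ)+1) := ⟨_, rfl⟩
  have eR : R^2 = N := by rw [hR, Real.sq_sqrt (by linarith)]
  have ep : p^2 = d := by rw [hp, Real.sq_sqrt (by linarith)]
  have er : r^2 = d+1 := by rw [hr, Real.sq_sqrt (by linarith)]
  have p0 : 0 ≤ p := by rw [hp]; positivity
  have r1 : 1 ≤ r := by rw [hr, Real.le_sqrt (by norm_num) (by linarith)]; linarith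
  have pr : p ≤ r := by rw [hp, hr]; exact Real.sqrt_le_sqrt (by linarith)
  have pR : p ≤ R := by rw [hp, hR]; exact Real.sqrt_le_sqrt hd'
  rw [← hR] at hR2
  rw [← hR, ← hp, ← hr]
  have hee : (r-p)*r ≤ 1 := by nlinarith
  have hle : r - p ≤ 1/r := by rw [le_div_iff₀ (by linarith)]; exact hee
  have hle1 : r - p ≤ 1 := by nlinarith
  have h := trap_abs (R := R) (B := R+p) (e := r-p) (by linarith) (by linarith) (by linarith)
    (by linarith) (by linarith)
  have e1 : R + p + (r-p) = R + r := by ring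
  rw [e1] at h
  have e2 : 36*(r-p)^3/R ≤ 36*(1/((d+1)*r))*(1/R) := by
    have : (r-p)^3 ≤ (1/r)^3 := by gcongr
    have e : (1/r)^3 = 1/((d+1)*r) := by rw [← er]; field_simp
    rw [e] at this
    calc 36*(r-p)^3/R ≤ 36*(1/((d+1)*r))/R := by gcongr
      _ = _ := by ring
  refine le_trans (le_of_eq ?_) (h.trans e2)
  congr 1
  rw [← eR]
  have hh : r^2 = p^2+1 := by rw [ep, er]
  have hd2 : (d:ℝ) = p^2 := ep.symm
  rw [hd2]
  have k1 : (R+r)^2 - (R+p)^2 = 2*R*(r-p) + 1 := by linear_combination hh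
  rw [k1]
  have k2 : (R+r)^2 + (R+p)^2 = 2*R^2 + 2*R*r + 2*R*p + 2*p^2 + 1 := by linear_combination hh
  rw [k2]
  ring

lemma logtrap_sum : ∃ C : ℝ, 0 < C ∧ ∀ N : ℕ, 4 ≤ N →
    |∑ d ∈ range N, Real.log (√N + √((d:ℝ)+1)) - (N:ℝ)*Real.log √N - (N/2 + Real.log 2/2)| ≤ C*(1/√N) := by
  have hs := summable_32
  obtain ⟨K, hK⟩ : ∃ K, K = ∑' n : ℕ, 1/(((n:ℝ)+1)*√((n:ℝ)+1)) := ⟨_, rfl⟩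
  have hK0 : 0 ≤ K := by rw [hK]; exact tsum_nonneg fun n => by positivity
  refine ⟨36*K+1, by positivity, ?_⟩
  intro N hN
  have hN' : (0:ℝ) < N := by exact_mod_cast (by omega : 0 < N)
  have hR : 0 < √(N:ℝ) := Real.sqrt_pos.2 hN'
  have key : ∀ M : ℕ, ∑ d ∈ range M, (((N:ℝ) - d - 1/2) * (Real.log (√N + √((d:ℝ)+1)) - Real.log (√N + √d)) -
      √N*(√((d:ℝ)+1) - √d) + 1/2) = ∑ d ∈ range M, Real.log (√N + √((d:ℝ)+1)) +
       ((N:ℝ) - M - 1/2)*Real.log (√N + √M) - ((N:ℝ)-1/2)*Real.log √N - √N*√M + M/2 := by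
    intro M
    induction M with
    | zero => simp
    | succ M ih =>
      rw [sum_range_succ, ih, sum_range_succ]
      push_cast
      ring
  have hb : |∑ d ∈ range N, (((N:ℝ) - d - 1/2) * (Real.log (√N + √((d:ℝ)+1)) - Real.log (√N + √d)) -
      √N*(√((d:ℝ)+1) - √d) + 1/2)| ≤ 36*K*(1/√N) := by
    refine (abs_sum_le_sum_abs _ _).trans ?_
    calc _ ≤ ∑ d ∈ range N, 36*(1/(((d:ℝ)+1)*√((d:ℝ)+1))) * (1/√N) :=
          sum_le_sum fun d hd => trap_term hN (Finset.mem_range.1 hd)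
      _ = 36*(∑ d ∈ range N, (1/(((d:ℝ)+1)*√((d:ℝ)+1)))) * (1/√N) := by
          rw [mul_sum, sum_mul]
      _ ≤ _ := by
          gcongr
          rw [hK]
          exact hs.sum_le_tsum _ fun i _ => by positivity
  rw [key] at hb
  have e2 : Real.log (√N+√N) = Real.log 2 + Real.log √(N:ℝ) := by
    rw [← two_mul, Real.log_mul (by norm_num) hR.ne']
  rw [e2, Real.mul_self_sqrt hN'.le] at hb
  have hp : 0 ≤ 1/√(N:ℝ) := by positivity
  rw [abs_le] at *
  constructor <;> linarith [hb.1, hb.2]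


lemma diag_tel (F : ℕ → ℕ → ℝ) (hs : ∀ n m, F n m = F m n) (N : ℕ) :
    ∑ n ∈ range N, ∑ m ∈ range N, (F (n+1) (m+1) - F n m) =
      2*∑ m ∈ range N, F N m + F N N - 2*∑ m ∈ range N, F 0 (m+1) - F 0 0 := by
  have h1 : ∑ n ∈ range (N+1), ∑ m ∈ range (N+1), F n m =
      ∑ n ∈ range N, ∑ m ∈ range N, F n m + ∑ n ∈ range N, F n N + (∑ m ∈ range N, F N m + F N N) := by
    rw [sum_range_succ, sum_range_succ, ← sum_add_distrib]
    congr 1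
    apply sum_congr rfl; intro n _; rw [sum_range_succ]
  have h2 : ∑ n ∈ range (N+1), ∑ m ∈ range (N+1), F n m =
      ∑ n ∈ range N, ∑ m ∈ range N, F (n+1) (m+1) + ∑ n ∈ range N, F (n+1) 0 + (∑ m ∈ range N, F 0 (m+1) + F 0 0) := by
    rw [sum_range_succ', sum_range_succ', ← sum_add_distrib]
    congr 1
    apply sum_congr rfl; intro n _; rw [sum_range_succ']
  have h3 : ∑ n ∈ range N, F n N = ∑ m ∈ range N, F N m := sum_congr rfl fun n _ => hs _ _
  have h4 : ∑ n ∈ range N, F (n+1) 0 = ∑ m ∈ range N, F 0 (m+1) := sum_congr rfl fun n _ => hs _ _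
  simp only [sum_sub_distrib]
  linarith

noncomputable def Inm (n m : ℕ) : ℝ := if n = 0 ∧ m = 0 then 0 else
  2*Real.log (√((n:ℝ)+1)+√((m:ℝ)+1)) - 2*Real.log (√n + √m)

noncomputable def JN (N : ℕ) : ℝ := ∑ n ∈ range N, ∑ m ∈ range N, Inm n m - 4*N

lemma log_fact (N : ℕ) : ∑ m ∈ range N, Real.log ((m:ℝ)+1) = Real.log (N.factorial) := by
  induction N with
  | zero => simp
  | succ N ih =>
    rw [sum_range_succ, ih, Nat.factorial_succ]
    push_cast
    rw [Real.log_mul (by positivity) (by positivity)]; ring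

lemma JN_eq {N : ℕ} (hN : 1 ≤ N) : JN N = 4*∑ d ∈ range N, Real.log (√N + √((d:ℝ)+1)) - 4*Real.log 2
    + Real.log N - 2*Real.log (N.factorial) - 4*N := by
  have hN' : (0:ℝ) < N := by exact_mod_cast hN
  have hR : 0 < √(N:ℝ) := Real.sqrt_pos.2 hN'
  have h := diag_tel (fun n m => Real.log (√n + √m)) (fun n m => by rw [add_comm]) N
  have e0 : ∑ n ∈ range N, ∑ m ∈ range N, Inm n m =
     2*∑ n ∈ range N, ∑ m ∈ range N, (Real.log (√((n+1:ℕ):ℝ)+√((m+1:ℕ):ℝ)) - Real.log (√n + √m))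
      - 2*Real.log 2 := by
    have : ∑ n ∈ range N, ∑ m ∈ range N, (if n = 0 ∧ m = 0 then 2*Real.log 2 else 0) = 2*Real.log 2 := by
      rw [sum_eq_single 0, sum_eq_single 0]
      · simp
      · intro b _ hb; simp [hb]
      · intro hb; exact absurd (Finset.mem_range.2 hN) hb
      · intro b _ hb; simp [hb]
      · intro hb; exact absurd (Finset.mem_range.2 hN) hb
    rw [mul_sum, eq_sub_iff_add_eq, ← this, ← sum_add_distrib]
    apply sum_congr rfl; intro n _
    rw [mul_sum, ← sum_add_distrib]
    apply sum_congr rfl; intro m _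
    unfold Inm
    split_ifs with hh
    · rw [hh.1, hh.2]; norm_num
    · push_cast; ring
  have eNN : Real.log (√(N:ℝ)+√N) = Real.log 2 + Real.log N/2 := by
    rw [← two_mul, Real.log_mul (by norm_num) hR.ne', Real.log_sqrt hN'.le]
  have e1 : ∑ d ∈ range N, Real.log (√N + √((d:ℝ)+1)) + Real.log √(N:ℝ) =
      ∑ m ∈ range N, Real.log (√N + √(m:ℝ)) + Real.log (√(N:ℝ)+√N) := by
    have h1 := sum_range_succ (fun m : ℕ => Real.log (√N + √(m:ℝ))) N
    have h2 := sum_range_succ' (fun m : ℕ => Real.log (√N + √(m:ℝ))) N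
    simp only [Nat.cast_zero, Real.sqrt_zero, add_zero, Nat.cast_add, Nat.cast_one] at h2
    rw [← h1, ← h2]
  have e2 : ∑ m ∈ range N, Real.log (√((0:ℕ):ℝ) + √((m+1:ℕ):ℝ)) = Real.log (N.factorial)/2 := by
    rw [← log_fact, sum_div]
    apply sum_congr rfl; intro m _
    push_cast
    rw [Real.sqrt_zero, zero_add, Real.log_sqrt (by positivity)]
  rw [Real.log_sqrt hN'.le] at e1
  rw [e2] at h
  simp only [eNN, Nat.cast_zero, Real.sqrt_zero, add_zero, Real.log_zero] at h e1
  unfold JN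
  rw [e0, h]
  linarith

lemma JN_lim : Filter.Tendsto JN Filter.atTop (nhds (-Real.log (8*π))) := by
  obtain ⟨C, hC, hT⟩ := logtrap_sum
  have hS := (Real.continuousAt_log (Real.sqrt_pos.2 Real.pi_pos).ne').tendsto.comp Stirling.tendsto_stirlingSeq_sqrt_pi
  have hT0 : Filter.Tendsto (fun N : ℕ => ∑ d ∈ range N, Real.log (√N + √((d:ℝ)+1)) - (N:ℝ)*Real.log √N - (N/2 + Real.log 2/2)) Filter.atTop (nhds 0) := by
    have h1 := (sqrt_inv_nat_tendsto).const_mul C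
    rw [mul_zero] at h1
    refine squeeze_zero_norm' ?_ h1
    filter_upwards [Filter.eventually_ge_atTop 4] with N hN
    rw [← one_div]; exact hT N hN
  have h := ((hT0.const_mul 4).sub (hS.const_mul 2)).sub (tendsto_const_nhds (x := 3*Real.log 2))
  have el : 4*0 - 2*Real.log √π - 3*Real.log 2 = -Real.log (8*π) := by
    rw [Real.log_sqrt Real.pi_pos.le, Real.log_mul (by norm_num) Real.pi_ne_zero]
    have : (8:ℝ) = 2^3 := by norm_num
    rw [this, Real.log_pow]; push_cast; ring
  rw [el] at h
  refine h.congr' ?_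
  filter_upwards [Filter.eventually_ge_atTop 1] with N hN
  have hN' : (0:ℝ) < N := by exact_mod_cast hN
  rw [JN_eq hN]
  simp only [Function.comp]
  rw [Stirling.log_stirlingSeq_formula, Real.log_sqrt hN'.le, Real.log_mul (by norm_num) hN'.ne',
    Real.log_div hN'.ne' (Real.exp_ne_zero _), Real.log_exp]
  ring


noncomputable def ZN (N : ℕ) (x : ℝ) : ℝ := ∑ n ∈ range N, 1/√(x+n) - 2*√N

lemma ZN_sq (N : ℕ) (x : ℝ) : (ZN N x)^2 =
    ∑ n ∈ range N, ∑ m ∈ range N, 1/√(x+n) * (1/√(x+m)) - 4*√N*∑ n ∈ range N, 1/√(x+n) + 4*N := by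
  have e := Real.sq_sqrt (Nat.cast_nonneg (α := ℝ) N)
  have : ∑ n ∈ range N, ∑ m ∈ range N, 1/√(x+n) * (1/√(x+m)) = (∑ n ∈ range N, 1/√(x+n))^2 := by
    rw [sq, sum_mul_sum]
  rw [this]; unfold ZN
  linear_combination 4*e

lemma ZN_avg_lim {N : ℕ} (hN : 1 ≤ N) :
    Filter.Tendsto (fun Q : ℕ => (1/(Q:ℝ)) * ∑ h ∈ range Q, (ZN N (((h:ℝ)+1)/Q))^2 - Real.log Q)
      Filter.atTop (nhds (Real.eulerMascheroniConstant + JN N)) := by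
  have hlin : Filter.Tendsto (fun Q : ℕ => 4*√N*∑ n ∈ range N, ((1/(Q:ℝ)) * ∑ h ∈ range Q, 1/√(((h:ℝ)+1)/Q + n)))
      Filter.atTop (nhds (4*√N*∑ n ∈ range N, (2*√((n:ℝ)+1) - 2*√n))) :=
    (tendsto_finsetSum _ fun n _ => riem_lin n).const_mul _
  have e1 : 4*√N*∑ n ∈ range N, (2*√((n:ℝ)+1) - 2*√n) = 8*N := by
    have h := Finset.sum_range_sub (fun n : ℕ => 2*√(n:ℝ)) N
    push_cast at h
    rw [h, Real.sqrt_zero]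
    linear_combination 8*Real.sq_sqrt (Nat.cast_nonneg (α := ℝ) N)
  rw [e1] at hlin
  have h00 : Filter.Tendsto (fun Q : ℕ => (1/(Q:ℝ)) * ∑ h ∈ range Q,
        1/√(((h:ℝ)+1)/Q + (0:ℕ)) * (1/√(((h:ℝ)+1)/Q + (0:ℕ))) - Real.log Q) Filter.atTop
        (nhds Real.eulerMascheroniConstant) := by
    have hz : Filter.Tendsto (fun Q : ℕ => ∑ k ∈ range Q, 1/((k:ℝ)+1) - Real.log Q) Filter.atTop
        (nhds Real.eulerMascheroniConstant) := by
      rw [tendsto_iff_norm_sub_tendsto_zero]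
      refine squeeze_zero' (Filter.Eventually.of_forall fun _ => norm_nonneg _) ?_ tendsto_one_div_atTop_nhds_zero_nat
      filter_upwards [Filter.eventually_ge_atTop 1] with Q hQ
      exact harm_bound hQ
    refine hz.congr' ?_
    filter_upwards [Filter.eventually_ge_atTop 1] with Q hQ
    have hQ' : (0:ℝ) < Q := by exact_mod_cast hQ
    congr 1
    rw [mul_sum]
    apply sum_congr rfl; intro h _
    rw [Nat.cast_zero, add_zero, div_mul_div_comm, Real.mul_self_sqrt (by positivity)]
    field_simp
  have hterm : ∀ n m : ℕ, Filter.Tendsto (fun Q : ℕ => (1/(Q:ℝ)) * ∑ h ∈ range Q,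
        1/√(((h:ℝ)+1)/Q + n) * (1/√(((h:ℝ)+1)/Q + m)) - (if n = 0 ∧ m = 0 then Real.log Q else 0)) Filter.atTop
        (nhds (Inm n m + if n = 0 ∧ m = 0 then Real.eulerMascheroniConstant else 0)) := by
    intro n m
    by_cases hh : n = 0 ∧ m = 0
    · simp only [Inm, if_pos hh, zero_add]
      rw [hh.1, hh.2]
      exact h00
    · simp only [Inm, if_neg hh, add_zero, sub_zero]
      exact riem_pair n m (by omega)
  have hsing : ∀ c : ℝ, ∑ n ∈ range N, ∑ m ∈ range N, (if n = 0 ∧ m = 0 then c else 0) = c := by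
    intro c
    rw [sum_eq_single 0, sum_eq_single 0]
    · simp
    · intro b _ hb; simp [hb]
    · intro hb; exact absurd (Finset.mem_range.2 hN) hb
    · intro b _ hb; simp [hb]
    · intro hb; exact absurd (Finset.mem_range.2 hN) hb
  have hsum := tendsto_finsetSum (range N) fun n _ => tendsto_finsetSum (range N) fun m _ => hterm n m
  simp only [sum_sub_distrib, sum_add_distrib, hsing] at hsum
  have hfin := (hsum.sub hlin).add (tendsto_const_nhds (x := 4*(N:ℝ)))
  have el : ∑ n ∈ range N, ∑ m ∈ range N, Inm n m + Real.eulerMascheroniConstant - 8*N + 4*N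
     = Real.eulerMascheroniConstant + JN N := by unfold JN; ring
  rw [el] at hfin
  refine hfin.congr' ?_
  filter_upwards [Filter.eventually_ge_atTop 1] with Q hQ
  have hQ' : (0:ℝ) < Q := by exact_mod_cast hQ
  simp only [ZN_sq, sum_add_distrib, sum_sub_distrib, sum_const, card_range, nsmul_eq_mul]
  have s1 : ∑ h ∈ range Q, ∑ n ∈ range N, ∑ m ∈ range N, 1/√(((h:ℝ)+1)/Q + n) * (1/√(((h:ℝ)+1)/Q + m))
     = ∑ n ∈ range N, ∑ m ∈ range N, ∑ h ∈ range Q, 1/√(((h:ℝ)+1)/Q + n) * (1/√(((h:ℝ)+1)/Q + m)) := by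
    rw [sum_comm]; apply sum_congr rfl; intro n _; rw [sum_comm]
  have s2 : ∑ h ∈ range Q, 4*√N*∑ n ∈ range N, 1/√(((h:ℝ)+1)/Q + n) =
      4*√N*∑ n ∈ range N, ∑ h ∈ range Q, 1/√(((h:ℝ)+1)/Q + n) := by
    rw [← mul_sum, sum_comm]
  rw [s1, s2]
  simp only [← mul_sum]
  field_simp
  ring

lemma zh_abs_le {x : ℝ} (h0 : 0 < x) (h1 : x ≤ 1) : |zh x| ≤ 1/√x + (|z0| + 2) := by
  rw [zh_rec h0]
  have h := zh_var le_rfl h0.le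
  rw [Real.sqrt_zero, add_zero] at h
  have hs : √x ≤ 1 := by rw [Real.sqrt_le_left (by norm_num)]; linarith
  have e : zh (x+1) = z0 - (zh 1 - zh (1+x)) := by unfold z0; rw [add_comm x 1]; ring
  rw [e]
  have hp : 0 < 1/√x := by have := Real.sqrt_pos.2 h0; positivity
  have := abs_le.1 (le_refl |z0|)
  rw [abs_le]
  constructor <;> linarith [h.1, h.2, this.1, this.2]

lemma zh_ZN {N : ℕ} (hN : 1 ≤ N) {x : ℝ} (h0 : 0 < x) (h1 : x ≤ 1) :
    |zh x - ZN N x| ≤ 4/√N := by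
  have hN' : (1:ℝ) ≤ N := by exact_mod_cast hN
  have hR : 1 ≤ √(N:ℝ) := by rw [Real.le_sqrt (by norm_num) (by linarith)]; linarith
  have hy : 0 < x + N := by linarith
  rw [zh_sum h0 N]
  have h := zh_asymp hy
  have hs : √(N:ℝ) ≤ √(x+N) := Real.sqrt_le_sqrt (by linarith)
  have e1 := Real.mul_self_sqrt hy.le
  have e2 := Real.mul_self_sqrt (show (0:ℝ) ≤ N by linarith)
  have b1 : √(x+N) - √N ≤ 1/√N := by
    rw [le_div_iff₀ (by linarith)]; nlinarith
  have b2 : 1/(2*√(x+N)) ≤ 1/√N := by gcongr; linarith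
  have b3 : 1/((x+N)*√(x+N)) ≤ 1/√N := by
    gcongr; nlinarith
  have b4 : 0 < 1/(2*√(x+N)) := by positivity
  have e4 : 4/√(N:ℝ) = 4*(1/√N) := by ring
  unfold ZN
  rw [e4]
  rw [abs_le] at *
  constructor <;> linarith [h.1, h.2]

lemma Zsq_approx : ∃ K : ℝ, 0 < K ∧ ∀ N Q : ℕ, 1 ≤ N → 1 ≤ Q →
    |(1/(Q:ℝ)) * ∑ h ∈ range Q, (Zp (((h:ℝ)+1)/Q))^2 - (1/(Q:ℝ)) * ∑ h ∈ range Q, (ZN N (((h:ℝ)+1)/Q))^2|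
      ≤ K*(1/√N) := by
  refine ⟨4*(2*(2+(|z0|+2)) + 4), by positivity, ?_⟩
  intro N Q hN hQ
  have hQ' : (0:ℝ) < Q := by exact_mod_cast hQ
  have hN' : (1:ℝ) ≤ N := by exact_mod_cast hN
  have hR : 1 ≤ √(N:ℝ) := by rw [Real.le_sqrt (by norm_num) (by linarith)]; linarith
  have hb : ∀ h ∈ range Q, |(Zp (((h:ℝ)+1)/Q))^2 - (ZN N (((h:ℝ)+1)/Q))^2| ≤
      (4/√N)*(2*(√Q*(1/√((h:ℝ)+1)) + (|z0|+2)) + 4) := by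
    intro h hh
    rw [Zp_range_eq hh]
    have hx0 : 0 < ((h:ℝ)+1)/Q := by positivity
    have hx1 : ((h:ℝ)+1)/Q ≤ 1 := by
      rw [div_le_one hQ']; exact_mod_cast Finset.mem_range.1 hh
    have a1 := zh_abs_le hx0 hx1
    have a2 := zh_ZN hN hx0 hx1
    have e : 1/√(((h:ℝ)+1)/Q) = √Q*(1/√((h:ℝ)+1)) := by
      rw [Real.sqrt_div (by positivity)]; field_simp
    rw [e] at a1
    set y := ((h:ℝ)+1)/Q
    have e2 : (zh y)^2 - (ZN N y)^2 = (zh y - ZN N y)*(2*zh y - (zh y - ZN N y)) := by ring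
    rw [e2, abs_mul]
    have a3 : 4/√(N:ℝ) ≤ 4 := by rw [div_le_iff₀ (by linarith)]; linarith
    have a4 : |2*zh y - (zh y - ZN N y)| ≤ 2*|zh y| + |zh y - ZN N y| := by
      refine (abs_sub _ _).trans ?_
      rw [abs_mul, abs_two]
    gcongr
    linarith
  rw [← mul_sub, ← sum_sub_distrib, abs_mul, abs_of_pos (by positivity)]
  have h2 : |∑ h ∈ range Q, ((Zp (((h:ℝ)+1)/Q))^2 - (ZN N (((h:ℝ)+1)/Q))^2)| ≤
     ∑ h ∈ range Q, (4/√N)*(2*(√Q*(1/√((h:ℝ)+1)) + (|z0|+2)) + 4) :=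
    (abs_sum_le_sum_abs _ _).trans (sum_le_sum hb)
  have h3 : ∑ h ∈ range Q, (4/√N)*(2*(√Q*(1/√((h:ℝ)+1)) + (|z0|+2)) + 4) =
      (4/√N)*(2*(√Q*∑ h ∈ range Q, (1/√((h:ℝ)+1)) + Q*(|z0|+2)) + Q*4) := by
    simp only [← mul_sum, sum_add_distrib, sum_const, card_range, nsmul_eq_mul]; ring
  have h4 := sum_inv_sqrt_le Q
  have eQ := Real.mul_self_sqrt hQ'.le
  have h5 : √(Q:ℝ)*∑ h ∈ range Q, (1/√((h:ℝ)+1)) ≤ 2*Q := by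
    calc _ ≤ √(Q:ℝ)*(2*√Q) := by gcongr
      _ = 2*(√Q*√Q) := by ring
      _ = _ := by rw [eQ]
  rw [h3] at h2
  calc _ ≤ (1/(Q:ℝ))*((4/√N)*(2*(2*Q + Q*(|z0|+2)) + Q*4)) := by
        gcongr
        refine h2.trans ?_
        gcongr
    _ = _ := by field_simp

lemma Zsq_lim : Filter.Tendsto (fun Q : ℕ => (1/(Q:ℝ)) * ∑ h ∈ range Q, (Zp (((h:ℝ)+1)/Q))^2 - Real.log Q)
      Filter.atTop (nhds (Real.eulerMascheroniConstant - Real.log (8*π))) := by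
  obtain ⟨K, hK, hA⟩ := Zsq_approx
  have hJ := JN_lim
  have hKl := sqrt_inv_nat_tendsto.const_mul K
  rw [mul_zero] at hKl
  rw [Metric.tendsto_atTop] at *
  intro ε hε
  obtain ⟨N1, h1⟩ := hJ (ε/3) (by positivity)
  obtain ⟨N2, h2⟩ := hKl (ε/3) (by positivity)
  set N := max (max N1 N2) 1 with hN
  have hN1 : 1 ≤ N := le_max_right _ _
  have b1 := h1 N ((le_max_left _ _).trans (le_max_left _ _))
  have b2 := h2 N ((le_max_right _ _).trans (le_max_left _ _))
  have h3 := ZN_avg_lim hN1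
  rw [Metric.tendsto_atTop] at h3
  obtain ⟨Q0, hQ0⟩ := h3 (ε/3) (by positivity)
  refine ⟨max Q0 1, fun Q hQ => ?_⟩
  have b3 := hQ0 Q ((le_max_left _ _).trans hQ)
  have b4 := hA N Q hN1 ((le_max_right _ _).trans hQ)
  rw [Real.dist_eq] at *
  rw [one_div (√(N:ℝ))] at b4
  rw [abs_lt] at b1 b2 b3 ⊢
  rw [abs_le] at b4
  constructor <;> linarith [b1.1, b1.2, b2.1, b2.2, b3.1, b3.2, b4.1, b4.2]


noncomputable def cc : ℝ := Real.eulerMascheroniConstant - Real.log (8*π)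

lemma SS_one (n : ℤ) : SS n 1 = z0^2 := by
  unfold SS
  have h1 := Zp_int 1
  have h2 := Zp_int n
  simp at h1 ⊢
  rw [h1, h2]; ring

lemma fE_inv {Q : ℕ} (hQ : 1 ≤ Q) : (1/(Q:ℝ))*fE (1/(Q:ℝ)) =
    (1/(Q:ℝ)) * ∑ h ∈ range Q, (Zp (((h:ℝ)+1)/Q))^2 - (1/(Q:ℝ))*(π/2) := by
  have hQ' : (0:ℝ) < Q := by exact_mod_cast hQ
  have h := SS_recip 1 Q one_pos hQ (Nat.coprime_one_left Q)
  push_cast at h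
  rw [SS_one] at h
  have hs : 0 < √(Q:ℝ) := Real.sqrt_pos.2 hQ'
  have e : √(1/(Q:ℝ)) = 1/√Q := by rw [Real.sqrt_div (by norm_num), Real.sqrt_one]
  have e2 : SS 1 Q = (1/√Q)*∑ h ∈ range Q, (Zp (((h:ℝ)+1)/Q))^2 := by
    unfold SS
    rw [div_eq_inv_mul, one_div]
    congr 1
    apply sum_congr rfl; intro h _
    push_cast; rw [one_mul, sq]
  rw [e, e2] at h
  have e3 : (1/(Q:ℝ)) = 1/√Q*(1/√Q) := by
    rw [div_mul_div_comm, Real.mul_self_sqrt hQ'.le, one_mul]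
  have h' : (1/√Q)*∑ h ∈ range Q, (Zp (((h:ℝ)+1)/Q))^2 = 1/√Q * (fE (1/(Q:ℝ)) + π/2) := by linarith
  generalize fE (1/(Q:ℝ)) = X at *
  generalize ∑ h ∈ range Q, (Zp (((h:ℝ)+1)/Q))^2 = Y at *
  rw [e3]
  linear_combination -(1/√Q)*h'

lemma fE_small : ∃ C : ℝ, 0 < C ∧ ∀ a q : ℕ, 0 < a → a ≤ q →
    |((a:ℝ)/q)*fE ((a:ℝ)/q) - (Real.log ((q:ℝ)/a) + cc)| ≤ C*√((a:ℝ)/q) := by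
  obtain ⟨C, hC, h⟩ := fE_scale
  refine ⟨C, hC, ?_⟩
  intro a q ha haq
  have hq : 0 < q := by omega
  have ha' : (0:ℝ) < a := by exact_mod_cast ha
  have hq' : (0:ℝ) < q := by exact_mod_cast hq
  have hθ : 0 < (a:ℝ)/q := by positivity
  have hθ1 : (a:ℝ)/q ≤ 1 := by rw [div_le_one hq']; exact_mod_cast haq
  have hQ : Filter.Tendsto (fun l : ℕ => q*l) Filter.atTop Filter.atTop :=
    Filter.tendsto_id.const_mul_atTop' hq
  have l1 := Zsq_lim.comp hQ
  have l2 := ((tendsto_one_div_atTop_nhds_zero_nat (𝕜 := ℝ)).comp hQ).mul_const (π/2)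
  rw [zero_mul] at l2
  have l3 := (((l1.sub l2).const_sub (((a:ℝ)/q)*fE ((a:ℝ)/q))).sub_const (Real.log ((q:ℝ)/a))).abs
  have e : |((a:ℝ)/q)*fE ((a:ℝ)/q) - (Real.log ((q:ℝ)/a) + cc)| =
    |((a:ℝ)/q)*fE ((a:ℝ)/q) - (Real.eulerMascheroniConstant - Real.log (8*π) - 0) - Real.log ((q:ℝ)/a)| := by
    unfold cc; congr 1; ring
  rw [e]
  refine le_of_tendsto l3 ?_
  filter_upwards [Filter.eventually_ge_atTop 1] with l hl
  have hl' : (0:ℝ) < l := by exact_mod_cast hl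
  have h1 := h ((a:ℝ)/q) (a*l) hθ hθ1 (Nat.mul_pos ha hl)
  have e1 : (a:ℝ)/q/((a*l:ℕ):ℝ) = 1/((q*l:ℕ):ℝ) := by push_cast; field_simp
  rw [e1, fE_inv (Nat.mul_pos hq hl)] at h1
  refine le_trans (le_of_eq ?_) h1
  congr 1
  simp only [Function.comp]
  have e2 : Real.log ((q*l:ℕ):ℝ) - Real.log ((q:ℝ)/a) = Real.log ((a*l:ℕ):ℝ) := by
    push_cast
    rw [Real.log_mul (by positivity) (by positivity), Real.log_mul (by positivity) (by positivity),
      Real.log_div (by positivity) (by positivity)]; ring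
  rw [← e2]; ring

lemma recip_small : ∃ C : ℝ, 0 < C ∧ ∀ a q : ℕ, 0 < a → a ≤ q → Nat.Coprime a q →
    |SS a q - SS (-(q:ℤ)) a - √((q:ℝ)/a)*(Real.log ((q:ℝ)/a) + cc)| ≤ C := by
  obtain ⟨C, hC, h⟩ := fE_small
  refine ⟨C + π/2 + z0^2, by positivity, ?_⟩
  intro a q ha haq hc
  have hq : 0 < q := by omega
  have ha' : (0:ℝ) < a := by exact_mod_cast ha
  have hq' : (0:ℝ) < q := by exact_mod_cast hq
  have hθ : 0 < (a:ℝ)/q := by positivity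
  have hθ1 : (a:ℝ)/q ≤ 1 := by rw [div_le_one hq']; exact_mod_cast haq
  rw [SS_recip a q ha hq hc]
  have h1 := h a q ha haq
  obtain ⟨θ, hθd⟩ : ∃ θ, θ = (a:ℝ)/q := ⟨_, rfl⟩
  have ei : √((q:ℝ)/a) = 1/√θ := by
    rw [hθd, Real.sqrt_div hq'.le, Real.sqrt_div ha'.le, one_div_div]
  rw [← hθd] at h1 hθ hθ1 ⊢
  rw [ei]
  have hs : 0 < √θ := Real.sqrt_pos.2 hθ
  have hs1 : √θ ≤ 1 := by rw [Real.sqrt_le_left (by norm_num)]; linarith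
  have e : √θ*(fE θ + π/2) - z0^2 - 1/√θ*(Real.log ((q:ℝ)/a) + cc) =
      1/√θ*(θ*fE θ - (Real.log ((q:ℝ)/a) + cc)) + √θ*(π/2) - z0^2 := by
    have e' : √θ = 1/√θ*θ := by rw [one_div_mul_eq_div, Real.div_sqrt]
    linear_combination (fE θ)*e'
  have b : |1/√θ*(θ*fE θ - (Real.log ((q:ℝ)/a) + cc))| ≤ C := by
    rw [abs_mul, abs_of_pos (by positivity)]
    calc _ ≤ 1/√θ*(C*√θ) := by gcongr
      _ = C := by field_simp
  have b2 : √θ*(π/2) ≤ π/2 := by nlinarith [Real.pi_pos]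
  have b3 : 0 < √θ*(π/2) := by positivity
  rw [e]
  have := sq_nonneg z0
  have := Real.pi_pos
  rw [abs_le] at *
  constructor <;> linarith [b.1, b.2]

lemma recip_large : ∃ C : ℝ, 0 < C ∧ ∀ a q : ℕ, 0 < q → q ≤ a → Nat.Coprime a q →
    |SS a q - SS (-(q:ℤ)) a - √((a:ℝ)/q)*(π/2)| ≤ C := by
  obtain ⟨C, hC, h⟩ := fE_large
  refine ⟨C + z0^2, by positivity, ?_⟩
  intro a q hq haq hc
  have ha : 0 < a := by omega
  have hq' : (0:ℝ) < q := by exact_mod_cast hq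
  rw [SS_recip a q ha hq hc]
  have h1 := h ((a:ℝ)/q) (by rw [le_div_iff₀ hq', one_mul]; exact_mod_cast haq)
  have e : √((a:ℝ)/q)*(fE ((a:ℝ)/q) + π/2) - z0^2 - √((a:ℝ)/q)*(π/2) = √((a:ℝ)/q)*fE ((a:ℝ)/q) - z0^2 := by ring
  rw [e]
  have := sq_nonneg z0
  rw [abs_le] at *
  constructor <;> linarith [h1.1, h1.2]

noncomputable def Se (ε : ℝ) (a : ℤ) (q : ℕ) : ℝ := 1/2*(SS a q + ε*SS (-a) q)

lemma Se_step : ∃ C : ℝ, 0 < C ∧ ∀ ε : ℝ, (ε = 1 ∨ ε = -1) → ∀ a q : ℕ, 0 < a → a ≤ q → Nat.Coprime a q →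
    |Se ε a q - ε*Se ε q a - 1/2*(√((q:ℝ)/a)*(Real.log ((q:ℝ)/a) + cc - ε*(π/2)))| ≤ C := by
  obtain ⟨C1, hC1, h1⟩ := recip_small
  obtain ⟨C2, hC2, h2⟩ := recip_large
  refine ⟨C1 + C2, by positivity, ?_⟩
  intro ε hε a q ha haq hc
  have b1 := h1 a q ha haq hc
  have b2 := h2 q a ha haq hc.symm
  unfold Se
  rw [abs_le] at *
  rcases hε with h | h <;> subst h <;> constructor <;> linarith [b1.1, b1.2, b2.1, b2.2]


lemma SS_congr {q : ℕ} (hq : 0 < q) {a b : ℤ} (h : (a : ZMod q) = (b : ZMod q)) : SS a q = SS b q := by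
  have : NeZero q := ⟨hq.ne'⟩
  rw [SS_zmod, SS_zmod, h]

lemma Se_congr {q : ℕ} (hq : 0 < q) {a b : ℤ} (ε : ℝ) (h : (a : ZMod q) = (b : ZMod q)) :
    Se ε a q = Se ε b q := by
  unfold Se
  rw [SS_congr hq h, SS_congr hq (a := -a) (b := -b) (by push_cast; rw [h])]

lemma floor_rep (k : ℝ) {x b : ℝ} (hb : 1 ≤ b) (hbx : b ≤ x) (hx : x ≤ b+1) :
    |√x*(Real.log x + k) - √b*(Real.log b + k)| ≤ 4 + |k| := by
  have hb0 : 0 < b := by linarith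
  have hx0 : 0 < x := by linarith
  have sb : 1 ≤ √b := by rw [Real.le_sqrt (by norm_num) (by linarith)]; linarith
  have sx : √b ≤ √x := Real.sqrt_le_sqrt hbx
  have eb := Real.mul_self_sqrt hb0.le
  have ex := Real.mul_self_sqrt hx0.le
  have d1 : (√x - √b)*√b ≤ 1 := by nlinarith
  have d1' : √x - √b ≤ 1 := by nlinarith
  have l0 : 0 ≤ Real.log b := Real.log_nonneg hb
  have l1 := log_le_two_sqrt hb0
  have l2 : 0 ≤ Real.log x - Real.log b := by
    have := Real.log_le_log hb0 hbx; linarith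
  have l3 : Real.log x - Real.log b ≤ 1/b := by
    rw [← Real.log_div hx0.ne' hb0.ne']
    have := Real.log_le_sub_one_of_pos (show 0 < x/b by positivity)
    have e : x/b - 1 = (x-b)/b := by field_simp
    have : (x-b)/b ≤ 1/b := by gcongr; linarith
    linarith
  have t1 : √x*(Real.log x - Real.log b) ≤ 2 := by
    calc _ ≤ √x*(1/b) := by gcongr
      _ ≤ 2 := by
        rw [mul_one_div, div_le_iff₀ hb0]; nlinarith
  have t1' : 0 ≤ √x*(Real.log x - Real.log b) := by positivity
  have t2 : (√x-√b)*Real.log b ≤ 2 := by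
    calc _ ≤ (√x-√b)*(2*√b) := by gcongr
      _ ≤ 2 := by linarith
  have t2' : 0 ≤ (√x-√b)*Real.log b := mul_nonneg (by linarith) l0
  have t3 : |(√x-√b)*k| ≤ |k| := by
    rw [abs_mul, abs_of_nonneg (by linarith)]
    exact mul_le_of_le_one_left (abs_nonneg _) d1'
  have e : √x*(Real.log x + k) - √b*(Real.log b + k) =
     √x*(Real.log x - Real.log b) + (√x-√b)*Real.log b + (√x-√b)*k := by ring
  rw [e]
  rw [abs_le] at t3 ⊢
  constructor <;> linarith [t3.1, t3.2]

noncomputable def gg (ε : ℝ) (b : ℕ) : ℝ := √(b:ℝ)*(Real.log b + (cc - ε*(π/2)))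

noncomputable def VV (ε : ℝ) : List ℕ → ℝ
  | [] => 0
  | b :: t => 1/2*gg ε b + ε*VV ε t

lemma cf_induct : ∃ K : ℝ, 0 < K ∧ ∀ ε : ℝ, (ε = 1 ∨ ε = -1) → ∀ r q : ℕ, r ≤ q → 0 < q → Nat.Coprime r q →
    |Se ε r q - VV ε (cfList q r)| ≤ K*((cfList q r).length + 1) := by
  obtain ⟨C, hC, hs⟩ := Se_step
  refine ⟨C + (4 + |cc| + π/2) + z0^2, by positivity, ?_⟩
  intro ε hε r
  have habs : |ε| = 1 := by rcases hε with h | h <;> rw [h] <;> norm_num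
  induction r using Nat.strong_induction_on with
  | _ r ih =>
  intro q hr hq hc
  rcases Nat.eq_zero_or_pos r with h0 | h0
  · subst h0
    have hq1 : q = 1 := by simpa using hc
    subst hq1
    have e : cfList 1 0 = [] := by rw [cfList]; simp
    rw [e]
    unfold Se
    rw [SS_one, SS_one]
    simp only [VV, List.length_nil]
    have := sq_nonneg z0
    have := abs_nonneg cc
    have := Real.pi_pos
    rcases hε with h | h <;> rw [h] <;> rw [abs_le] <;> constructor <;> push_cast <;> linarith
  · have e : cfList q r = (q/r) :: cfList r (q % r) := by rw [cfList]; simp [h0.ne']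
    have hlt := Nat.mod_lt q h0
    have hc' : Nat.Coprime (q % r) r := by
      rw [Nat.coprime_comm] at hc
      unfold Nat.Coprime
      rw [← Nat.gcd_rec, Nat.gcd_comm]; exact hc
    have h1 := ih (q % r) hlt r hlt.le h0 hc'
    have h2 := hs ε hε r q h0 hr hc
    have h3 : Se ε (q:ℤ) r = Se ε ((q % r : ℕ):ℤ) r := by
      apply Se_congr h0
      push_cast
      simp
    rw [h3] at h2
    have hr' : (0:ℝ) < r := by exact_mod_cast h0
    have h4 := floor_rep (cc - ε*(π/2)) (x := (q:ℝ)/r) (b := ((q/r:ℕ):ℝ))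
      (by exact_mod_cast Nat.div_pos hr h0) Nat.cast_div_le
      (by
        rw [div_le_iff₀ hr']
        have := Nat.lt_div_mul_add (a := q) h0
        have h5 : q ≤ (q/r+1)*r := by rw [add_mul]; omega
        exact_mod_cast h5)
    have h5 : |cc - ε*(π/2)| ≤ |cc| + π/2 := by
      refine (abs_sub _ _).trans ?_
      rw [abs_mul, habs, one_mul, abs_of_pos (show 0 < π/2 by positivity)]
    rw [e]
    simp only [VV, List.length_cons, gg]
    have h6 : |ε*Se ε ((q % r : ℕ):ℤ) r - ε*VV ε (cfList r (q % r))| ≤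
      (C + (4 + |cc| + π/2) + z0^2)*((cfList r (q % r)).length + 1) := by
      rw [← mul_sub, abs_mul, habs, one_mul]; exact h1
    have e7 : √((q:ℝ)/r)*(Real.log ((q:ℝ)/r) + cc - ε*(π/2)) = √((q:ℝ)/r)*(Real.log ((q:ℝ)/r) + (cc - ε*(π/2))) := by ring
    rw [e7] at h2
    have := sq_nonneg z0
    have := abs_nonneg cc
    have := Real.pi_pos
    push_cast
    rw [abs_le] at h2 h4 h6 ⊢
    constructor <;> linarith [h2.1, h2.2, h4.1, h4.2, h6.1, h6.2]

lemma VV_sum (ε : ℝ) (t : List ℕ) : VV ε t = 1/2*∑ i ∈ range t.length, ε^i*gg ε (t.getD i 0) := by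
  induction t with
  | nil => simp [VV]
  | cons b t ih =>
    rw [List.length_cons, sum_range_succ']
    simp only [VV, ih, List.getD_cons_succ, List.getD_cons_zero, pow_zero, one_mul, pow_succ]
    have : ∑ i ∈ range t.length, ε^i*ε*gg ε (t.getD i 0) = ε*∑ i ∈ range t.length, ε^i*gg ε (t.getD i 0) := by
      rw [mul_sum]; apply sum_congr rfl; intros; ring
    rw [this]; ring

lemma VV_sum' {ε : ℝ} (hε : ε = 1 ∨ ε = -1) (b : ℕ) (t : List ℕ) :
    VV ε t = ε*(1/2)*∑ j ∈ Finset.Icc 1 t.length, ε^j*gg ε ((b::t).getD j 0) := by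
  have h2 : ε*ε = 1 := by rcases hε with h | h <;> rw [h] <;> norm_num
  have : Finset.Icc 1 t.length = (range t.length).map (addRightEmbedding 1) := by
    ext x
    simp only [Finset.mem_Icc, Finset.mem_map, Finset.mem_range, addRightEmbedding_apply]
    constructor
    · rintro ⟨h1, h2⟩; exact ⟨x-1, by omega, by omega⟩
    · rintro ⟨y, h1, h2⟩; omega
  rw [this, sum_map, VV_sum]
  simp only [addRightEmbedding_apply, List.getD_cons_succ, pow_succ]
  have : ∑ i ∈ range t.length, ε^i*ε*gg ε (t.getD i 0) = ε*∑ i ∈ range t.length, ε^i*gg ε (t.getD i 0) := by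
    rw [mul_sum]; apply sum_congr rfl; intros; ring
  rw [this]
  linear_combination (-(1/2)*∑ i ∈ range t.length, ε^i*gg ε (t.getD i 0))*h2

lemma cf_main : ∃ K : ℝ, 0 < K ∧ ∀ ε : ℝ, (ε = 1 ∨ ε = -1) → ∀ a q : ℕ, 1 < q → Nat.Coprime a q →
    1 ≤ (cfList a q).length - 1 ∧
    |Se ε a q - ε*(1/2)*∑ j ∈ Finset.Icc 1 ((cfList a q).length - 1), ε^j*gg ε ((cfList a q).getD j 0)|
      ≤ K*((cfList a q).length - 1 : ℕ) := by
  obtain ⟨K, hK, h⟩ := cf_induct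
  refine ⟨2*K, by positivity, ?_⟩
  intro ε hε a q hq hc
  have hq0 : 0 < q := by omega
  have e : cfList a q = (a/q) :: cfList q (a % q) := by rw [cfList]; simp [hq0.ne']
  have hc' : Nat.Coprime (a % q) q := by
    rw [Nat.coprime_comm] at hc
    unfold Nat.Coprime
    rw [← Nat.gcd_rec]; exact hc
  have hpos : a % q ≠ 0 := by
    intro h0; rw [h0] at hc'; simp at hc'; omega
  have e2 : cfList q (a % q) = (q/(a % q)) :: cfList (a % q) (q % (a % q)) := by rw [cfList]; simp [hpos]
  have hl : 1 ≤ (cfList q (a % q)).length := by rw [e2]; simp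
  have h1 := h ε hε (a % q) q (Nat.mod_lt _ hq0).le hq0 hc'
  have h3 : Se ε (a:ℤ) q = Se ε ((a % q : ℕ):ℤ) q := by
    apply Se_congr hq0
    push_cast
    simp
  rw [VV_sum' hε (a/q), ← e, ← h3] at h1
  have e3 : (cfList a q).length - 1 = (cfList q (a % q)).length := by rw [e]; simp
  rw [e3]
  refine ⟨hl, h1.trans ?_⟩
  have : (1:ℝ) ≤ (cfList q (a % q)).length := by exact_mod_cast hl
  nlinarith


lemma hasDerivAt_rcpow {t : ℝ} (ht : 0 < t) (c : ℂ) :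
    HasDerivAt (fun u : ℝ => (u:ℂ)^c) (c*(t:ℂ)^(c-1)) t := by
  have h := ((hasDerivAt_id (t:ℂ)).cpow_const (c := c) (by
    left; simpa using ht)).comp_ofReal
  simpa using h

lemma cpow_diff {a b : ℝ} (ha : 0 < a) (hab : a ≤ b) {s : ℂ} (hs : 0 < s.re) :
    ‖(b:ℂ)^(-s) - (a:ℂ)^(-s)‖ ≤ ‖s‖*a^(-s.re-1)*(b-a) := by
  have h := Convex.norm_image_sub_le_of_norm_hasDerivWithin_le (𝕜 := ℝ)
    (f := fun u : ℝ => (u:ℂ)^(-s)) (f' := fun t : ℝ => (-s)*(t:ℂ)^(-s-1)) (s := Set.Icc a b)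
    (C := ‖s‖*a^(-s.re-1)) (x := a) (y := b)
    (fun t ht => (hasDerivAt_rcpow (ha.trans_le ht.1) _).hasDerivWithinAt)
    (fun t ht => by
      have ht0 : 0 < t := ha.trans_le ht.1
      rw [norm_mul, norm_neg, Complex.norm_cpow_eq_rpow_re_of_pos ht0]
      gcongr ‖s‖*?_
      simp only [Complex.sub_re, Complex.neg_re, Complex.one_re]
      exact Real.rpow_le_rpow_of_nonpos ha ht.1 (by linarith))
    (convex_Icc _ _) (Set.left_mem_Icc.2 hab) (Set.right_mem_Icc.2 hab)
  rwa [Real.norm_of_nonneg (by linarith)] at h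

noncomputable def TT (a : ℝ) (s : ℂ) : ℂ := (1-s)*(a:ℂ)^(-s) - (((a+1:ℝ):ℂ)^(1-s) - (a:ℂ)^(1-s))

lemma TT_bound {a : ℝ} (ha : 0 < a) {s : ℂ} (hs : 0 < s.re) :
    ‖TT a s‖ ≤ ‖1-s‖*(‖s‖*a^(-s.re-1)) := by
  have h := Convex.norm_image_sub_le_of_norm_hasDerivWithin_le (𝕜 := ℝ)
    (f := fun u : ℝ => (1-s)*(a:ℂ)^(-s)*(u:ℂ) - (u:ℂ)^(1-s))
    (f' := fun t : ℝ => (1-s)*((a:ℂ)^(-s) - (t:ℂ)^(-s))) (s := Set.Icc a (a+1))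
    (C := ‖1-s‖*(‖s‖*a^(-s.re-1))) (x := a) (y := a+1)
    (fun t ht => by
      have ht0 : 0 < t := ha.trans_le ht.1
      have h1 := hasDerivAt_rcpow ht0 (1-s)
      have h2 : HasDerivAt (fun u : ℝ => (1-s)*(a:ℂ)^(-s)*(u:ℂ)) ((1-s)*(a:ℂ)^(-s)*1) t :=
        (Complex.ofRealCLM.hasDerivAt (x := t)).const_mul _
      have h3 := (h2.sub h1).hasDerivWithinAt (s := Set.Icc a (a+1))
      refine h3.congr_deriv ?_
      have : (1 - s - 1) = -s := by ring
      rw [this]; ring)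
    (fun t ht => by
      rw [norm_mul]
      gcongr
      rw [norm_sub_rev]
      refine (cpow_diff ha ht.1 hs).trans ?_
      refine mul_le_of_le_one_right (by positivity) ?_
      linarith [ht.2])
    (convex_Icc _ _) (Set.left_mem_Icc.2 (by linarith)) (Set.right_mem_Icc.2 (by linarith))
  have e : (1-s)*(a:ℂ)^(-s)*((a+1:ℝ):ℂ) - ((a+1:ℝ):ℂ)^(1-s) - ((1-s)*(a:ℂ)^(-s)*(a:ℂ) - (a:ℂ)^(1-s)) = TT a s := by
    unfold TT; push_cast; ring
  rw [e] at h
  simpa using h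

def VB : Set ℂ := {s : ℂ | 1/4 < s.re ∧ s.re < 3 ∧ -1 < s.im ∧ s.im < 1}

lemma VB_open : IsOpen VB := by
  have e : VB = {s : ℂ | 1/4 < s.re} ∩ {s | s.re < 3} ∩ {s | -1 < s.im} ∩ {s | s.im < 1} := by
    ext s; simp [VB, and_assoc]
  rw [e]
  exact (((isOpen_lt continuous_const Complex.continuous_re).inter
    (isOpen_lt Complex.continuous_re continuous_const)).inter
    (isOpen_lt continuous_const Complex.continuous_im)).inter
    (isOpen_lt Complex.continuous_im continuous_const)

lemma TT_VB {y : ℝ} (hy : 1 ≤ y) (n : ℕ) {s : ℂ} (hs : s ∈ VB) :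
    ‖TT (y+n) s‖ ≤ 20*(1/((n:ℝ)+1)^((5:ℝ)/4)) := by
  obtain ⟨h1, h2, h3, h4⟩ := hs
  have hn : (0:ℝ) ≤ n := by positivity
  have b := TT_bound (a := y+n) (s := s) (by linarith) (by linarith)
  have n1 : ‖s‖ ≤ 4 := by
    refine (Complex.norm_le_abs_re_add_abs_im s).trans ?_
    have : |s.re| ≤ 3 := by rw [abs_le]; constructor <;> linarith
    have : |s.im| ≤ 1 := by rw [abs_le]; constructor <;> linarith
    linarith
  have n2 : ‖1-s‖ ≤ 5 := by
    refine (norm_sub_le _ _).trans ?_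
    rw [norm_one]; linarith
  have n3 : (y+n)^(-s.re-1) ≤ 1/((n:ℝ)+1)^((5:ℝ)/4) := by
    calc (y+n)^(-s.re-1) ≤ ((n:ℝ)+1)^(-s.re-1) :=
          Real.rpow_le_rpow_of_nonpos (by linarith) (by linarith) (by linarith)
      _ ≤ ((n:ℝ)+1)^(-((5:ℝ)/4)) := Real.rpow_le_rpow_of_exponent_le (by linarith) (by linarith)
      _ = _ := by rw [Real.rpow_neg (by linarith), one_div]
  refine b.trans ?_
  calc _ ≤ 5*(4*(1/((n:ℝ)+1)^((5:ℝ)/4))) := by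
        have : 0 ≤ (y+n)^(-s.re-1) := Real.rpow_nonneg (by linarith) _
        gcongr
    _ = _ := by ring

lemma summable_54 : Summable (fun n : ℕ => 20*(1/((n:ℝ)+1)^((5:ℝ)/4))) := by
  have h := (Real.summable_one_div_nat_rpow (p := 5/4)).2 (by norm_num)
  have h2 := (summable_nat_add_iff 1).2 h
  refine (h2.mul_left 20).congr ?_
  intro n; push_cast; rfl

lemma TT_diff {y : ℝ} (hy : 1 ≤ y) : DifferentiableOn ℂ (fun s => ∑' n : ℕ, TT (y+n) s) VB := by
  refine Complex.differentiableOn_tsum_of_summable_norm summable_54 ?_ VB_open (fun n s hs => TT_VB hy n hs)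
  intro n
  have hn : (0:ℝ) ≤ n := by positivity
  have h1 : ((y+n:ℝ):ℂ) ≠ 0 := by
    rw [Complex.ofReal_ne_zero]; linarith
  have h2 : ((y+n+1:ℝ):ℂ) ≠ 0 := by
    rw [Complex.ofReal_ne_zero]; linarith
  unfold TT
  intro s _
  apply DifferentiableAt.differentiableWithinAt
  have d1 : DifferentiableAt ℂ (fun s : ℂ => ((y+n:ℝ):ℂ)^(-s)) s :=
    (differentiableAt_id.neg).const_cpow (Or.inl h1)
  have d2 : DifferentiableAt ℂ (fun s : ℂ => ((y+n+1:ℝ):ℂ)^(1-s)) s :=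
    (differentiableAt_id.const_sub 1).const_cpow (Or.inl h2)
  have d3 : DifferentiableAt ℂ (fun s : ℂ => ((y+n:ℝ):ℂ)^(1-s)) s :=
    (differentiableAt_id.const_sub 1).const_cpow (Or.inl h1)
  exact ((differentiableAt_id.const_sub 1).mul d1).sub (d2.sub d3)

lemma hurwitz_right {x : ℝ} (h0 : 0 < x) (h1 : x ≤ 1) {s : ℂ} (hV : s ∈ VB) (hs : 1 < s.re) :
    (1-s)*HurwitzZeta.hurwitzZeta (x : UnitAddCircle) s =
      (1-s)*(x:ℂ)^(-s) + ∑' n : ℕ, TT (x+1+n) s - ((x+1:ℝ):ℂ)^(1-s) := by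
  have h := HurwitzZeta.hasSum_hurwitzZeta_of_one_lt_re (a := x) ⟨h0.le, h1⟩ hs
  have hT : Summable (fun n : ℕ => TT (x+1+n) s) :=
    Summable.of_norm_bounded summable_54 (fun n => TT_VB (by linarith) n hV)
  have l1 := hT.hasSum.tendsto_sum_nat
  have l2 := (h.tendsto_sum_nat.comp (Filter.tendsto_add_atTop_nat 1)).const_mul (1-s)
  have l3 : Filter.Tendsto (fun N : ℕ => ((x+1+N:ℝ):ℂ)^(1-s)) Filter.atTop (nhds 0) := by
    rw [tendsto_zero_iff_norm_tendsto_zero]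
    have : ∀ N : ℕ, ‖((x+1+N:ℝ):ℂ)^(1-s)‖ = (x+1+N)^(-(s.re-1)) := by
      intro N
      rw [Complex.norm_cpow_eq_rpow_re_of_pos (by positivity)]
      simp
    simp only [this]
    refine (tendsto_rpow_neg_atTop (show 0 < s.re - 1 by linarith)).comp ?_
    exact Filter.tendsto_atTop_add_const_left _ _ tendsto_natCast_atTop_atTop
  have key : ∀ N : ℕ, (1-s)*∑ n ∈ range (N+1), 1/((n:ℂ)+(x:ℂ))^s =
      (1-s)*(x:ℂ)^(-s) + ∑ n ∈ range N, TT (x+1+n) s + ((x+1+N:ℝ):ℂ)^(1-s) - ((x+1:ℝ):ℂ)^(1-s) := by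
    intro N
    induction N with
    | zero => simp [Complex.cpow_neg]
    | succ N ih =>
      rw [sum_range_succ, mul_add, ih, sum_range_succ (fun n : ℕ => TT (x+1+n) s)]
      unfold TT
      have e1 : 1/(((N+1:ℕ):ℂ)+(x:ℂ))^s = ((x+1+N:ℝ):ℂ)^(-s) := by
        rw [Complex.cpow_neg, one_div]; congr 2; push_cast; ring
      have e2 : x+1+((N+1:ℕ):ℝ) = x+1+N+1 := by push_cast; ring
      rw [e1, e2]; ring
  have l4 := ((l1.const_add ((1-s)*(x:ℂ)^(-s))).add l3).sub_const (((x+1:ℝ):ℂ)^(1-s))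
  rw [add_zero] at l4
  refine tendsto_nhds_unique l2 (l4.congr fun N => ?_)
  exact (key N).symm


def UP : Set ℂ := {s : ℂ | 1/4 < s.re ∧ s.re < 3 ∧ 0 < s.im ∧ s.im < 1}

lemma UP_eq : UP = {s : ℂ | 1/4 < s.re} ∩ {s | s.re < 3} ∩ {s | 0 < s.im} ∩ {s | s.im < 1} := by
  ext s; simp [UP, and_assoc]

lemma UP_open : IsOpen UP := by
  rw [UP_eq]
  exact (((isOpen_lt continuous_const Complex.continuous_re).inter
    (isOpen_lt Complex.continuous_re continuous_const)).inter
    (isOpen_lt continuous_const Complex.continuous_im)).inter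
    (isOpen_lt Complex.continuous_im continuous_const)

lemma UP_convex : Convex ℝ UP := by
  rw [UP_eq]
  exact (((convex_halfSpace_re_gt _).inter (convex_halfSpace_re_lt _)).inter
    (convex_halfSpace_im_gt _)).inter (convex_halfSpace_im_lt _)

lemma UP_VB : UP ⊆ VB := fun s hs => ⟨hs.1, hs.2.1, by linarith [hs.2.2.1], hs.2.2.2⟩

lemma hurRHS_diff {x : ℝ} (h0 : 0 < x) : DifferentiableOn ℂ (fun s : ℂ =>
      (1-s)*(x:ℂ)^(-s) + ∑' n : ℕ, TT (x+1+n) s - ((x+1:ℝ):ℂ)^(1-s)) VB := by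
  intro s hs
  have hx : (x:ℂ) ≠ 0 := by rw [Complex.ofReal_ne_zero]; exact h0.ne'
  have hx1 : ((x+1:ℝ):ℂ) ≠ 0 := by rw [Complex.ofReal_ne_zero]; linarith
  have d1 : DifferentiableAt ℂ (fun s : ℂ => (x:ℂ)^(-s)) s :=
    (differentiableAt_id.neg).const_cpow (Or.inl hx)
  have d2 : DifferentiableAt ℂ (fun s : ℂ => ((x+1:ℝ):ℂ)^(1-s)) s :=
    (differentiableAt_id.const_sub 1).const_cpow (Or.inl hx1)
  exact ((((differentiableAt_id.const_sub 1).mul d1).differentiableWithinAt).add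
    (TT_diff (y := x+1) (by linarith) s hs)).sub d2.differentiableWithinAt

lemma hurLHS_diff (x : UnitAddCircle) {s : ℂ} (hs : s ≠ 1) : DifferentiableAt ℂ (fun s : ℂ =>
      (1-s)*HurwitzZeta.hurwitzZeta x s) s :=
  (differentiableAt_id.const_sub 1).mul (HurwitzZeta.differentiableAt_hurwitzZeta x hs)

lemma hurwitz_UP {x : ℝ} (h0 : 0 < x) (h1 : x ≤ 1) : Set.EqOn
    (fun s : ℂ => (1-s)*HurwitzZeta.hurwitzZeta (x : UnitAddCircle) s)
    (fun s : ℂ => (1-s)*(x:ℂ)^(-s) + ∑' n : ℕ, TT (x+1+n) s - ((x+1:ℝ):ℂ)^(1-s)) UP := by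
  have hz : (⟨2, 1/2⟩ : ℂ) ∈ UP := by
    refine ⟨?_, ?_, ?_, ?_⟩ <;> norm_num
  refine AnalyticOnNhd.eqOn_of_preconnected_of_eventuallyEq (𝕜 := ℂ) (z₀ := ⟨2, 1/2⟩)
    (DifferentiableOn.analyticOnNhd (fun s hs => (hurLHS_diff _ ?_).differentiableWithinAt) UP_open)
    (((hurRHS_diff h0).mono UP_VB).analyticOnNhd UP_open) UP_convex.isPreconnected hz ?_
  · rintro rfl
    have := hs.2.2.1
    simp at this
  · have o : IsOpen {s : ℂ | 1 < s.re} := isOpen_lt continuous_const Complex.continuous_re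
    filter_upwards [UP_open.mem_nhds hz, o.mem_nhds (show (⟨2,1/2⟩:ℂ) ∈ {s : ℂ | 1 < s.re} by
      simp)] with s hs hs1
    exact hurwitz_right h0 h1 (UP_VB hs) hs1

lemma half_VB : (1/2 : ℂ) ∈ VB := by
  refine ⟨?_, ?_, ?_, ?_⟩ <;> norm_num

lemma hurwitz_id_half {x : ℝ} (h0 : 0 < x) (h1 : x ≤ 1) :
    (1-(1/2:ℂ))*HurwitzZeta.hurwitzZeta (x : UnitAddCircle) (1/2) =
      (1-(1/2:ℂ))*(x:ℂ)^(-(1/2:ℂ)) + ∑' n : ℕ, TT (x+1+n) (1/2) - ((x+1:ℝ):ℂ)^(1-(1/2:ℂ)) := by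
  have c1 := (hurLHS_diff (x : UnitAddCircle) (s := 1/2) (by norm_num)).continuousAt
  have c2 := ((hurRHS_diff h0).differentiableAt (VB_open.mem_nhds half_VB)).continuousAt
  have t : Filter.Tendsto (fun n : ℕ => (1/2:ℂ) + (((1/((n:ℝ)+1)):ℝ):ℂ)/2*I) Filter.atTop (nhds (1/2)) := by
    have h := tendsto_one_div_add_atTop_nhds_zero_nat (𝕜 := ℝ)
    have h2 := ((((Complex.continuous_ofReal.tendsto 0).comp h).div_const 2).mul_const I).const_add (1/2:ℂ)
    simpa using h2
  have t1 := c1.tendsto.comp t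
  have t2 := c2.tendsto.comp t
  refine tendsto_nhds_unique t1 (t2.congr fun n => ?_)
  refine (hurwitz_UP h0 h1 ?_).symm
  show (1/2:ℂ) + (((1/((n:ℝ)+1)):ℝ):ℂ)/2*I ∈ UP
  have hp : (0:ℝ) < 1/((n:ℝ)+1) := by positivity
  have hp1 : 1/((n:ℝ)+1) ≤ 1 := by
    rw [div_le_one (by positivity)]; linarith [(Nat.cast_nonneg n : (0:ℝ) ≤ n)]
  generalize 1/((n:ℝ)+1) = d at hp hp1
  have e1 : ((1/2:ℂ) + (d:ℂ)/2*I).re = 1/2 := by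
    simp
  have e2 : ((1/2:ℂ) + (d:ℂ)/2*I).im = d/2 := by
    simp
  refine ⟨?_, ?_, ?_, ?_⟩
  · rw [e1]; norm_num
  · rw [e1]; norm_num
  · rw [e2]; linarith
  · rw [e2]; linarith

lemma cpow_half {a : ℝ} (ha : 0 < a) : (a:ℂ)^(1/2:ℂ) = ((√a : ℝ):ℂ) := by
  rw [Real.sqrt_eq_rpow, Complex.ofReal_cpow ha.le]; norm_num

lemma cpow_neg_half {a : ℝ} (ha : 0 < a) : (a:ℂ)^(-(1/2:ℂ)) = ((1/√a : ℝ):ℂ) := by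
  rw [Complex.cpow_neg, cpow_half ha]; push_cast; rw [one_div]

lemma TT_half {a : ℝ} (ha : 0 < a) : TT a (1/2) = ((eterm a / 2 : ℝ) : ℂ) := by
  unfold TT eterm
  have e : (1 - (1/2:ℂ)) = 1/2 := by norm_num
  rw [e, cpow_neg_half ha, cpow_half ha, cpow_half (by linarith)]
  push_cast; ring

lemma hurwitz_half {x : ℝ} (h0 : 0 < x) (h1 : x ≤ 1) :
    HurwitzZeta.hurwitzZeta (x : UnitAddCircle) (1/2) = ((zh x : ℝ) : ℂ) := by
  have h := hurwitz_id_half h0 h1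
  have e : (1 - (1/2:ℂ)) = 1/2 := by norm_num
  have hs : ∑' n : ℕ, TT (x+1+n) (1/2) = (((∑' n : ℕ, eterm (x+1+n))/2 : ℝ):ℂ) := by
    rw [← tsum_div_const, Complex.ofReal_tsum]
    refine tsum_congr fun n => TT_half (by positivity)
  rw [e, cpow_neg_half h0, cpow_half (by linarith), hs] at h
  have hr := zh_rec h0
  have hz : zh (x+1) = (∑' n : ℕ, eterm (x+1+n)) - 2*√(x+1) := rfl
  rw [hr, hz]
  generalize (∑' n : ℕ, eterm (x+1+n)) = S at *
  push_cast at h ⊢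
  linear_combination 2*h


lemma Zq_zero' (q : ℕ) : Zq q 0 = z0 := by
  unfold Zq; simp [Zp_zero]

lemma hurwitz_Zq (q : ℕ) [NeZero q] (z : ZMod q) :
    HurwitzZeta.hurwitzZeta (ZMod.toAddCircle z) (1/2) = ((Zq q z : ℝ) : ℂ) := by
  have hq : (0:ℝ) < q := by exact_mod_cast NeZero.pos q
  by_cases hz : z = 0
  · subst hz
    have e : ZMod.toAddCircle (0 : ZMod q) = ((1:ℝ) : UnitAddCircle) := by
      rw [map_zero]; exact (AddCircle.coe_period 1).symm
    rw [e, hurwitz_half one_pos le_rfl, Zq_zero']; rfl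
  · have h1 : (0:ℝ) < z.val := by
      have : z.val ≠ 0 := by rwa [Ne, ZMod.val_eq_zero]
      exact_mod_cast Nat.pos_of_ne_zero this
    have h2 : (z.val:ℝ) ≤ q := by exact_mod_cast (ZMod.val_lt z).le
    have h3 : (0:ℝ) < z.val/q := by positivity
    have h4 : (z.val:ℝ)/q ≤ 1 := by rwa [div_le_one hq]
    rw [ZMod.toAddCircle_apply, hurwitz_half h3 h4]
    unfold Zq; rw [Zp_eq h3 h4]

lemma LF_half (q : ℕ) [NeZero q] (χ : DirichletCharacter ℂ q) :
    χ.LFunction (1/2) = ((1/√q : ℝ):ℂ) * ∑ z : ZMod q, χ z * ((Zq q z : ℝ):ℂ) := by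
  have hq : (0:ℝ) < q := by exact_mod_cast NeZero.pos q
  unfold DirichletCharacter.LFunction ZMod.LFunction
  simp only [hurwitz_Zq]
  rw [← cpow_neg_half hq]; simp

lemma all_chars (q : ℕ) [NeZero q] (hq : q.Prime) (a : ℤ) (ha : (a : ZMod q) ≠ 0) :
    ∑ χ : DirichletCharacter ℂ q, (‖χ.LFunction (1/2)‖^2 : ℂ) * χ (a : ZMod q) =
      ((q.totient : ℝ)/√q * (SS a q - z0^2/√q) : ℝ) := by
  have : Fact q.Prime := ⟨hq⟩
  have hq0 : (0:ℝ) < q := by exact_mod_cast NeZero.pos q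
  have e : ∀ χ : DirichletCharacter ℂ q, (‖χ.LFunction (1/2)‖^2 : ℂ) * χ (a : ZMod q) =
      ((1/q : ℝ):ℂ) * ∑ w : ZMod q, ∑ z : ZMod q, (χ w⁻¹ * χ (a*z)) * ((Zq q w * Zq q z : ℝ):ℂ) := by
    intro χ
    have hc : (starRingEnd ℂ) (∑ z : ZMod q, χ z * ((Zq q z : ℝ):ℂ)) =
        ∑ z : ZMod q, χ z⁻¹ * ((Zq q z : ℝ):ℂ) := by
      rw [map_sum]
      refine sum_congr rfl fun z _ => ?_
      rw [map_mul, Complex.conj_ofReal]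
      congr 1
      rw [← MulChar.inv_apply' χ z, ← MulChar.star_apply' χ z]
      rfl
    rw [← Complex.conj_mul', LF_half, map_mul, Complex.conj_ofReal, hc]
    have hs : ((1/√q : ℝ):ℂ) * ((1/√q : ℝ):ℂ) = ((1/q : ℝ):ℂ) := by
      rw [← Complex.ofReal_mul]; congr 1
      rw [div_mul_div_comm, Real.mul_self_sqrt hq0.le]; norm_num
    rw [← hs]
    have : (∑ w : ZMod q, ∑ z : ZMod q, (χ w⁻¹ * χ (a*z)) * ((Zq q w * Zq q z : ℝ):ℂ)) =
       χ a * ((∑ w : ZMod q, χ w⁻¹ * ((Zq q w : ℝ):ℂ)) * ∑ z : ZMod q, χ z * ((Zq q z : ℝ):ℂ)) := by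
      rw [sum_mul_sum, mul_sum]
      refine sum_congr rfl fun w _ => ?_
      rw [mul_sum]
      refine sum_congr rfl fun z _ => ?_
      rw [map_mul]; push_cast; ring
    rw [this]; ring
  rw [sum_congr rfl fun χ _ => e χ, ← mul_sum, sum_comm]
  have e2 : ∀ w : ZMod q, ∑ χ : DirichletCharacter ℂ q, ∑ z : ZMod q,
      (χ w⁻¹ * χ (a*z)) * ((Zq q w * Zq q z : ℝ):ℂ) =
      ∑ z : ZMod q, (if w = a*z ∧ w ≠ 0 then (((q.totient:ℝ) * (Zq q (a*z) * Zq q z) : ℝ):ℂ) else 0) := by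
    intro w
    rw [sum_comm]
    refine sum_congr rfl fun z _ => ?_
    rw [← sum_mul]
    by_cases hw : w = 0
    · subst hw
      rw [sum_eq_zero (fun χ _ => by simp [MulChar.map_nonunit])]
      simp
    · rw [DirichletCharacter.sum_char_inv_mul_char_eq ℂ (IsUnit.mk0 w hw)]
      by_cases h : w = a*z
      · rw [if_pos h, if_pos ⟨h, hw⟩, h]; push_cast; ring
      · rw [if_neg h, if_neg (fun h' => h h'.1)]; simp
  rw [sum_congr rfl fun w _ => e2 w, sum_comm]
  have e3 : ∀ z : ZMod q, ∑ w : ZMod q,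
      (if w = a*z ∧ w ≠ 0 then (((q.totient:ℝ) * (Zq q (a*z) * Zq q z) : ℝ):ℂ) else 0) =
      (((q.totient:ℝ) * (Zq q z * Zq q (a*z)) : ℝ):ℂ) -
       (if z = 0 then (((q.totient:ℝ) * z0^2 : ℝ):ℂ) else 0) := by
    intro z
    by_cases hz : z = 0
    · subst hz
      rw [sum_eq_zero]
      · simp [Zq_zero', sq]
      · intro w _
        rw [if_neg]; rintro ⟨h1, h2⟩; exact h2 (by simpa using h1)
    · rw [sum_eq_single (a*z), if_pos ⟨rfl, mul_ne_zero ha hz⟩, if_neg hz, sub_zero, mul_comm (Zq q z)]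
      · intro w _ hw; rw [if_neg (fun h => hw h.1)]
      · simp
  rw [sum_congr rfl fun z _ => e3 z, sum_sub_distrib, sum_ite_eq' univ 0, if_pos (mem_univ _),
    SS_zmod, ← Complex.ofReal_sum, ← mul_sum, ← Complex.ofReal_sub, ← Complex.ofReal_mul]
  congr 1
  have hs : √(q:ℝ) * √q = q := Real.mul_self_sqrt hq0.le
  have hs0 : √(q:ℝ) ≠ 0 := (Real.sqrt_pos.2 hq0).ne'
  generalize (∑ z : ZMod q, Zq q z * Zq q (a*z)) = A
  have hq' : 1/(q:ℝ) = 1/√q*(1/√q) := by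
    rw [div_mul_div_comm, hs, one_mul]
  rw [hq']
  generalize √(q:ℝ) = r at *
  field_simp

lemma LF_triv (q : ℕ) [NeZero q] (hq : q.Prime) :
    ‖(1 : DirichletCharacter ℂ q).LFunction (1/2)‖ ≤ |z0| := by
  have : Fact q.Prime := ⟨hq⟩
  have hq0 : (1:ℝ) ≤ q := by exact_mod_cast NeZero.pos q
  have hr : 1 ≤ √(q:ℝ) := by rw [Real.one_le_sqrt]; exact hq0
  have e : ∑ z : ZMod q, (1 : DirichletCharacter ℂ q) z * ((Zq q z : ℝ):ℂ) = (((√q - 1)*z0 : ℝ):ℂ) := by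
    have : ∀ z : ZMod q, (1 : DirichletCharacter ℂ q) z * ((Zq q z : ℝ):ℂ) =
        ((Zq q z : ℝ):ℂ) - (if z = 0 then ((z0:ℝ):ℂ) else 0) := by
      intro z
      by_cases hz : z = 0
      · subst hz; simp [Zq_zero', MulChar.map_nonunit]
      · rw [MulChar.one_apply (IsUnit.mk0 z hz), if_neg hz]; simp
    rw [sum_congr rfl fun z _ => this z, sum_sub_distrib, sum_ite_eq' univ 0, if_pos (mem_univ _),
      ← Complex.ofReal_sum, Zq_sum]
    push_cast; ring
  rw [LF_half, e, ← Complex.ofReal_mul, Complex.norm_real, Real.norm_eq_abs]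
  have : 1/√(q:ℝ)*((√q-1)*z0) = ((√q-1)/√q)*z0 := by ring
  rw [this, abs_mul]
  refine mul_le_of_le_one_left (abs_nonneg _) ?_
  rw [abs_of_nonneg (div_nonneg (by linarith) (by linarith)), div_le_one (by linarith)]
  linarith

lemma Mtw_SS (q : ℕ) [NeZero q] (hq : q.Prime) (a : ℤ) (ha : (a : ZMod q) ≠ 0) :
    ‖Mtw a q - ((SS a q : ℝ):ℂ)‖ ≤ 3*z0^2 := by
  classical
  have hq2 : (2:ℝ) ≤ q := by exact_mod_cast hq.two_le
  have hr : 1 ≤ √(q:ℝ) := by rw [Real.one_le_sqrt]; linarith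
  have hs : √(q:ℝ) * √q = q := Real.mul_self_sqrt (by linarith)
  have ht : (q.totient : ℝ) = q - 1 := by
    rw [Nat.totient_prime hq, Nat.cast_sub hq.one_le]; simp
  have hA := all_chars q hq a ha
  set T : ℂ := (‖(1 : DirichletCharacter ℂ q).LFunction (1/2)‖^2 : ℂ) *
    (1 : DirichletCharacter ℂ q) (a : ZMod q) with hT
  have hM : Mtw a q = ((√q/(q.totient:ℝ) : ℝ):ℂ) * (((q.totient : ℝ)/√q * (SS a q - z0^2/√q) : ℝ) - T) := by
    unfold Mtw
    rw [← hA, ← Finset.add_sum_erase univ _ (mem_univ (1 : DirichletCharacter ℂ q)), if_pos rfl,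
      ← Finset.add_sum_erase univ _ (mem_univ (1 : DirichletCharacter ℂ q)), zero_add, ← hT,
      add_sub_cancel_left]
    push_cast
    congr 1
    refine sum_congr rfl fun χ hχ => ?_
    rw [if_neg (Finset.ne_of_mem_erase hχ)]
  have hT1 : ‖T‖ ≤ z0^2 := by
    rw [hT, norm_mul, norm_pow, Complex.norm_real, norm_norm, ← sq_abs z0]
    have h1 := LF_triv q hq
    have h2 := DirichletCharacter.norm_le_one (1 : DirichletCharacter ℂ q) (a : ZMod q)
    calc _ ≤ |z0|^2 * 1 := by gcongr
      _ = _ := mul_one _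
  have e : Mtw a q - ((SS a q : ℝ):ℂ) = -((z0^2/√q : ℝ):ℂ) - ((√q/(q.totient:ℝ) : ℝ):ℂ) * T := by
    rw [hM, mul_sub, ← Complex.ofReal_mul]
    have : √q/(q.totient:ℝ) * ((q.totient : ℝ)/√q * (SS a q - z0^2/√q)) = SS a q - z0^2/√q := by
      have h1 : (q.totient:ℝ) ≠ 0 := by rw [ht]; linarith
      have h2 : √(q:ℝ) ≠ 0 := by linarith
      rw [← mul_assoc, div_mul_div_comm, mul_comm (√(q:ℝ)), div_self (mul_ne_zero h1 h2), one_mul]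
    rw [this]; push_cast; ring
  rw [e]
  refine (norm_sub_le _ _).trans ?_
  rw [norm_neg, norm_mul, Complex.norm_real, Complex.norm_real, Real.norm_of_nonneg (by positivity),
    Real.norm_of_nonneg (by positivity)]
  have h1 : z0^2/√q ≤ z0^2 := div_le_self (sq_nonneg _) hr
  have h2 : √q/(q.totient:ℝ) ≤ 2 := by
    rw [ht, div_le_iff₀ (by linarith)]; nlinarith
  have h3 : √q/(q.totient:ℝ) * ‖T‖ ≤ 2*z0^2 := by gcongr
  linarith

lemma Mtw_split (q : ℕ) [NeZero q] (a : ℤ) : Mtw a q = MtwParity 1 a q + MtwParity (-1) a q := by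
  classical
  unfold Mtw MtwParity
  rw [← mul_add, ← sum_add_distrib]
  congr 1
  refine sum_congr rfl fun χ _ => ?_
  by_cases h1 : χ = 1
  · simp [h1]
  · have h : χ (-1) = 1 ∨ χ (-1) = -1 := by
      rw [← sq_eq_one_iff, ← map_pow]; simp
    rcases h with h | h
    · have : (1:ℂ) ≠ -1 := by norm_num
      simp [h1, h, this]
    · have : (-1:ℂ) ≠ 1 := by norm_num
      simp [h1, h, this]

lemma Mtw_split_neg (q : ℕ) [NeZero q] (a : ℤ) : Mtw (-a) q = MtwParity 1 a q - MtwParity (-1) a q := by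
  classical
  unfold Mtw MtwParity
  rw [← mul_sub, ← sum_sub_distrib]
  congr 1
  refine sum_congr rfl fun χ _ => ?_
  have e : χ ((-a : ℤ) : ZMod q) = χ (-1) * χ (a : ZMod q) := by
    rw [← map_mul]; congr 1; push_cast; ring
  rw [e]
  by_cases h1 : χ = 1
  · simp [h1]
  · have h : χ (-1) = 1 ∨ χ (-1) = -1 := by
      rw [← sq_eq_one_iff, ← map_pow]; simp
    rcases h with h | h
    · have : (1:ℂ) ≠ -1 := by norm_num
      simp [h1, h, this]
    · have : (-1:ℂ) ≠ 1 := by norm_num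
      simp [h1, h, this]

lemma Parity_Se (q : ℕ) [NeZero q] (hq : q.Prime) (a : ℤ) (ha : (a : ZMod q) ≠ 0) (ε : ℤ)
    (hε : ε = 1 ∨ ε = -1) : ‖MtwParity ε a q - ((Se ε a q : ℝ):ℂ)‖ ≤ 3*z0^2 := by
  have h1 := Mtw_SS q hq a ha
  have h2 := Mtw_SS q hq (-a) (by push_cast; simpa using ha)
  rw [Mtw_split] at h1
  rw [Mtw_split_neg] at h2
  have key : MtwParity ε a q - ((Se ε a q : ℝ):ℂ) =
      (1/2:ℂ)*((MtwParity 1 a q + MtwParity (-1) a q - ((SS a q : ℝ):ℂ)) +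
        (ε:ℂ)*(MtwParity 1 a q - MtwParity (-1) a q - ((SS (-a) q : ℝ):ℂ))) := by
    unfold Se
    rcases hε with rfl | rfl <;> push_cast <;> ring
  rw [key, norm_mul]
  have hn : ‖(ε:ℂ)‖ = 1 := by rcases hε with rfl | rfl <;> simp
  have := norm_add_le (MtwParity 1 a q + MtwParity (-1) a q - ((SS a q : ℝ):ℂ))
    ((ε:ℂ)*(MtwParity 1 a q - MtwParity (-1) a q - ((SS (-a) q : ℝ):ℂ)))
  rw [norm_mul, hn, one_mul] at this
  have h12 : ‖(1/2:ℂ)‖ = 1/2 := by norm_num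
  rw [h12]
  linarith


/-- Corollary 5 of the paper: `M(a,q)` in terms of the continued fraction expansion
of `a/q`, with a uniform error `O(κ)`. -/
theorem moment_continued_fraction :
    ∃ C : ℝ, 0 < C ∧
      ∀ (q a : ℕ) (hq : q.Prime), 0 < a → Nat.Coprime a q →
        haveI : NeZero q := ⟨hq.ne_zero⟩
        (‖Mtw a q -
            ((∑ j ∈ Finset.Icc 1 ((cfList a q).length - 1),
              if Odd j then
                Real.sqrt ((cfList a q).getD j 0) *
                  (Real.log ((cfList a q).getD j 0) + Real.eulerMascheroniConstant
                    - Real.log (8*π))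
              else 0 : ℝ) : ℂ)
          + ((π/2 * ∑ j ∈ Finset.Icc 1 ((cfList a q).length - 1),
              if Even j then Real.sqrt ((cfList a q).getD j 0) else 0 : ℝ) : ℂ)‖
          ≤ C * ((cfList a q).length - 1 : ℕ)) ∧
        ∀ (ε : ℤ), ε = 1 ∨ ε = -1 →
          ‖MtwParity ε a q -
              (ε : ℂ) * (1/2 : ℂ) *
                ((∑ j ∈ Finset.Icc 1 ((cfList a q).length - 1),
                  (ε : ℝ)^j * Real.sqrt ((cfList a q).getD j 0) *
                    (Real.log ((cfList a q).getD j 0) + Real.eulerMascheroniConstant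
                      - Real.log (8*π) - (ε : ℝ) * π/2) : ℝ) : ℂ)‖
            ≤ C * ((cfList a q).length - 1 : ℕ) := by
  obtain ⟨K, hK, hcf⟩ := cf_main
  refine ⟨2*(K + 3*z0^2), by positivity, ?_⟩
  intro q a hq _ hc
  have hnz : NeZero q := ⟨hq.ne_zero⟩
  have ha0 : ((a:ℤ) : ZMod q) ≠ 0 := by
    have : Fact q.Prime := ⟨hq⟩
    have := (ZMod.unitOfCoprime a hc).ne_zero
    rw [ZMod.coe_unitOfCoprime] at this
    rwa [Int.cast_natCast]
  have hmain : ∀ (ε : ℤ), ε = 1 ∨ ε = -1 →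
      1 ≤ (cfList a q).length - 1 ∧ ‖MtwParity ε a q -
              (ε : ℂ) * (1/2 : ℂ) *
                ((∑ j ∈ Finset.Icc 1 ((cfList a q).length - 1),
                  (ε : ℝ)^j * Real.sqrt ((cfList a q).getD j 0) *
                    (Real.log ((cfList a q).getD j 0) + Real.eulerMascheroniConstant
                      - Real.log (8*π) - (ε : ℝ) * π/2) : ℝ) : ℂ)‖
            ≤ (K + 3*z0^2) * ((cfList a q).length - 1 : ℕ) := by
    intro ε hε
    obtain ⟨h1, h2⟩ := hcf ε (by rcases hε with rfl | rfl <;> simp) a q hq.one_lt hc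
    refine ⟨h1, ?_⟩
    have h3 := Parity_Se q hq a ha0 ε hε
    have e : ∑ j ∈ Finset.Icc 1 ((cfList a q).length - 1),
                  (ε : ℝ)^j * Real.sqrt ((cfList a q).getD j 0) *
                    (Real.log ((cfList a q).getD j 0) + Real.eulerMascheroniConstant
                      - Real.log (8*π) - (ε : ℝ) * π/2) =
        ∑ j ∈ Finset.Icc 1 ((cfList a q).length - 1), (ε:ℝ)^j*gg ε ((cfList a q).getD j 0) := by
      refine sum_congr rfl fun j _ => ?_
      unfold gg cc; ring
    rw [e]
    set S := ∑ j ∈ Finset.Icc 1 ((cfList a q).length - 1), (ε:ℝ)^j*gg ε ((cfList a q).getD j 0)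
    set k := (cfList a q).length - 1
    have hk : (1:ℝ) ≤ (k:ℝ) := by exact_mod_cast h1
    have h4 : ‖((Se ε a q - ε*(1/2)*S : ℝ):ℂ)‖ ≤ K*(k:ℝ) := by
      rw [Complex.norm_real]; exact h2
    have h5 : MtwParity ε a q - (ε : ℂ) * (1/2 : ℂ) * (S:ℂ) =
        (MtwParity ε a q - ((Se ε a q : ℝ):ℂ)) + ((Se ε a q - ε*(1/2)*S : ℝ):ℂ) := by
      push_cast; ring
    rw [h5]
    refine (norm_add_le _ _).trans ?_
    nlinarith [sq_nonneg z0]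
  have hk : (0:ℝ) ≤ (K + 3*z0^2) * ((cfList a q).length - 1 : ℕ) := by positivity
  refine ⟨?_, fun ε hε => (hmain ε hε).2.trans (by linarith)⟩
  have p1 := (hmain 1 (Or.inl rfl)).2
  have p2 := (hmain (-1) (Or.inr rfl)).2
  rw [Mtw_split]
  generalize (cfList a q).length - 1 = k at *
  generalize MtwParity 1 a q = A at *
  generalize MtwParity (-1) a q = B at *
  have e : (∑ j ∈ Finset.Icc 1 k,
              if Odd j then
                Real.sqrt ((cfList a q).getD j 0) *
                  (Real.log ((cfList a q).getD j 0) + Real.eulerMascheroniConstant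
                    - Real.log (8*π))
              else 0 : ℝ) - π/2 * (∑ j ∈ Finset.Icc 1 k,
              if Even j then Real.sqrt ((cfList a q).getD j 0) else 0 : ℝ) =
      ((1:ℤ):ℝ)*(1/2)*(∑ j ∈ Finset.Icc 1 k, ((1:ℤ) : ℝ)^j * Real.sqrt ((cfList a q).getD j 0) *
                    (Real.log ((cfList a q).getD j 0) + Real.eulerMascheroniConstant
                      - Real.log (8*π) - ((1:ℤ) : ℝ) * π/2)) +
      ((-1:ℤ):ℝ)*(1/2)*(∑ j ∈ Finset.Icc 1 k, ((-1:ℤ) : ℝ)^j * Real.sqrt ((cfList a q).getD j 0) *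
                    (Real.log ((cfList a q).getD j 0) + Real.eulerMascheroniConstant
                      - Real.log (8*π) - ((-1:ℤ) : ℝ) * π/2)) := by
    rw [mul_sum, mul_sum, mul_sum, ← sum_sub_distrib, ← sum_add_distrib]
    refine sum_congr rfl fun j _ => ?_
    rcases Nat.even_or_odd j with h | h
    · have h' : ¬ Odd j := Nat.not_odd_iff_even.2 h
      rw [if_neg h', if_pos h]
      push_cast
      rw [h.neg_one_pow]; ring
    · have h' : ¬ Even j := Nat.not_even_iff_odd.2 h
      rw [if_pos h, if_neg h']
      push_cast
      rw [h.neg_one_pow]; ring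
  generalize (∑ j ∈ Finset.Icc 1 k, ((1:ℤ) : ℝ)^j * Real.sqrt ((cfList a q).getD j 0) *
                    (Real.log ((cfList a q).getD j 0) + Real.eulerMascheroniConstant
                      - Real.log (8*π) - ((1:ℤ) : ℝ) * π/2)) = S1 at *
  generalize (∑ j ∈ Finset.Icc 1 k, ((-1:ℤ) : ℝ)^j * Real.sqrt ((cfList a q).getD j 0) *
                    (Real.log ((cfList a q).getD j 0) + Real.eulerMascheroniConstant
                      - Real.log (8*π) - ((-1:ℤ) : ℝ) * π/2)) = S2 at *
  rw [Complex.ofReal_mul (π/2)] at *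
  have e' := congrArg (fun x : ℝ => (x:ℂ)) e
  simp only [Complex.ofReal_sub, Complex.ofReal_add, Complex.ofReal_mul] at e'
  have n := norm_add_le (A - ((1:ℤ):ℂ)*(1/2:ℂ)*(S1:ℂ)) (B - ((-1:ℤ):ℂ)*(1/2:ℂ)*(S2:ℂ))
  refine le_trans (le_of_eq (congrArg norm ?_)) (n.trans (by linarith))
  push_cast at e' ⊢
  linear_combination -e'
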